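/- arXiv:1210.4489 — 2 statements merged into one kernel-verified Lean document; each statement's English description precedes it below -/
import Mathlib

section
/- Let r be a positive integer, p an odd prime, and λ ∈ ℤ_p such that F_r(λ)_{(p−1)/2} is a p-adic unit. Then there exists a p-adic unit α ∈ ℤ_p such that: for every odd positive integer m, every natural number d satisfying v_p(F_r(λ)_{(mp^t−1)/2}) ≤ d for all integers t ≥ 0, and every integer s ≥ 1, the quotient F_r(λ)_{(mp^s−1)/2} / F_r(λ)_{(mp^{s−1}−1)/2}, taken in ℚ_p, differs from α by an element of p-adic valuation at least s − d. -/
open Finset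

/-- Truncated hypergeometric sum `F_r(λ)_n = ∑_{k=0}^n ((1/2)_k/k!)^r λ^k`,
with `(1/2)_k/k! = C(2k,k)/4^k`, viewed in `ℚ_p`. -/
noncomputable def truncF (p : ℕ) [Fact p.Prime] (r : ℕ) (lam : ℤ_[p]) (n : ℕ) : ℚ_[p] :=
  ∑ k ∈ range (n + 1), ((Nat.choose (2 * k) k : ℚ_[p]) / 4 ^ k) ^ r * (lam : ℚ_[p]) ^ k

/-!
Call a sequence in `ℤ_p` congruence preserving if `p ^ t ∣ q m - q n` whenever `m ≡ n` modulo
`p ^ t`. If `λ` is a unit, the summand `B n = ((1/2)_n / n!) ^ r * λ ^ n` satisfies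
`B n = B (n / p) * b n` with `b` congruence preserving, and `b n` is divisible by
`p * (2 * (n / p) + 1)` when the last digit of `n` exceeds `p / 2`. Hence, if `p ^ s ∣ 2 * n + 1`,
the pairing `S n q = ∑ k ≤ n, B k * q k` satisfies `S (p * n + p / 2) q ≡ S n (T q)` modulo
`p ^ (s + 1)`, where `T` is Dwork's operator `(T q) k = ∑ j < p, (b * q) (p * k + j)`.

Sums over blocks of length `p` are constant modulo `p`, so `T` has rank one modulo `p`. When
`F_r(λ)_{(p-1)/2}` is a unit, iterating `T` therefore produces an eigenfunctional `l ∘ T = α l`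
with `l 1 = 1` and `α` a unit. Then `T 1 - α` lies in `p * ker l` and `T` maps `ker l` into
`p * ker l`; induction on `s` gives `p ^ s ∣ S n w` for `w ∈ ker l`, whence
`S (p * n + p / 2) 1 ≡ α * S n 1` modulo `p ^ (s + 1)`. The theorem is this congruence divided by
`S n 1`. If `p ∣ λ`, the terms between `n` and `p * n + p / 2` are divisible by `p ^ (s + 1)`, and
`α = 1` works.
-/

section RankOne

variable {R W : Type*} [CommRing R] [AddCommGroup W] [Module R W] {ϖ : R}

theorem isUnit_congr_of_dvd_sub [IsAdicComplete (Ideal.span {ϖ}) R] {x y : R} (h : ϖ ∣ x - y) :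
    IsUnit x ↔ IsUnit y := by
  have := isLocalHom_of_le_jacobson_bot _ (IsAdicComplete.le_jacobson_bot (Ideal.span {ϖ}))
  have hxy : Ideal.Quotient.mk (Ideal.span {ϖ}) x = Ideal.Quotient.mk (Ideal.span {ϖ}) y := by
    rwa [Ideal.Quotient.mk_eq_mk_iff_sub_mem, Ideal.mem_span_singleton]
  rw [← isUnit_map_iff (Ideal.Quotient.mk (Ideal.span {ϖ})), hxy, isUnit_map_iff]

theorem mem_span_singleton_pow_smul_top_iff {n : ℕ} {x : R} :
    x ∈ (Ideal.span {ϖ} ^ n • ⊤ : Ideal R) ↔ ϖ ^ n ∣ x := by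
  rw [Ideal.span_singleton_pow, smul_eq_mul, Ideal.mul_top, Ideal.mem_span_singleton]

theorem eq_of_forall_pow_dvd_sub [IsHausdorff (Ideal.span {ϖ}) R] {x y : R}
    (h : ∀ n, ϖ ^ n ∣ x - y) : x = y :=
  (IsHausdorff.eq_iff_smodEq (I := Ideal.span {ϖ})).2 fun n =>
    SModEq.sub_mem.2 (mem_span_singleton_pow_smul_top_iff.2 (h n))

theorem exists_dual_forall_pow_dvd_sub [IsAdicComplete (Ideal.span {ϖ}) R]
    {L : ℕ → Module.Dual R W} (hL : ∀ n q, ϖ ^ n ∣ L (n + 1) q - L n q) :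
    ∃ l : Module.Dual R W, ∀ n q, ϖ ^ n ∣ l q - L n q := by
  let I : Ideal R := Ideal.span {ϖ}
  let f (n : ℕ) : W →ₗ[R] R ⧸ (I ^ n • ⊤ : Ideal R) := (I ^ n • ⊤ : Ideal R).mkQ ∘ₗ L n
  have hf {n : ℕ} : Submodule.factorPow I R n.le_succ ∘ₗ f (n + 1) = f n := by
    ext q
    exact (Submodule.Quotient.eq _).2 (mem_span_singleton_pow_smul_top_iff.2 (hL n q))
  refine ⟨IsAdicComplete.StrictMono.lift I strictMono_id f hf, fun n q => ?_⟩
  rw [← mem_span_singleton_pow_smul_top_iff, ← Submodule.Quotient.eq]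
  exact IsAdicComplete.StrictMono.mk_lift I strictMono_id f hf q

/-- The endomorphism `T` has rank one modulo `ϖ`: its image lies in `R e + ϖ W`. This makes
the eigenfunctionals of `T` accessible by successive approximation. -/
def IsRankOneMod (ϖ : R) (T : Module.End R W) (e : W) : Prop :=
  ∀ q, ∃ (a : R) (w : W), T q = a • e + ϖ • w

/-- The functional `q ↦ l (T q) / l (T e)`, whose fixed points are the eigenfunctionals of `T`
normalized at `e`. It is meaningful when `l (T e)` is a unit, as `Ring.inverse` is `0`
otherwise. -/
noncomputable def normalizedComp (T : Module.End R W) (e : W) (l : Module.Dual R W) :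
    Module.Dual R W :=
  Ring.inverse (l (T e)) • l ∘ₗ T

theorem apply_mul_normalizedComp {T : Module.End R W} {e : W} {l : Module.Dual R W}
    (hl : IsUnit (l (T e))) (q : W) : l (T e) * normalizedComp T e l q = l (T q) :=
  Ring.mul_inverse_cancel_left _ _ hl

theorem normalizedComp_apply_self {T : Module.End R W} {e : W} {l : Module.Dual R W}
    (hl : IsUnit (l (T e))) : normalizedComp T e l e = 1 :=
  Ring.inverse_mul_cancel _ hl

namespace IsRankOneMod

variable {T : Module.End R W} {e : W} {l l' : Module.Dual R W}

theorem exists_apply_eq_zero (hT : IsRankOneMod ϖ T e) (hl : l e = 1) (q : W) :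
    ∃ w, l w = 0 ∧ T q = l (T q) • e + ϖ • w := by
  obtain ⟨a, w, hq⟩ := hT q
  refine ⟨w - l w • e, by simp [hl], ?_⟩
  have hlq : l (T q) = a + ϖ * l w := by simp [hq, hl]
  rw [hlq, hq]
  module

theorem pow_succ_dvd_apply_sub (hT : IsRankOneMod ϖ T e) (hl : l e = 1) (hl' : l' e = 1) {n : ℕ}
    (h : ∀ q, ϖ ^ n ∣ l q - l' q) (q : W) : ϖ ^ (n + 1) ∣ l (T q) - l' (T q) := by
  obtain ⟨a, w, hq⟩ := hT q
  have hdiff : l (T q) - l' (T q) = ϖ * (l w - l' w) := by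
    simp only [hq, map_add, map_smul, hl, hl', smul_eq_mul]
    ring
  rw [hdiff, pow_succ']
  exact mul_dvd_mul_left ϖ (h w)

theorem isUnit_apply [IsAdicComplete (Ideal.span {ϖ}) R] (hT : IsRankOneMod ϖ T e)
    (hl : l e = 1) (hl' : l' e = 1) (hu : IsUnit (l (T e))) : IsUnit (l' (T e)) :=
  (isUnit_congr_of_dvd_sub (by
    simpa using hT.pow_succ_dvd_apply_sub hl hl' (n := 0) (by simp) e)).1 hu

theorem pow_succ_dvd_normalizedComp_sub (hT : IsRankOneMod ϖ T e) (hl : l e = 1) (hl' : l' e = 1)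
    (hu : IsUnit (l (T e))) (hu' : IsUnit (l' (T e))) {n : ℕ} (h : ∀ q, ϖ ^ n ∣ l q - l' q)
    (q : W) : ϖ ^ (n + 1) ∣ normalizedComp T e l q - normalizedComp T e l' q := by
  have hdiff : l (T e) * (normalizedComp T e l q - normalizedComp T e l' q) =
      (l (T q) - l' (T q)) - (l (T e) - l' (T e)) * normalizedComp T e l' q := by
    linear_combination apply_mul_normalizedComp hu q - apply_mul_normalizedComp hu' q
  rw [← hu.dvd_mul_left, hdiff]
  have hd := hT.pow_succ_dvd_apply_sub hl hl' h
  exact dvd_sub (hd q) ((hd e).mul_right _)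

theorem exists_eigenfunctional [IsAdicComplete (Ideal.span {ϖ}) R] (hT : IsRankOneMod ϖ T e)
    {c : Module.Dual R W} (hc : c e = 1) (hu : IsUnit (c (T e))) :
    ∃ (l : Module.Dual R W) (α : R), IsUnit α ∧ l e = 1 ∧ ∀ q, l (T q) = α * l q := by
  let L (n : ℕ) : Module.Dual R W := (normalizedComp T e)^[n] c
  have hL_succ (n : ℕ) : L (n + 1) = normalizedComp T e (L n) :=
    Function.iterate_succ_apply' _ _ _
  have hLe (n : ℕ) : L n e = 1 := by
    induction n with
    | zero => exact hc
    | succ n ih => rw [hL_succ, normalizedComp_apply_self (hT.isUnit_apply hc ih hu)]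
  have hLu (n : ℕ) : IsUnit (L n (T e)) := hT.isUnit_apply hc (hLe n) hu
  have hL_cauchy (n : ℕ) : ∀ q, ϖ ^ n ∣ L (n + 1) q - L n q := by
    induction n with
    | zero => simp
    | succ n ih =>
      have h := hT.pow_succ_dvd_normalizedComp_sub (hLe _) (hLe _) (hLu _) (hLu _) ih
      rwa [← hL_succ, ← hL_succ] at h
  obtain ⟨l, hl⟩ := exists_dual_forall_pow_dvd_sub hL_cauchy
  have hle : l e = 1 := eq_of_forall_pow_dvd_sub fun n => by simpa [hLe] using hl n e
  have hlu : IsUnit (l (T e)) := hT.isUnit_apply hc hle hu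
  have hfixed : normalizedComp T e l = l := by
    ext q
    refine eq_of_forall_pow_dvd_sub (ϖ := ϖ) fun n => ?_
    have hd := hT.pow_succ_dvd_normalizedComp_sub hle (hLe n) hlu (hLu n) (hl n) q
    rw [← hL_succ] at hd
    have h := (pow_dvd_pow ϖ n.le_succ).trans (dvd_sub hd (hl (n + 1) q))
    simpa using h
  refine ⟨l, l (T e), hlu, hle, fun q => ?_⟩
  have h := apply_mul_normalizedComp hlu q
  rw [hfixed] at h
  exact h.symm

end IsRankOneMod

end RankOne

section CongruencePreserving

variable {R : Type*} [CommRing R] {p : ℕ}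

variable (R p) in
/-- The algebra of sequences in `R` that preserve congruences modulo every power of `p`. For
`R = ℤ_[p]` these are the sequences that are `1`-Lipschitz for the `p`-adic metric. -/
def congrPreserving : Subalgebra R (ℕ → R) where
  carrier := {q | ∀ t m n, m ≡ n [MOD p ^ t] → (p : R) ^ t ∣ q m - q n}
  mul_mem' {a b} ha hb t m n h := by
    have hsplit : (a * b) m - (a * b) n = (a m - a n) * b m + a n * (b m - b n) := by
      simp only [Pi.mul_apply]
      ring
    rw [hsplit]
    exact dvd_add ((ha t m n h).mul_right _) ((hb t m n h).mul_left _)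
  add_mem' {a b} ha hb t m n h := by
    rw [Pi.add_apply, Pi.add_apply, add_sub_add_comm]
    exact dvd_add (ha t m n h) (hb t m n h)
  algebraMap_mem' a t m n _ := by simp

namespace congrPreserving

theorem mem_of_forall_pow_dvd_add_sub {q : ℕ → R}
    (h : ∀ t n, (p : R) ^ (t + 1) ∣ q (n + p ^ (t + 1)) - q n) : q ∈ congrPreserving R p := by
  rintro (_ | t) m n hmn
  · simp
  let π := Ideal.Quotient.mk (Ideal.span {(p : R) ^ (t + 1)})
  have hπ {a b : R} : π a = π b ↔ (p : R) ^ (t + 1) ∣ a - b := by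
    rw [Ideal.Quotient.mk_eq_mk_iff_sub_mem, Ideal.mem_span_singleton]
  have hper : Function.Periodic (π ∘ q) (p ^ (t + 1)) := fun n => hπ.2 (h t n)
  rw [← hπ]
  change (π ∘ q) m = (π ∘ q) n
  rw [← hper.map_mod_nat m, ← hper.map_mod_nat n, hmn]

theorem pow_succ_dvd_sum_sub_sum (q : congrPreserving R p) {t m n : ℕ} (h : m ≡ n [MOD p ^ t]) :
    (p : R) ^ (t + 1) ∣ ∑ j ∈ range p, q.1 (p * m + j) - ∑ j ∈ range p, q.1 (p * n + j) := by
  rw [← sum_sub_distrib]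
  refine dvd_sum fun j _ => q.2 (t + 1) _ _ ?_
  rw [pow_succ']
  exact (h.mul_left' p).add_right j

/-- The operator sending `q` to `k ↦ ∑ j < p, q (p * k + j)`, which sums `q` over the fibres of
`n ↦ n / p`. -/
def fiberSum : Module.End R (congrPreserving R p) where
  toFun q := ⟨fun k => ∑ j ∈ range p, q.1 (p * k + j), fun t _ _ h =>
    (pow_dvd_pow _ t.le_succ).trans (pow_succ_dvd_sum_sub_sum q h)⟩
  map_add' x y := by
    ext k
    simp [sum_add_distrib]
  map_smul' a x := by
    ext k
    simp [mul_sum]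

theorem fiberSum_apply (q : congrPreserving R p) (k : ℕ) :
    (fiberSum q).1 k = ∑ j ∈ range p, q.1 (p * k + j) :=
  rfl

theorem exists_fiberSum_eq_smul_one_add (hp : IsLeftRegular (p : R)) (q : congrPreserving R p) :
    ∃ (a : R) (w : congrPreserving R p), fiberSum q = a • 1 + (p : R) • w := by
  have hdiv (k : ℕ) : (p : R) ∣ (fiberSum q).1 k - (fiberSum q).1 0 := by
    have h := pow_succ_dvd_sum_sub_sum q (t := 0) (m := k) (n := 0) (by simp [Nat.modEq_one])
    rwa [zero_add, pow_one] at h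
  choose w hw using hdiv
  refine ⟨(fiberSum q).1 0, ⟨w, fun t m n hmn => ?_⟩, ?_⟩
  · obtain ⟨z, hz⟩ := pow_succ_dvd_sum_sub_sum q hmn
    rw [← fiberSum_apply, ← fiberSum_apply] at hz
    refine ⟨z, hp ?_⟩
    linear_combination hz - hw m + hw n
  · ext k
    simp [← hw k]

/-- Dwork's operator attached to `b`: multiplication by `b` followed by summation over the fibres
of `n ↦ n / p`. -/
def dworkOperator (b : congrPreserving R p) : Module.End R (congrPreserving R p) :=
  fiberSum ∘ₗ LinearMap.mulLeft R b

theorem dworkOperator_apply (b q : congrPreserving R p) (k : ℕ) :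
    (dworkOperator b q).1 k = ∑ j ∈ range p, b.1 (p * k + j) * q.1 (p * k + j) :=
  rfl

theorem isRankOneMod_dworkOperator (hp : IsLeftRegular (p : R)) (b : congrPreserving R p) :
    IsRankOneMod (p : R) (dworkOperator b) 1 :=
  fun q => exists_fiberSum_eq_smul_one_add hp (b * q)

/-- Evaluation of a congruence-preserving sequence at `k`, as a linear functional; `evalAt 0` starts
the iteration towards an eigenfunctional of Dwork's operator. -/
def evalAt (k : ℕ) : Module.Dual R (congrPreserving R p) :=
  LinearMap.proj k ∘ₗ (congrPreserving R p).val.toLinearMap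

/-- The linear functional `q ↦ ∑ k ≤ n, B k * q k`, whose value at `1` is a truncated sum of `B`. -/
def truncatedPairing (B : ℕ → R) (n : ℕ) : Module.Dual R (congrPreserving R p) :=
  ∑ k ∈ range (n + 1), B k • evalAt k

theorem truncatedPairing_apply (B : ℕ → R) (n : ℕ) (q : congrPreserving R p) :
    truncatedPairing B n q = ∑ k ∈ range (n + 1), B k * q.1 k := by
  simp [truncatedPairing, evalAt]

theorem truncatedPairing_one (B : ℕ → R) (n : ℕ) :
    truncatedPairing B n (1 : congrPreserving R p) = ∑ k ∈ range (n + 1), B k := by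
  simp [truncatedPairing_apply]

end congrPreserving

end CongruencePreserving

section DworkFactor

variable {R : Type*} [CommRing R] {p : ℕ}

/-- The sequence `b` is a Dwork factor of `B`: it preserves congruences, `B n = B (n / p) * b n`,
and `b` vanishes on the digits above `p / 2` to the order that makes the sums of `B` truncated at
`n` with `p ^ s ∣ 2 * n + 1` compatible with Dwork's operator modulo `p ^ (s + 1)`. -/
structure IsDworkFactor (p : ℕ) (b B : ℕ → R) : Prop where
  mem_congrPreserving : b ∈ congrPreserving R p
  eq_mul : ∀ n, B n = B (n / p) * b n
  dvd_of_half_lt : ∀ n, p / 2 < n % p → (p : R) * (2 * (n / p : ℕ) + 1) ∣ b n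

/-- The sums of `B` truncated at `n` with `2 * n + 1 = m * p ^ s` satisfy the congruences of Atkin
and Swinnerton-Dyer type with multiplier `α`: raising `s` by one, which replaces `n` by
`p * n + p / 2` for odd `p`, multiplies the sum by `α` modulo `p ^ (s + 1)`. -/
def HasASDCongruences (p : ℕ) (B : ℕ → R) (α : R) : Prop :=
  ∀ s n : ℕ, p ^ s ∣ 2 * n + 1 → (p : R) ^ (s + 1) ∣
    ∑ k ∈ range (p * n + p / 2 + 1), B k - α * ∑ k ∈ range (n + 1), B k

theorem sum_range_mul_eq_sum_sum {M : Type*} [AddCommMonoid M] (p n : ℕ) (f : ℕ → M) :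
    ∑ i ∈ range (p * n), f i = ∑ k ∈ range n, ∑ j ∈ range p, f (p * k + j) := by
  induction n with
  | zero => simp
  | succ n ih => rw [mul_add, mul_one, sum_range_add, ih, sum_range_succ]

theorem exists_eq_mul_add_half_of_pow_succ_dvd (hp : Odd p) {s n : ℕ}
    (h : p ^ (s + 1) ∣ 2 * n + 1) : ∃ k, n = p * k + p / 2 ∧ p ^ s ∣ 2 * k + 1 := by
  obtain ⟨m, hm⟩ := h
  have hm' : 2 * n + 1 = p * (p ^ s * m) := by rw [hm, pow_succ', mul_assoc]
  obtain ⟨k, hk⟩ : Odd (p ^ s * m) := (Nat.odd_mul.1 (hm' ▸ odd_two_mul_add_one n)).2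
  refine ⟨k, ?_, m, hk.symm⟩
  rw [hk, mul_add, mul_one, mul_left_comm] at hm'
  have := Nat.two_mul_div_two_add_one_of_odd hp
  omega

namespace IsDworkFactor

open congrPreserving

variable {b c B C : ℕ → R}

theorem pow (h : IsDworkFactor p b B) {r : ℕ} (hr : r ≠ 0) : IsDworkFactor p (b ^ r) (B ^ r) where
  mem_congrPreserving := pow_mem h.mem_congrPreserving r
  eq_mul n := by rw [Pi.pow_apply, h.eq_mul, mul_pow, Pi.pow_apply, Pi.pow_apply]
  dvd_of_half_lt n hn := dvd_pow (h.dvd_of_half_lt n hn) hr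

theorem mul (h : IsDworkFactor p b B) (hc : c ∈ congrPreserving R p)
    (hC : ∀ n, C n = C (n / p) * c n) : IsDworkFactor p (b * c) (B * C) where
  mem_congrPreserving := mul_mem h.mem_congrPreserving hc
  eq_mul n := by
    rw [Pi.mul_apply, h.eq_mul, hC, Pi.mul_apply, Pi.mul_apply]
    ring
  dvd_of_half_lt n hn := (h.dvd_of_half_lt n hn).mul_right _

theorem truncatedPairing_dworkOperator (h : IsDworkFactor p b B) (n : ℕ)
    (q : congrPreserving R p) :
    truncatedPairing B n (dworkOperator ⟨b, h.mem_congrPreserving⟩ q) =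
      ∑ i ∈ range (p * (n + 1)), B i * q.1 i := by
  rw [truncatedPairing_apply, sum_range_mul_eq_sum_sum]
  refine sum_congr rfl fun k _ => ?_
  rw [dworkOperator_apply, mul_sum]
  refine sum_congr rfl fun j hj => ?_
  have hj := mem_range.1 hj
  have hdiv : (p * k + j) / p = k := by
    rw [Nat.mul_add_div (by omega), Nat.div_eq_of_lt hj, add_zero]
  rw [h.eq_mul (p * k + j), hdiv, mul_assoc]

theorem pow_succ_dvd_of_half_lt (h : IsDworkFactor p b B) {s n : ℕ}
    (hs : p ^ s ∣ 2 * (n / p) + 1) (hn : p / 2 < n % p) : (p : R) ^ (s + 1) ∣ B n := by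
  have hcast : (p : R) ^ s ∣ 2 * (n / p : ℕ) + 1 := by
    simpa using (Nat.castRingHom R).map_dvd hs
  rw [h.eq_mul, pow_succ']
  exact ((mul_dvd_mul_left _ hcast).trans (h.dvd_of_half_lt n hn)).mul_left _

theorem pow_succ_dvd_truncatedPairing_sub (h : IsDworkFactor p b B) (hp : 0 < p) {s n : ℕ}
    (hs : p ^ s ∣ 2 * n + 1) (q : congrPreserving R p) :
    (p : R) ^ (s + 1) ∣ truncatedPairing B (p * n + p / 2) q -
      truncatedPairing B n (dworkOperator ⟨b, h.mem_congrPreserving⟩ q) := by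
  have hle : p * n + p / 2 + 1 ≤ p * (n + 1) := by
    rw [mul_add, mul_one]
    omega
  rw [h.truncatedPairing_dworkOperator, truncatedPairing_apply, ← sum_range_add_sum_Ico _ hle,
    sub_add_cancel_left, dvd_neg]
  refine dvd_sum fun i hi => Dvd.dvd.mul_right ?_ _
  rw [mem_Ico, mul_add, mul_one] at hi
  obtain ⟨j, rfl⟩ := Nat.exists_eq_add_of_le (show p * n ≤ i by omega)
  have hj : j < p := by omega
  have hdiv : (p * n + j) / p = n := by
    rw [Nat.mul_add_div (by omega), Nat.div_eq_of_lt hj, add_zero]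
  refine h.pow_succ_dvd_of_half_lt (by rwa [hdiv]) ?_
  rw [Nat.mul_add_mod, Nat.mod_eq_of_lt hj]
  omega

theorem pow_dvd_truncatedPairing_of_apply_eq_zero (h : IsDworkFactor p b B) (hp : Odd p)
    (hreg : IsLeftRegular (p : R)) {l : Module.Dual R (congrPreserving R p)} (hl : l 1 = 1) {α : R}
    (hlT : ∀ q, l (dworkOperator ⟨b, h.mem_congrPreserving⟩ q) = α * l q) {s n : ℕ}
    (hs : p ^ s ∣ 2 * n + 1) {w : congrPreserving R p} (hw : l w = 0) :
    (p : R) ^ s ∣ truncatedPairing B n w := by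
  induction s generalizing n w with
  | zero => simp
  | succ s ih =>
    obtain ⟨k, rfl, hk⟩ := exists_eq_mul_add_half_of_pow_succ_dvd hp hs
    obtain ⟨w', hw', hTw⟩ := (isRankOneMod_dworkOperator hreg _).exists_apply_eq_zero hl w
    rw [hlT, hw, mul_zero, zero_smul, zero_add] at hTw
    have hdvd := mul_dvd_mul_left (p : R) (ih hk hw')
    rw [← pow_succ', ← smul_eq_mul, ← map_smul, ← hTw] at hdvd
    exact (dvd_iff_dvd_of_dvd_sub (h.pow_succ_dvd_truncatedPairing_sub hp.pos hk w)).2 hdvd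

theorem exists_isUnit_hasASDCongruences [IsAdicComplete (Ideal.span {(p : R)}) R]
    (h : IsDworkFactor p b B) (hp : Odd p) (hreg : IsLeftRegular (p : R))
    (hu : IsUnit (∑ k ∈ range (p / 2 + 1), B k)) :
    ∃ α : R, IsUnit α ∧ HasASDCongruences p B α := by
  let T := dworkOperator ⟨b, h.mem_congrPreserving⟩
  have hT : IsRankOneMod (p : R) T 1 := isRankOneMod_dworkOperator hreg _
  have hT1 : IsUnit (evalAt 0 (T 1)) := by
    have hd := h.pow_succ_dvd_truncatedPairing_sub hp.pos (s := 0) (n := 0) (by simp) 1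
    rw [truncatedPairing_one, zero_add, pow_one, mul_zero, zero_add] at hd
    have hB : IsUnit (B 0 * evalAt 0 (T 1)) := by
      simpa [truncatedPairing, T] using (isUnit_congr_of_dvd_sub hd).1 hu
    exact isUnit_of_mul_isUnit_right hB
  obtain ⟨l, α, hα, hl, hlT⟩ := hT.exists_eigenfunctional (c := evalAt 0) rfl hT1
  refine ⟨α, hα, fun s n hs => ?_⟩
  obtain ⟨w, hw, hT1w⟩ := hT.exists_apply_eq_zero hl 1
  rw [hlT, hl, mul_one] at hT1w
  have hw_dvd := mul_dvd_mul_left (p : R)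
    (h.pow_dvd_truncatedPairing_of_apply_eq_zero hp hreg hl hlT hs hw)
  have hsum := h.pow_succ_dvd_truncatedPairing_sub hp.pos hs 1
  rw [← pow_succ'] at hw_dvd
  have hST : truncatedPairing B n (T 1) =
      α * truncatedPairing B n (1 : congrPreserving R p) + p * truncatedPairing B n w := by
    rw [hT1w, map_add, map_smul, map_smul, smul_eq_mul, smul_eq_mul]
  rw [← truncatedPairing_one (p := p), ← truncatedPairing_one (p := p)]
  have hd := dvd_add hsum hw_dvd
  rw [hST] at hd
  convert hd using 1
  ring

end IsDworkFactor

theorem le_of_pow_dvd_two_mul_add_one {s n : ℕ} (hp : 3 ≤ p) (h : p ^ s ∣ 2 * n + 1) :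
    s ≤ n := by
  have hbernoulli := one_add_mul_le_pow (show (-2 : ℤ) ≤ 2 by norm_num) s
  have hmono := Nat.pow_le_pow_left hp s
  have hle := Nat.le_of_dvd (Nat.succ_pos _) h
  norm_num at hbernoulli
  zify at hmono hle
  omega

theorem hasASDCongruences_mul_pow_of_dvd (hp : 3 ≤ p) (a : ℕ → R) {x : R} (hx : (p : R) ∣ x) :
    HasASDCongruences p (fun k => a k * x ^ k) 1 := by
  intro s n hs
  have hsn := le_of_pow_dvd_two_mul_add_one hp hs
  have hn : n ≤ p * n := Nat.le_mul_of_pos_left n (by omega)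
  rw [one_mul, ← sum_range_add_sum_Ico _ (show n + 1 ≤ p * n + p / 2 + 1 by omega),
    add_sub_cancel_left]
  refine dvd_sum fun i hi => Dvd.dvd.mul_left ?_ _
  rw [mem_Ico] at hi
  exact (pow_dvd_pow _ (by omega)).trans (pow_dvd_pow_of_dvd hx i)

end DworkFactor

section Products

variable {p : ℕ}

theorem centralBinom_mul_prod_range (n : ℕ) :
    n.centralBinom * ∏ i ∈ range n, (2 * i + 2) = 4 ^ n * ∏ i ∈ range n, (2 * i + 1) := by
  induction n with
  | zero => simp
  | succ n ih =>
    rw [prod_range_succ, prod_range_succ]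
    have h := Nat.succ_mul_centralBinom_succ n
    linear_combination 2 * (∏ i ∈ range n, (2 * i + 2)) * h + 4 * (2 * n + 1) * ih

theorem prod_range_natCast_mul_add {M : Type*} [CommMonoid M] {N a : ℕ} [NeZero N]
    (ha : a.Coprime N) (c : ℕ) (f : ZMod N → M) :
    ∏ i ∈ range N, f (a * i + c : ℕ) = ∏ x, f x := by
  rw [prod_range]
  refine Fintype.prod_bijective (fun i : Fin N => ((a * i + c : ℕ) : ZMod N)) ?_ _ _ fun _ => rfl
  refine (Fintype.bijective_iff_injective_and_card _).2 ⟨fun i j hij => ?_, by simp⟩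
  have h : a * i ≡ a * j [MOD N] := Nat.ModEq.add_right_cancel' c
    ((ZMod.natCast_eq_natCast_iff _ _ _).1 hij)
  exact Fin.ext (Nat.ModEq.eq_of_lt_of_lt (h.cancel_left_of_coprime ha.symm) i.2 j.2)

/-- `x` if `p` does not divide `x`, and `1` otherwise: the factor left in a product over an
arithmetic progression once the multiples of `p` are removed. -/
def coprimePart (p x : ℕ) : ℕ :=
  if p ∣ x then 1 else x

/-- The multiple `p * (2 * (n / p) + 1)` of `p` in the numerator of
`(1/2)_n / n! = ∏ i ∈ range n, (2 * i + 1) / (2 * i + 2)` that has no counterpart in the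
denominator yet, or `1` if all multiples of `p` are matched. -/
def multipleFactor (p n : ℕ) : ℕ :=
  if p / 2 < n % p then p * (2 * (n / p) + 1) else 1

-- By `h`, the multiples of `p` among the numbers `2 * i + δ` are the `p * (2 * k + δ)`, attained at
-- `i = p * (k + 1) - (c + 1)`.
theorem prod_range_two_mul_add (hp : Odd p) {c δ : ℕ} (hδ : 0 < δ)
    (h : 2 * (c + 1) + p * δ = 2 * p + δ) (n : ℕ) :
    ∏ i ∈ range n, (2 * i + δ) = (∏ i ∈ range n, coprimePart p (2 * i + δ)) *
      ∏ k ∈ range ((n + c) / p), p * (2 * k + δ) := by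
  induction n with
  | zero =>
    have hc : c < p := by nlinarith [hp.pos, hδ]
    simp [Nat.div_eq_of_lt hc]
  | succ n ih =>
    have hdvd : p ∣ n + c + 1 ↔ p ∣ 2 * n + δ := by
      have hshift : 2 * (n + c + 1) + p * δ = 2 * n + δ + p * 2 := by linarith
      rw [← (Nat.coprime_two_right.2 hp).dvd_mul_left,
        Nat.dvd_add_iff_left (dvd_mul_right p δ), hshift, Nat.dvd_add_left (dvd_mul_right p 2)]
    rw [prod_range_succ, prod_range_succ, ih, add_right_comm, Nat.succ_div, coprimePart]
    simp only [← hdvd]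
    split_ifs with hn
    · obtain ⟨k, hk⟩ := hn
      obtain _ | k := k
      · omega
      have hdiv : (n + c) / p = k := by
        rw [Nat.div_eq_iff hp.pos]
        constructor <;> lia
      have hfactor : 2 * n + δ = p * (2 * k + δ) := by linarith
      rw [hdiv, prod_range_succ, hfactor]
      ring
    · rw [add_zero]
      ring

theorem prod_range_two_mul_add_two (hp : Odd p) (n : ℕ) :
    ∏ i ∈ range n, (2 * i + 2) = (∏ i ∈ range n, coprimePart p (2 * i + 2)) *
      ∏ k ∈ range (n / p), p * (2 * k + 2) :=
  prod_range_two_mul_add hp two_pos (c := 0) (by ring) n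

theorem prod_range_two_mul_add_one (hp : Odd p) (n : ℕ) :
    ∏ i ∈ range n, (2 * i + 1) = (∏ i ∈ range n, coprimePart p (2 * i + 1)) *
      ((∏ k ∈ range (n / p), p * (2 * k + 1)) * multipleFactor p n) := by
  have hp' := Nat.two_mul_div_two_add_one_of_odd hp
  have hdiv : (n + p / 2) / p = n / p + if p / 2 < n % p then 1 else 0 := by
    rw [Nat.add_div hp.pos, Nat.div_eq_of_lt (Nat.div_lt_self hp.pos one_lt_two), add_zero,
      Nat.mod_eq_of_lt (Nat.div_lt_self hp.pos one_lt_two)]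
    congr 2
    exact propext (by omega)
  rw [prod_range_two_mul_add hp one_pos (c := p / 2) (by omega), hdiv, multipleFactor]
  split_ifs
  · rw [prod_range_succ]
  · rw [add_zero, mul_one]

theorem natCast_multipleFactor_mem_congrPreserving (R : Type*) [CommRing R] (hp : 0 < p) :
    (fun n => (multipleFactor p n : R)) ∈ congrPreserving R p := by
  refine congrPreserving.mem_of_forall_pow_dvd_add_sub fun t n => ?_
  simp only [multipleFactor, pow_succ', Nat.add_mul_mod_self_left, Nat.add_mul_div_left _ _ hp]
  split_ifs
  · exact ⟨2, by push_cast; ring⟩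
  · simp

end Products

section PadicReduction

variable {p : ℕ} [Fact p.Prime]

theorem isUnit_natCast_of_coprime {n : ℕ} (h : p.Coprime n) : IsUnit (n : ℤ_[p]) :=
  PadicInt.isUnit_iff.2 (PadicInt.norm_natCast_eq_one_iff.2 h)

theorem isUnit_four_of_odd (hp : Odd p) : IsUnit (4 : ℤ_[p]) := by
  exact_mod_cast isUnit_natCast_of_coprime (hp.coprime_two_right.pow_right 2)

theorem pow_dvd_sub_iff_toZModPow_eq {n : ℕ} {x y : ℤ_[p]} :
    (p : ℤ_[p]) ^ n ∣ x - y ↔ PadicInt.toZModPow n x = PadicInt.toZModPow n y := by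
  rw [← Ideal.mem_span_singleton, ← PadicInt.ker_toZModPow, RingHom.sub_mem_ker_iff]

theorem pow_sub_div_mem_congrPreserving {x : ℤ_[p]} (hx : IsUnit x) :
    (fun n => x ^ (n - n / p)) ∈ congrPreserving ℤ_[p] p := by
  have hp : p.Prime := Fact.out
  refine congrPreserving.mem_of_forall_pow_dvd_add_sub fun t n => ?_
  have hexp : n + p ^ (t + 1) - (n + p ^ (t + 1)) / p =
      n - n / p + (p ^ (t + 1)).totient := by
    have hle := Nat.div_le_self n p
    have hpow : p ^ t ≤ p ^ t * p := Nat.le_mul_of_pos_right _ hp.pos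
    rw [Nat.totient_prime_pow_succ hp, pow_succ, Nat.add_mul_div_right _ _ hp.pos, Nat.mul_sub_one]
    omega
  have hunit : PadicInt.toZModPow (t + 1) x ^ (p ^ (t + 1)).totient = 1 := by
    obtain ⟨u, hu⟩ := hx.map (PadicInt.toZModPow (t + 1))
    rw [← hu, ← Units.val_pow_eq_pow_val, ZMod.pow_totient, Units.val_one]
  rw [hexp, pow_add x, pow_dvd_sub_iff_toZModPow_eq, map_mul, map_pow _ x (Nat.totient _), hunit,
    mul_one]

/-- Reduction of `p`-adic units modulo `p ^ n`, as a homomorphism of unit groups so that it commutes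
with quotients. -/
noncomputable def unitsToZModPow (p : ℕ) [Fact p.Prime] (n : ℕ) : ℤ_[p]ˣ →* (ZMod (p ^ n))ˣ :=
  Units.map (PadicInt.toZModPow n : ℤ_[p] →+* ZMod (p ^ n))

theorem pow_dvd_val_sub_iff_unitsToZModPow_eq {n : ℕ} {u v : ℤ_[p]ˣ} :
    (p : ℤ_[p]) ^ n ∣ (u : ℤ_[p]) - v ↔ unitsToZModPow p n u = unitsToZModPow p n v := by
  rw [pow_dvd_sub_iff_toZModPow_eq, Units.ext_iff]
  rfl

end PadicReduction

section CoprimeRatio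

variable {p : ℕ} [Fact p.Prime]

variable (p) in
theorem coprime_coprimePart (x : ℕ) : p.Coprime (coprimePart p x) := by
  rw [coprimePart]
  split_ifs with h
  · exact Nat.coprime_one_right p
  · exact ((Fact.out : p.Prime).coprime_iff_not_dvd).2 h

/-- `coprimePart p x` as a unit of the `p`-adic integers. -/
noncomputable def coprimeUnit (p : ℕ) [Fact p.Prime] (x : ℕ) : ℤ_[p]ˣ :=
  (isUnit_natCast_of_coprime (coprime_coprimePart p x)).unit

theorem val_coprimeUnit (x : ℕ) : (coprimeUnit p x : ℤ_[p]) = coprimePart p x :=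
  rfl

theorem unitsToZModPow_coprimeUnit_mod (t x : ℕ) :
    unitsToZModPow p (t + 1) (coprimeUnit p (x % p ^ (t + 1))) =
      unitsToZModPow p (t + 1) (coprimeUnit p x) := by
  refine Units.ext ?_
  simp only [unitsToZModPow, Units.coe_map, val_coprimeUnit, MonoidHom.coe_coe, map_natCast,
    coprimePart, Nat.dvd_mod_iff (dvd_pow_self p t.succ_ne_zero)]
  split_ifs
  · rfl
  · exact ZMod.natCast_mod _ _

theorem prod_range_unitsToZModPow_coprimeUnit (hp : Odd p) (t c : ℕ) :
    ∏ i ∈ range (p ^ (t + 1)), unitsToZModPow p (t + 1) (coprimeUnit p (2 * i + c)) =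
      ∏ x : ZMod (p ^ (t + 1)), unitsToZModPow p (t + 1) (coprimeUnit p x.val) := by
  rw [← prod_range_natCast_mul_add (hp.coprime_two_left.pow_right _) c]
  simp only [ZMod.val_natCast, unitsToZModPow_coprimeUnit_mod]

/-- The contribution of the factors prime to `p` to
`(1/2)_n / n! = ∏ i ∈ range n, (2 * i + 1) / (2 * i + 2)`. -/
noncomputable def coprimeRatio (p : ℕ) [Fact p.Prime] (n : ℕ) : ℤ_[p]ˣ :=
  ∏ i ∈ range n, coprimeUnit p (2 * i + 1) / coprimeUnit p (2 * i + 2)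

theorem coprimeRatio_mul_prod_range (n : ℕ) :
    (coprimeRatio p n : ℤ_[p]) * (∏ i ∈ range n, coprimePart p (2 * i + 2) : ℕ) =
      (∏ i ∈ range n, coprimePart p (2 * i + 1) : ℕ) := by
  have h : coprimeRatio p n * ∏ i ∈ range n, coprimeUnit p (2 * i + 2) =
      ∏ i ∈ range n, coprimeUnit p (2 * i + 1) := by
    rw [coprimeRatio, prod_div_distrib, div_mul_cancel]
  simpa [val_coprimeUnit] using congrArg Units.val h

-- Modulo `p ^ (t + 1)`, over a period of that length the numerators and the denominators of
-- `coprimeRatio` both run over all residue classes.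
theorem coprimeRatio_mem_congrPreserving (hp : Odd p) :
    (fun n => (coprimeRatio p n : ℤ_[p])) ∈ congrPreserving ℤ_[p] p := by
  refine congrPreserving.mem_of_forall_pow_dvd_add_sub fun t n => ?_
  have hshift (c i : ℕ) : 2 * (n + i) + c = 2 * i + (2 * n + c) := by ring
  have hblock : unitsToZModPow p (t + 1) (∏ i ∈ range (p ^ (t + 1)),
      coprimeUnit p (2 * (n + i) + 1) / coprimeUnit p (2 * (n + i) + 2)) = 1 := by
    simp only [map_prod, map_div, prod_div_distrib, hshift,
      prod_range_unitsToZModPow_coprimeUnit hp, div_self']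
  rw [pow_dvd_val_sub_iff_unitsToZModPow_eq, coprimeRatio, prod_range_add, map_mul, hblock,
    mul_one, coprimeRatio]

end CoprimeRatio

section HalfRatio

variable {p : ℕ} [Fact p.Prime]

/-- `(1/2)_n / n!` as a `p`-adic integer, for odd `p`. For `p = 2` the inverse of `4` is the junk
value `0`. -/
noncomputable def halfRatio (p : ℕ) [Fact p.Prime] (n : ℕ) : ℤ_[p] :=
  n.centralBinom * Ring.inverse 4 ^ n

theorem halfRatio_mul_four_pow (hp : Odd p) (n : ℕ) :
    halfRatio p n * 4 ^ n = n.centralBinom := by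
  rw [halfRatio, mul_assoc, ← mul_pow, Ring.inverse_mul_cancel _ (isUnit_four_of_odd hp), one_pow,
    mul_one]

theorem coe_halfRatio (hp : Odd p) (n : ℕ) :
    (halfRatio p n : ℚ_[p]) = (Nat.choose (2 * n) n : ℚ_[p]) / 4 ^ n := by
  rw [eq_div_iff (pow_ne_zero n (by norm_num))]
  exact_mod_cast congrArg ((↑) : ℤ_[p] → ℚ_[p]) (halfRatio_mul_four_pow hp n)

theorem coe_sum_halfRatio (hp : Odd p) (r : ℕ) (x : ℤ_[p]) (n : ℕ) :
    ((∑ k ∈ range (n + 1), halfRatio p k ^ r * x ^ k : ℤ_[p]) : ℚ_[p]) = truncF p r x n := by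
  simp only [truncF, PadicInt.coe_sum, PadicInt.coe_mul, PadicInt.coe_pow, coe_halfRatio hp]

theorem halfRatio_mul_prod_range (hp : Odd p) (n : ℕ) :
    halfRatio p n * (∏ i ∈ range n, (2 * i + 2) : ℕ) = (∏ i ∈ range n, (2 * i + 1) : ℕ) := by
  refine ((isUnit_four_of_odd hp).pow n).mul_left_cancel ?_
  rw [← mul_assoc, mul_comm (4 ^ n), halfRatio_mul_four_pow hp]
  exact_mod_cast centralBinom_mul_prod_range n

theorem halfRatio_eq_mul (hp : Odd p) (n : ℕ) :
    halfRatio p n = halfRatio p (n / p) * (coprimeRatio p n * multipleFactor p n) := by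
  have hn := halfRatio_mul_prod_range hp n
  have hdiv := halfRatio_mul_prod_range hp (n / p)
  have hcoprime := coprimeRatio_mul_prod_range (p := p) n
  have hden : ∏ i ∈ range n, (2 * i + 2) ≠ 0 := prod_ne_zero_iff.2 fun i _ => by omega
  refine mul_right_cancel₀ (Nat.cast_ne_zero (R := ℤ_[p]).2 hden) ?_
  rw [hn, prod_range_two_mul_add_one hp, prod_range_two_mul_add_two hp, prod_mul_distrib,
    prod_mul_distrib]
  simp only [Nat.cast_mul, ← hcoprime, ← hdiv]
  ring

theorem isDworkFactor_halfRatio (hp : Odd p) :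
    IsDworkFactor p ((fun n => (coprimeRatio p n : ℤ_[p])) * fun n => (multipleFactor p n : ℤ_[p]))
      (halfRatio p) where
  mem_congrPreserving := mul_mem (coprimeRatio_mem_congrPreserving hp)
    (natCast_multipleFactor_mem_congrPreserving _ hp.pos)
  eq_mul := halfRatio_eq_mul hp
  dvd_of_half_lt n hn := by
    refine Dvd.dvd.mul_left ?_ _
    simp [multipleFactor, hn]

theorem exists_isUnit_hasASDCongruences_halfRatio (hp : Odd p) {r : ℕ} (hr : r ≠ 0) (x : ℤ_[p])
    (hu : IsUnit (∑ k ∈ range (p / 2 + 1), halfRatio p k ^ r * x ^ k)) :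
    ∃ α : ℤ_[p], IsUnit α ∧ HasASDCongruences p (fun k => halfRatio p k ^ r * x ^ k) α := by
  by_cases hx : IsUnit x
  · have : IsAdicComplete (Ideal.span {(p : ℤ_[p])}) ℤ_[p] :=
      PadicInt.maximalIdeal_eq_span_p (p := p) ▸ inferInstance
    have hfactor := ((isDworkFactor_halfRatio hp).pow hr).mul (C := fun n => x ^ n)
      (pow_sub_div_mem_congrPreserving hx) fun n => by
        rw [← pow_add, Nat.add_sub_cancel' (Nat.div_le_self n p)]
    exact hfactor.exists_isUnit_hasASDCongruences hp
      (mul_right_injective₀ (Nat.cast_ne_zero.2 (NeZero.ne p))) hu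
  · have hdvd : (p : ℤ_[p]) ∣ x := by
      rwa [← Ideal.mem_span_singleton, ← PadicInt.maximalIdeal_eq_span_p,
        IsLocalRing.mem_maximalIdeal]
    have h3 : 3 ≤ p := by
      have h2 := (Fact.out : p.Prime).two_le
      obtain ⟨k, rfl⟩ := hp
      omega
    exact ⟨1, isUnit_one, hasASDCongruences_mul_pow_of_dvd h3 _ hdvd⟩

end HalfRatio

theorem mul_pow_succ_sub_one_div_two {p m s n : ℕ} (hp : Odd p) (hn : m * p ^ s = 2 * n + 1) :
    (m * p ^ (s + 1) - 1) / 2 = p * n + p / 2 := by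
  have h : m * p ^ (s + 1) = 2 * (p * n) + p := by
    rw [pow_succ, ← mul_assoc, hn]
    ring
  have := Nat.two_mul_div_two_add_one_of_odd hp
  omega

theorem norm_div_sub_le_zpow {K : Type*} [NormedField K] {c : ℝ} (hc : 0 < c) {d s : ℤ} {a x y : K}
    (hx : c ^ (-d) ≤ ‖x‖) (h : ‖y - a * x‖ ≤ c ^ (-s)) : ‖y / x - a‖ ≤ c ^ (d - s) := by
  have hpos : 0 < ‖x‖ := (zpow_pos hc _).trans_le hx
  rw [div_sub' (norm_pos_iff.1 hpos), norm_div, div_le_iff₀ hpos, mul_comm x]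
  calc ‖y - a * x‖ ≤ c ^ (-s) := h
    _ = c ^ (d - s) * c ^ (-d) := by rw [← zpow_add₀ hc.ne', show d - s + -d = -s by ring]
    _ ≤ c ^ (d - s) * ‖x‖ := by gcongr

theorem exists_isUnit_norm_truncF_sub_le {p r : ℕ} [Fact p.Prime] (hp : Odd p) (hr : r ≠ 0)
    {x : ℤ_[p]} (hu : ‖truncF p r x ((p - 1) / 2)‖ = 1) :
    ∃ α : ℤ_[p], IsUnit α ∧ ∀ m, Odd m → ∀ s : ℕ,
      ‖truncF p r x ((m * p ^ (s + 1) - 1) / 2) - α * truncF p r x ((m * p ^ s - 1) / 2)‖ ≤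
        (p : ℝ) ^ (-((s + 1 : ℕ) : ℤ)) := by
  have hhalf : (p - 1) / 2 = p / 2 := by
    have := Nat.two_mul_div_two_add_one_of_odd hp
    omega
  rw [hhalf, ← coe_sum_halfRatio hp, ← PadicInt.norm_def, ← PadicInt.isUnit_iff] at hu
  obtain ⟨α, hα, h⟩ := exists_isUnit_hasASDCongruences_halfRatio hp hr x hu
  refine ⟨α, hα, fun m hm s => ?_⟩
  obtain ⟨n, hn⟩ := hm.mul (hp.pow (n := s))
  have hdvd := h s n ⟨m, by rw [← hn, mul_comm]⟩
  rw [← Ideal.mem_span_singleton, ← PadicInt.norm_le_pow_iff_mem_span_pow, PadicInt.norm_def,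
    PadicInt.coe_sub, PadicInt.coe_mul, coe_sum_halfRatio hp, coe_sum_halfRatio hp] at hdvd
  rwa [mul_pow_succ_sub_one_div_two hp hn, hn, Nat.add_sub_cancel,
    Nat.mul_div_cancel_left _ two_pos]

theorem stmt1_general (r p : ℕ) (hr : 0 < r) [Fact p.Prime] (hp : Odd p) (lam : ℤ_[p])
    (hunit : ‖truncF p r lam ((p - 1) / 2)‖ = 1) :
    ∃ α : ℤ_[p], ‖α‖ = 1 ∧
      ∀ m : ℕ, Odd m → ∀ s : ℕ, 1 ≤ s →
        ∀ d : ℤ, (p : ℝ) ^ (-d) ≤ ‖truncF p r lam ((m * p ^ (s - 1) - 1) / 2)‖ →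
          ‖truncF p r lam ((m * p ^ s - 1) / 2) / truncF p r lam ((m * p ^ (s - 1) - 1) / 2)
              - (α : ℚ_[p])‖ ≤ (p : ℝ) ^ (d - (s : ℤ)) := by
  obtain ⟨α, hα, h⟩ := exists_isUnit_norm_truncF_sub_le hp hr.ne' hunit
  refine ⟨α, PadicInt.isUnit_iff.1 hα, fun m hm s hs d hd => ?_⟩
  obtain ⟨s, rfl⟩ := Nat.exists_eq_add_of_le' hs
  exact norm_div_sub_le_zpow (Nat.cast_pos.2 hp.pos) hd (h m hm s)

theorem stmt1 (r p : ℕ) (hr : 0 < r) [Fact p.Prime] (hp : Odd p) (lam : ℤ_[p])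
    (hunit : ‖truncF p r lam ((p - 1) / 2)‖ = 1) :
    ∃ α : ℤ_[p], ‖α‖ = 1 ∧
      ∀ m : ℕ, Odd m →
        ∀ d : ℕ, (∀ t : ℕ, (p : ℝ) ^ (-(d : ℤ)) ≤ ‖truncF p r lam ((m * p ^ t - 1) / 2)‖) →
          ∀ s : ℕ, 1 ≤ s →
            ‖truncF p r lam ((m * p ^ s - 1) / 2) / truncF p r lam ((m * p ^ (s - 1) - 1) / 2)
                - (α : ℚ_[p])‖ ≤ (p : ℝ) ^ ((d : ℤ) - (s : ℤ)) := by
  obtain ⟨α, hα, h⟩ := stmt1_general r p hr hp lam hunit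
  exact ⟨α, hα, fun m hm d hd s hs => h m hm s hs d (hd (s - 1))⟩
end

section
/- Let p be a prime with p ∉ {2, 3, 7}. Then Σ_{k=0}^{(p−1)/2} C(2k,k)³ ≡ a_p (mod p²), where a_p = 0 if p ≡ 3, 5, or 6 (mod 7), and a_p = 4x² − 2p if p ≡ 1, 2, or 4 (mod 7), where x, y are integers with p = x² + 7y². -/
open Finset

/-!
Write `p = 2 * h + 1`. Modulo `p ^ 2` the sum is `∑ clausenCoeff h k * (-16) ^ k`, which by
Clausen's formula is the square of `P_h = P_h(3 * δ)`, where `δ ^ 2 = -7` and the Legendre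
polynomial `P_h(t)` is the coefficient of `X ^ h` in `G = (1 - 2 t X + X ^ 2) ^ (-1/2)`.

For `t = 3 * δ` the curve `w ^ 2 = 1 - 2 t s ^ 2 + s ^ 4` has complex multiplication by `ℤ[δ]`:
multiplication by `μ` is `s ↦ s ρ(s ^ 2)` with `ρ = n / d` rational, and pulling back the invariant
differential `ds / w` gives `G(X ρ ^ 2) (ρ + 2 X ρ') = μ G`.

If `-7` is not a square modulo `p`, take `μ = δ` in characteristic `p`. Comparing coefficients of
`X ^ h` gives `δ ^ p P_h = δ P_h`, while `δ ^ p = -δ`, so `P_h` vanishes modulo `p` and its square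
modulo `p ^ 2`.

If `p = x ^ 2 + 7 y ^ 2`, choose the root `δ` in `ℤ_p` for which `x + y δ = p v` with `v` a unit.
Multiplication by `x + y δ` has `d` constant modulo `p` and `n` the reversal of `d`, so comparing
coefficients of `X ^ h` gives `p v P_h = ± p` modulo `p ^ 3`. Hence
`P_h ^ 2 ≡ v ^ (-2) = (x - y δ) ^ 2 ≡ 4 x ^ 2 - 2 p` modulo `p ^ 2`.
-/

section Legendre

open Polynomial

theorem choose_two_mul_mul_centralBinom (n k : ℕ) :
    (n + k).choose (2 * k) * k.centralBinom = n.choose k * (n + k).choose n := by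
  rw [Nat.centralBinom, Nat.choose_mul (by omega), Nat.add_sub_cancel, two_mul, Nat.add_sub_cancel,
    Nat.choose_symm_add, mul_comm]

theorem factorial_sq_mul_coeff_shiftedLegendre (n k : ℕ) :
    (k.factorial : ℤ) ^ 2 * (shiftedLegendre n).coeff k
      = (-1) ^ k * (n + k).descFactorial (2 * k) := by
  have hdesc : (n + k).descFactorial (2 * k)
      = k.factorial ^ 2 * (n.choose k * (n + k).choose n) := by
    have hfact : k.centralBinom * k.factorial * k.factorial = (2 * k).factorial := by
      have := Nat.add_choose_mul_factorial_mul_factorial k k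
      rwa [← two_mul] at this
    rw [Nat.descFactorial_eq_factorial_mul_choose, ← choose_two_mul_mul_centralBinom, ← hfact]
    ring
  rw [coeff_shiftedLegendre, hdesc]
  push_cast
  ring

theorem cast_descFactorial_succ (n k : ℕ) :
    (n.descFactorial (k + 1) : ℤ) = (n - k) * n.descFactorial k := by
  rcases le_or_gt k n with h | h
  · rw [Nat.descFactorial_succ, Nat.cast_mul, Nat.cast_sub h]
  · rw [Nat.descFactorial_succ, Nat.descFactorial_of_lt h, mul_zero, Nat.cast_zero, mul_zero]

theorem coeff_zero_shiftedLegendre (n : ℕ) : (shiftedLegendre n).coeff 0 = 1 := by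
  simp [coeff_shiftedLegendre]

theorem coeff_succ_shiftedLegendre (n k : ℕ) :
    (k + 1 : ℤ) ^ 2 * (shiftedLegendre n).coeff (k + 1)
      = -((n * (n + 1) - k * (k + 1)) * (shiftedLegendre n).coeff k) := by
  have hfact : (k.factorial : ℤ) ^ 2 ≠ 0 := by positivity
  apply mul_left_cancel₀ hfact
  have hk := factorial_sq_mul_coeff_shiftedLegendre n k
  have hsucc := factorial_sq_mul_coeff_shiftedLegendre n (k + 1)
  rw [← add_assoc, mul_add_one, Nat.succ_descFactorial_succ, Nat.factorial_succ] at hsucc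
  push_cast [cast_descFactorial_succ] at hsucc
  linear_combination hsucc + (n + k + 1) * (n - k) * hk

theorem coeff_shiftedLegendre_three_term (n k : ℕ) :
    (n + 2 : ℤ) * (shiftedLegendre (n + 2)).coeff (k + 1)
        + (n + 1) * (shiftedLegendre n).coeff (k + 1)
      = (2 * n + 3) * ((shiftedLegendre (n + 1)).coeff (k + 1)
        - 2 * (shiftedLegendre (n + 1)).coeff k) := by
  have hfact : ((k + 1).factorial : ℤ) ^ 2 ≠ 0 := by positivity
  apply mul_left_cancel₀ hfact
  have hk := factorial_sq_mul_coeff_shiftedLegendre (n + 1) k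
  have h0 := factorial_sq_mul_coeff_shiftedLegendre n (k + 1)
  have h1 := factorial_sq_mul_coeff_shiftedLegendre (n + 1) (k + 1)
  have h2 := factorial_sq_mul_coeff_shiftedLegendre (n + 2) (k + 1)
  rw [show n + 2 + (k + 1) = n + 1 + k + 1 + 1 by ring, mul_add_one, Nat.succ_descFactorial_succ,
    Nat.succ_descFactorial_succ] at h2
  rw [show n + 1 + (k + 1) = n + 1 + k + 1 by ring, mul_add_one, Nat.succ_descFactorial_succ] at h1
  rw [show n + (k + 1) = n + 1 + k by ring, mul_add_one] at h0
  rw [Nat.factorial_succ] at h0 h1 h2 ⊢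
  push_cast [cast_descFactorial_succ] at h0 h1 h2 ⊢
  linear_combination (n + 2 : ℤ) * h2 + (n + 1) * h0 - (2 * n + 3) * h1
    + 2 * (2 * n + 3) * (k + 1) ^ 2 * hk

theorem shiftedLegendre_three_term (n : ℕ) :
    (n + 2 : ℤ[X]) * shiftedLegendre (n + 2) + (n + 1 : ℤ[X]) * shiftedLegendre n
      = (2 * n + 3 : ℤ[X]) * ((1 - 2 * X) * shiftedLegendre (n + 1)) := by
  suffices C (n + 2 : ℤ) * shiftedLegendre (n + 2) + C (n + 1 : ℤ) * shiftedLegendre n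
      = C (2 * n + 3 : ℤ) * (shiftedLegendre (n + 1) - X * (C 2 * shiftedLegendre (n + 1))) by
    simp only [map_add, map_mul, map_natCast, map_ofNat, map_one] at this
    linear_combination this
  ext (_ | k)
  · simp only [coeff_add, coeff_sub, coeff_C_mul, coeff_X_mul_zero, coeff_zero_shiftedLegendre]
    ring
  · simp only [coeff_add, coeff_sub, coeff_C_mul, coeff_X_mul]
    exact coeff_shiftedLegendre_three_term n k

theorem coeff_X_mul_derivative {R : Type*} [CommSemiring R] (P : R[X]) (k : ℕ) :
    (X * derivative P).coeff k = k * P.coeff k := by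
  rcases k with _ | k
  · simp
  · rw [coeff_X_mul, coeff_derivative, mul_comm, Nat.cast_add_one]

theorem coeff_derivative_X_sq_sub_X_mul {R : Type*} [CommRing R] (P : R[X]) (k : ℕ) :
    (derivative ((X ^ 2 - X) * P)).coeff k = (k + 1) * ((X * P).coeff k - P.coeff k) := by
  rw [coeff_derivative, show (X ^ 2 - X) * P = X * (X * P - P) by ring, coeff_X_mul, coeff_sub,
    mul_comm]

theorem shiftedLegendre_differential_eq (n : ℕ) :
    derivative ((X ^ 2 - X) * derivative (shiftedLegendre n))
      = C (n * (n + 1) : ℤ) * shiftedLegendre n := by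
  ext k
  rw [coeff_derivative_X_sq_sub_X_mul, coeff_X_mul_derivative, coeff_derivative, coeff_C_mul]
  linear_combination -coeff_succ_shiftedLegendre n k

theorem shiftedLegendre_zero : shiftedLegendre 0 = 1 := by simp [shiftedLegendre]

theorem shiftedLegendre_one : shiftedLegendre 1 = 1 - 2 * X := by
  simp only [shiftedLegendre, sum_range_succ, sum_range_zero]
  norm_num [sub_eq_add_neg]

end Legendre

section GeneratingFunction

open PowerSeries

local notation "P" => Polynomial.shiftedLegendre

theorem mk_shiftedLegendre_differential_eq :
    (1 - C (2 * (1 - 2 * Polynomial.X)) * X + X ^ 2) * d⁄dX _ (mk P)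
      = (C (1 - 2 * Polynomial.X) - X) * mk P := by
  set t : Polynomial ℤ := 1 - 2 * Polynomial.X with ht
  rw [show (1 - C (2 * t) * X + X ^ 2) * d⁄dX _ (mk P) = d⁄dX _ (mk P)
    - C (2 * t) * (X * d⁄dX _ (mk P)) + X * (X * d⁄dX _ (mk P)) by ring, sub_mul]
  ext n : 1
  rcases n with _ | _ | n
  · simp only [map_add, map_sub, coeff_C_mul, coeff_zero_X_mul, coeff_derivative, coeff_mk]
    simp [shiftedLegendre_zero, shiftedLegendre_one, ht]
  · have hrec := shiftedLegendre_three_term 0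
    simp only [map_add, map_sub, coeff_C_mul, coeff_succ_X_mul, coeff_zero_X_mul, coeff_derivative,
      coeff_mk]
    simp only [shiftedLegendre_zero, shiftedLegendre_one, zero_add, ← ht] at hrec ⊢
    push_cast at hrec ⊢
    linear_combination hrec
  · have hrec := shiftedLegendre_three_term (n + 1)
    simp only [map_add, map_sub, coeff_C_mul, coeff_succ_X_mul, coeff_derivative, coeff_mk]
    simp only [← ht] at hrec ⊢
    push_cast at hrec ⊢
    linear_combination hrec

theorem mk_shiftedLegendre_sq_mul :
    mk P ^ 2 * (1 - C (2 * (1 - 2 * Polynomial.X)) * X + X ^ 2) = 1 := by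
  apply derivative.ext
  · have hode := mk_shiftedLegendre_differential_eq
    simp only [Derivation.leibniz, Derivation.leibniz_pow, map_add, map_sub, derivative_one,
      derivative_C, derivative_X, smul_eq_mul, nsmul_eq_mul]
    push_cast
    have hC : C (2 * (1 - 2 * Polynomial.X : Polynomial ℤ)) = 2 * C (1 - 2 * Polynomial.X) := by
      rw [map_mul, map_ofNat]
    linear_combination 2 * mk P * hode - mk P ^ 2 * hC
  · simp [shiftedLegendre_zero]

theorem mk_aeval_shiftedLegendre_sq_mul {R : Type*} [CommRing R] (x : R) :
    (mk fun n ↦ Polynomial.aeval x (P n)) ^ 2 * (1 - C (2 * (1 - 2 * x)) * X + X ^ 2) = 1 := by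
  set φ : Polynomial ℤ →+* R := (Polynomial.aeval x : Polynomial ℤ →ₐ[ℤ] R).toRingHom with hφ
  have hφX : φ (2 * (1 - 2 * Polynomial.X)) = 2 * (1 - 2 * x) := by
    simp only [map_mul, map_sub, map_one, map_ofNat, hφ, AlgHom.toRingHom_eq_coe, RingHom.coe_coe,
      Polynomial.aeval_X]
  have h := congrArg (PowerSeries.map φ) mk_shiftedLegendre_sq_mul
  rwa [map_mul, map_pow, map_one, map_add, map_sub, map_mul, map_pow, PowerSeries.map_X,
    PowerSeries.map_C, hφX, map_one] at h

end GeneratingFunction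

section Clausen

open Polynomial

/-- The coefficients in Clausen's formula for the square of the `n`-th shifted Legendre polynomial
as a polynomial in `X ^ 2 - X`. -/
def clausenCoeff (n k : ℕ) : ℤ := (2 * k).choose k ^ 2 * (n + k).choose (2 * k)

theorem clausenCoeff_zero (n : ℕ) : clausenCoeff n 0 = 1 := by simp [clausenCoeff]

theorem clausenCoeff_eq_zero {n k : ℕ} (h : n < k) : clausenCoeff n k = 0 := by
  rw [clausenCoeff, Nat.choose_eq_zero_of_lt (show n + k < 2 * k by omega), Nat.cast_zero, mul_zero]

theorem clausenCoeff_eq_centralBinom_mul (n k : ℕ) :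
    clausenCoeff n k = (-1) ^ k * k.centralBinom * (shiftedLegendre n).coeff k := by
  have h : ((n + k).choose (2 * k) : ℤ) * k.centralBinom = n.choose k * (n + k).choose n :=
    mod_cast choose_two_mul_mul_centralBinom n k
  have hsign : ((-1) ^ k * (-1) ^ k : ℤ) = 1 := by rw [← mul_pow, neg_one_mul, neg_neg, one_pow]
  rw [clausenCoeff, coeff_shiftedLegendre, ← Nat.centralBinom]
  linear_combination (k.centralBinom : ℤ) * h
    - k.centralBinom * n.choose k * (n + k).choose n * hsign

theorem cast_succ_mul_centralBinom_succ (k : ℕ) :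
    (k + 1 : ℤ) * (k + 1).centralBinom = 2 * (2 * k + 1) * k.centralBinom :=
  mod_cast Nat.succ_mul_centralBinom_succ k

theorem clausenCoeff_succ (n k : ℕ) : (k + 1 : ℤ) ^ 3 * clausenCoeff n (k + 1)
    = 2 * (2 * k + 1) * (n * (n + 1) - k * (k + 1)) * clausenCoeff n k := by
  have hcoeff := coeff_succ_shiftedLegendre n k
  have hbinom := cast_succ_mul_centralBinom_succ k
  rw [clausenCoeff_eq_centralBinom_mul, clausenCoeff_eq_centralBinom_mul, pow_succ (-1 : ℤ)]
  linear_combination -((-1) ^ k * (k + 1) * (k + 1).centralBinom * hcoeff)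
    + (-1) ^ k * (n * (n + 1) - k * (k + 1)) * (shiftedLegendre n).coeff k * hbinom

/-- The generating polynomial of the coefficients `clausenCoeff n k`. -/
noncomputable def clausenPoly (n : ℕ) : ℤ[X] := ∑ k ∈ range (n + 1), monomial k (clausenCoeff n k)

theorem coeff_clausenPoly (n k : ℕ) : (clausenPoly n).coeff k = clausenCoeff n k := by
  simp only [clausenPoly, finsetSum_coeff, coeff_monomial, sum_ite_eq', mem_range]
  exact ite_eq_left_iff.2 fun h ↦ (clausenCoeff_eq_zero (by omega)).symm

theorem clausenPoly_differential_eq (n : ℕ) :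
    derivative (X * ((1 + 6 * X) * derivative (clausenPoly n)
        + X * (1 + 4 * X) * derivative (derivative (clausenPoly n))))
      = C (2 * (n * (n + 1)) : ℤ) * (clausenPoly n + 2 * (X * derivative (clausenPoly n))) := by
  set g := clausenPoly n
  have hg : (1 + 6 * X) * derivative g + X * (1 + 4 * X) * derivative (derivative g)
      = derivative g + X * derivative (derivative g)
        + C 2 * (X * derivative g) + C 4 * (X * derivative (X * derivative g)) := by
    simp only [derivative_mul, derivative_X, map_ofNat]
    ring
  rw [hg]
  ext k
  rw [coeff_derivative, coeff_X_mul, show (2 : ℤ[X]) = C 2 from rfl]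
  simp only [coeff_add, coeff_C_mul, coeff_X_mul_derivative, coeff_derivative, g, coeff_clausenPoly]
  linear_combination clausenCoeff_succ n k

/-- The square of a solution `y` of `(u y')' = l y`, where `u = X ^ 2 - X`, is annihilated by this
third-order operator. -/
noncomputable def symSquareLegendreOp (l : ℤ) (Y : ℤ[X]) : ℤ[X] :=
  derivative ((X ^ 2 - X) * derivative ((X ^ 2 - X) * derivative Y))
    - C (2 * l) * ((2 * X - 1) * Y + 2 * ((X ^ 2 - X) * derivative Y))

theorem symSquareLegendreOp_sub (l : ℤ) (Y Z : ℤ[X]) :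
    symSquareLegendreOp l (Y - Z) = symSquareLegendreOp l Y - symSquareLegendreOp l Z := by
  simp only [symSquareLegendreOp, derivative_sub, mul_sub]
  ring

theorem eq_zero_of_symSquareLegendreOp_eq_zero {l : ℤ} {Y : ℤ[X]}
    (h : symSquareLegendreOp l Y = 0) (h0 : Y.coeff 0 = 0) : Y = 0 := by
  suffices ∀ k, ∀ j ≤ k, Y.coeff j = 0 by
    ext k
    exact this k k le_rfl
  have hop (k : ℕ) : (derivative ((X ^ 2 - X) * derivative Y)).coeff k
      = (k + 1) * (k * Y.coeff k - (k + 1) * Y.coeff (k + 1)) := by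
    rw [coeff_derivative_X_sq_sub_X_mul, coeff_X_mul_derivative, coeff_derivative]
    ring
  intro k
  induction k with
  | zero =>
    intro j hj
    rwa [Nat.le_zero.1 hj]
  | succ k ih =>
    have hX {Z : ℤ[X]} (hZ : ∀ j < k, Z.coeff j = 0) : (X * Z).coeff k = 0 := by
      rcases k with _ | k
      · exact coeff_X_mul_zero Z
      · rw [coeff_X_mul, hZ k k.lt_succ_self]
    have hcoeff := congrArg (coeff · k) h
    simp only [symSquareLegendreOp] at hcoeff
    rw [coeff_sub, coeff_derivative_X_sq_sub_X_mul, hop, hX, coeff_C_mul,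
      show (2 * X - 1) * Y + 2 * ((X ^ 2 - X) * derivative Y)
        = C 2 * (X * (Y + X * derivative Y)) - Y - C 2 * (X * derivative Y) by
          rw [show (C 2 : ℤ[X]) = 2 from rfl]; ring,
      coeff_sub, coeff_sub, coeff_C_mul, coeff_C_mul, coeff_X_mul_derivative, hX, ih k le_rfl,
      coeff_zero] at hcoeff
    · have hk : (k + 1 : ℤ) ^ 3 ≠ 0 := by positivity
      intro j hj
      rcases Nat.le_succ_iff.1 hj with hj | rfl
      · exact ih j hj
      · exact (mul_eq_zero.1 (show (k + 1 : ℤ) ^ 3 * Y.coeff (k + 1) = 0 by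
          linear_combination hcoeff)).resolve_left hk
    · intro j hj
      rw [coeff_add, coeff_X_mul_derivative, ih j hj.le, mul_zero, add_zero]
    · intro j hj
      rw [hop, ih j hj.le, ih (j + 1) hj]
      ring

theorem symSquareLegendreOp_shiftedLegendre_sq (n : ℕ) :
    symSquareLegendreOp (n * (n + 1)) (shiftedLegendre n ^ 2) = 0 := by
  have hode := shiftedLegendre_differential_eq n
  set P := shiftedLegendre n
  set l : ℤ := n * (n + 1)
  have hfirst : derivative ((X ^ 2 - X) * derivative (P ^ 2))
      = 2 * ((X ^ 2 - X) * derivative P ^ 2 + C l * P ^ 2) := by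
    rw [show (X ^ 2 - X) * derivative (P ^ 2) = 2 * (P * ((X ^ 2 - X) * derivative P)) by
      rw [derivative_sq, map_ofNat]; ring]
    simp only [derivative_mul, derivative_ofNat] at hode ⊢
    linear_combination 2 * P * hode
  rw [symSquareLegendreOp, hfirst]
  simp only [derivative_mul, derivative_add, derivative_sub, derivative_pow, derivative_C,
    derivative_ofNat, derivative_X, map_mul, map_ofNat, Nat.cast_ofNat] at hode ⊢
  linear_combination 4 * (X ^ 2 - X) * derivative P * hode

theorem symSquareLegendreOp_clausenPoly_comp (n : ℕ) :
    symSquareLegendreOp (n * (n + 1)) ((clausenPoly n).comp (X ^ 2 - X)) = 0 := by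
  have hode := clausenPoly_differential_eq n
  set g := clausenPoly n
  set H := (1 + 6 * X) * derivative g + X * (1 + 4 * X) * derivative (derivative g)
  have hderiv : derivative (X ^ 2 - X : ℤ[X]) = 2 * X - 1 := by simp
  have hfirst :
      derivative ((X ^ 2 - X) * derivative (g.comp (X ^ 2 - X))) = H.comp (X ^ 2 - X) := by
    simp only [H, derivative_comp, derivative_mul, hderiv, add_comp, mul_comp, X_comp, one_comp,
      ofNat_comp]
    simp only [derivative_sub, derivative_mul, derivative_X, derivative_one, derivative_ofNat]
    ring
  have hsecond : derivative ((X ^ 2 - X) * H.comp (X ^ 2 - X))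
      = (2 * X - 1) * (derivative (X * H)).comp (X ^ 2 - X) := by
    rw [← hderiv, ← derivative_comp, mul_comp, X_comp]
  rw [symSquareLegendreOp, hfirst, hsecond, hode, derivative_comp, hderiv]
  simp only [mul_comp, add_comp, C_comp, X_comp, ofNat_comp]
  ring

theorem shiftedLegendre_sq (n : ℕ) :
    shiftedLegendre n ^ 2 = (clausenPoly n).comp (X ^ 2 - X) := by
  refine sub_eq_zero.1 (eq_zero_of_symSquareLegendreOp_eq_zero (l := n * (n + 1)) ?_ ?_)
  · rw [symSquareLegendreOp_sub, symSquareLegendreOp_shiftedLegendre_sq,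
      symSquareLegendreOp_clausenPoly_comp, sub_zero]
  · simp only [coeff_zero_eq_eval_zero, eval_sub, eval_pow, eval_comp, eval_X]
    norm_num [← coeff_zero_eq_eval_zero, coeff_zero_shiftedLegendre, coeff_clausenPoly,
      clausenCoeff_zero]

theorem aeval_shiftedLegendre_sq {R : Type*} [CommRing R] {z : R} {w : ℤ} (hz : z ^ 2 - z = w)
    (n : ℕ) :
    aeval z (shiftedLegendre n) ^ 2
      = ((∑ k ∈ range (n + 1), clausenCoeff n k * w ^ k : ℤ) : R) := by
  rw [← map_pow, shiftedLegendre_sq, aeval_comp]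
  simp [clausenPoly, aeval_monomial, hz]

end Clausen

section BinomialCongruence

theorem mul_choose_add_succ (n k : ℕ) :
    (2 * k + 1 : ℤ) * (2 * k + 2) * (n + (k + 1)).choose (2 * (k + 1))
      = (n + k + 1) * (n - k) * (n + k).choose (2 * k) := by
  have hfact : ((2 * k).factorial : ℤ) ≠ 0 := by positivity
  apply mul_left_cancel₀ hfact
  have hk := Nat.descFactorial_eq_factorial_mul_choose (n + k) (2 * k)
  have hsucc := Nat.descFactorial_eq_factorial_mul_choose (n + k + 1) (2 * k + 1 + 1)
  rw [Nat.succ_descFactorial_succ, Nat.factorial_succ, Nat.factorial_succ] at hsucc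
  zify at hk hsucc
  rw [cast_descFactorial_succ, hk] at hsucc
  push_cast at hsucc
  rw [mul_add_one, ← add_assoc]
  linear_combination -hsucc

theorem sq_dvd_choose_mul_sub {p h : ℕ} (hp : p.Prime) (hph : p = 2 * h + 1) {k : ℕ} (hk : k ≤ h) :
    (p : ℤ) ^ 2 ∣ (h + k).choose (2 * k) * (-16) ^ k - k.centralBinom := by
  induction k with
  | zero => simp
  | succ k ih =>
    have hcop : IsCoprime ((p : ℤ) ^ 2) ((2 * k + 1) * (2 * k + 2)) := by
      have : Nat.Coprime (p ^ 2) ((2 * k + 1) * (2 * k + 2)) :=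
        .pow_left 2 (.mul_right (Nat.coprime_of_lt_prime (by omega) (by omega) hp)
          (Nat.coprime_of_lt_prime (by omega) (by omega) hp))
      exact_mod_cast this.isCoprime
    apply hcop.dvd_of_dvd_mul_left
    obtain ⟨c, hc⟩ := ih (by omega)
    have hchoose := mul_choose_add_succ h k
    have hbinom := cast_succ_mul_centralBinom_succ k
    have hcast : (p : ℤ) = 2 * h + 1 := mod_cast hph
    refine ⟨4 * (2 * k + 1) ^ 2 * c - 4 * (h + k).choose (2 * k) * (-16) ^ k, ?_⟩
    rw [pow_succ]
    linear_combination (-16) ^ k * (-16) * hchoose - 2 * (2 * k + 1) * hbinom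
      + 4 * (2 * k + 1) ^ 2 * hc
      + 4 * (h + k).choose (2 * k) * (-16) ^ k * (p + 2 * h + 1) * hcast

theorem sq_dvd_sum_clausenCoeff_sub {p h : ℕ} (hp : p.Prime) (hph : p = 2 * h + 1) :
    (p : ℤ) ^ 2 ∣ ∑ k ∈ range (h + 1), clausenCoeff h k * (-16) ^ k
      - ∑ k ∈ range (h + 1), ((2 * k).choose k : ℤ) ^ 3 := by
  rw [← sum_sub_distrib]
  refine dvd_sum fun k hk ↦ ?_
  obtain ⟨c, hc⟩ := sq_dvd_choose_mul_sub hp hph (mem_range_succ_iff.1 hk)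
  rw [Nat.centralBinom] at hc
  rw [clausenCoeff]
  exact ⟨((2 * k).choose k : ℤ) ^ 2 * c, by linear_combination ((2 * k).choose k : ℤ) ^ 2 * hc⟩

end BinomialCongruence

section IsMultiplication

open Polynomial

variable {R : Type*} [CommRing R]

/-- The numerator of the derivative of `s ↦ s * n (s ^ 2) / d (s ^ 2)`, as a polynomial in
`X = s ^ 2`. -/
noncomputable def twistedWronskian (n d : R[X]) : R[X] :=
  n * d + 2 * X * (derivative n * d - n * derivative d)

/-- The map `s ↦ s * n (s ^ 2) / d (s ^ 2)` pulls the differential `ds / w` of the curve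
`w ^ 2 = 1 - 2 t s ^ 2 + s ^ 4` back to `± μ ds / w`. This is expressed as a polynomial identity in
`X = s ^ 2` with the denominators cleared. -/
def IsMultiplication (t μ : R) (n d : R[X]) : Prop :=
  twistedWronskian n d ^ 2 * (1 - C (2 * t) * X + X ^ 2)
    = C μ ^ 2 * (d ^ 4 - C (2 * t) * X * n ^ 2 * d ^ 2 + X ^ 2 * n ^ 4)

theorem map_twistedWronskian {S : Type*} [CommRing S] (φ : R →+* S) (n d : R[X]) :
    (twistedWronskian n d).map φ = twistedWronskian (n.map φ) (d.map φ) := by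
  simp [twistedWronskian, derivative_map]

theorem IsMultiplication.map {S : Type*} [CommRing S] (φ : R →+* S) {t μ : R}
    {n d : R[X]} (h : IsMultiplication t μ n d) :
    IsMultiplication (φ t) (φ μ) (n.map φ) (d.map φ) := by
  have hmap := congrArg (Polynomial.map φ) h
  simpa only [IsMultiplication, Polynomial.map_mul, Polynomial.map_pow, Polynomial.map_add,
    Polynomial.map_sub, Polynomial.map_one, Polynomial.map_X, map_C, map_twistedWronskian,
    map_mul φ, map_ofNat φ] using hmap

theorem isMultiplication_map {S : Type*} [CommRing S] {φ : R →+* S} (hφ : Function.Injective φ)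
    {t μ : R} {n d : R[X]} :
    IsMultiplication (φ t) (φ μ) (n.map φ) (d.map φ) ↔ IsMultiplication t μ n d := by
  rw [IsMultiplication, IsMultiplication, ← (map_injective φ hφ).eq_iff]
  simp only [Polynomial.map_mul, Polynomial.map_pow, Polynomial.map_add, Polynomial.map_sub,
    Polynomial.map_one, Polynomial.map_X, map_C, map_twistedWronskian, map_mul φ, map_ofNat φ]

theorem twistedWronskian_C_mul (c : R) (n d : R[X]) :
    twistedWronskian (C c * n) (C c * d) = C c ^ 2 * twistedWronskian n d := by
  simp only [twistedWronskian, derivative_C_mul]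
  ring

theorem isMultiplication_C_mul [IsDomain R] {t μ c : R} (hc : c ≠ 0) {n d : R[X]} :
    IsMultiplication t μ (C c * n) (C c * d) ↔ IsMultiplication t μ n d := by
  have hC : (C c : R[X]) ^ 4 ≠ 0 := pow_ne_zero 4 (C_ne_zero.2 hc)
  rw [IsMultiplication, IsMultiplication, twistedWronskian_C_mul]
  refine ⟨fun h ↦ mul_left_cancel₀ hC ?_, fun h ↦ ?_⟩
  · linear_combination h
  · linear_combination C c ^ 4 * h

theorem isMultiplication_neg_left {t μ : R} {n d : R[X]} :
    IsMultiplication t μ (-n) d ↔ IsMultiplication t μ n d := by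
  have hneg : twistedWronskian (-n) d = -twistedWronskian n d := by
    rw [twistedWronskian, twistedWronskian, derivative_neg]
    ring
  rw [IsMultiplication, IsMultiplication, hneg, neg_sq, neg_sq, neg_pow n 4]
  norm_num

end IsMultiplication

section PowerSeriesQuotient

open PowerSeries

variable {R : Type*} [CommRing R]

theorem coe_twistedWronskian {n d : Polynomial R} {ρ : R⟦X⟧} (hρ : d * ρ = n) :
    (twistedWronskian n d : R⟦X⟧) = (d : R⟦X⟧) ^ 2 * (ρ + 2 * (X * d⁄dX R ρ)) := by
  have hderiv : (d : R⟦X⟧) * d⁄dX R ρ + ρ * (Polynomial.derivative d : R⟦X⟧)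
      = Polynomial.derivative n := by
    rw [← derivative_coe, ← derivative_coe, ← hρ, Derivation.leibniz, smul_eq_mul, smul_eq_mul]
  have h2 : ((2 : Polynomial R) : R⟦X⟧) = 2 := map_ofNat Polynomial.coeToPowerSeries.ringHom 2
  rw [twistedWronskian]
  push_cast
  rw [h2]
  linear_combination (2 * X * (Polynomial.derivative d : R⟦X⟧) - d) * hρ
    - 2 * X * d * hderiv

theorem IsMultiplication.powerSeries_eq [IsDomain R] {t μ : R} {n d : Polynomial R}
    (h : IsMultiplication t μ n d) (hd : d ≠ 0) {ρ : R⟦X⟧} (hρ : d * ρ = n) :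
    (ρ + 2 * (X * d⁄dX R ρ)) ^ 2 * (1 - C (2 * t) * X + X ^ 2)
      = C (μ ^ 2) * (1 - C (2 * t) * (X * ρ ^ 2) + (X * ρ ^ 2) ^ 2) := by
  have hcoe := congrArg (fun q : Polynomial R ↦ (q : R⟦X⟧)) h
  push_cast at hcoe
  rw [coe_twistedWronskian hρ, ← hρ] at hcoe
  have hd4 : (d : R⟦X⟧) ^ 4 ≠ 0 := pow_ne_zero 4 (by exact_mod_cast hd)
  apply mul_left_cancel₀ hd4
  rw [map_pow]
  linear_combination hcoe

theorem IsMultiplication.constantCoeff_sq [IsDomain R] {t μ : R} {n d : Polynomial R}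
    (h : IsMultiplication t μ n d) (hd : d ≠ 0) {ρ : R⟦X⟧} (hρ : d * ρ = n) :
    constantCoeff ρ ^ 2 = μ ^ 2 := by
  simpa using congrArg constantCoeff (h.powerSeries_eq hd hρ)

theorem subst_eq_sum_add {y : R⟦X⟧} (hy : constantCoeff y = 0) (G : R⟦X⟧) (m : ℕ) :
    G.subst y = ∑ k ∈ range m, C (coeff k G) * y ^ k
      + y ^ m * (mk fun i ↦ coeff (i + m) G).subst y := by
  have hsubst := HasSubst.of_constantCoeff_zero' hy
  have htrunc : Polynomial.aeval y (trunc m G) = ∑ k ∈ range m, C (coeff k G) * y ^ k := by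
    rcases m with _ | m
    · simp
    · rw [Polynomial.aeval_eq_sum_range' (natDegree_trunc_lt G m)]
      refine sum_congr rfl fun k hk ↦ ?_
      rw [coeff_trunc, if_pos (mem_range.1 hk), smul_eq_C_mul]
  conv_lhs => rw [eq_X_pow_mul_shift_add_trunc m G]
  rw [subst_add hsubst, subst_mul hsubst, subst_pow hsubst, subst_X hsubst, subst_coe hsubst,
    htrunc, add_comm]

theorem constantCoeff_subst_of_constantCoeff_eq_zero {y : R⟦X⟧} (hy : constantCoeff y = 0)
    (G : R⟦X⟧) : constantCoeff (G.subst y : R⟦X⟧) = constantCoeff G := by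
  rw [subst_eq_sum_add hy G 1]
  simp [hy]

theorem subst_mul_add_derivative_eq [IsDomain R] (h2 : (2 : R) ≠ 0) {t : R} {G ρ : R⟦X⟧}
    (hG : G ^ 2 * (1 - C (2 * t) * X + X ^ 2) = 1) (hG0 : constantCoeff G = 1)
    (hρ : (ρ + 2 * (X * d⁄dX R ρ)) ^ 2 * (1 - C (2 * t) * X + X ^ 2)
      = C (constantCoeff ρ ^ 2) * (1 - C (2 * t) * (X * ρ ^ 2) + (X * ρ ^ 2) ^ 2)) :
    G.subst (X * ρ ^ 2) * (ρ + 2 * (X * d⁄dX R ρ)) = C (constantCoeff ρ) * G := by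
  have hy : constantCoeff (X * ρ ^ 2) = 0 := by simp
  have hsubst := HasSubst.of_constantCoeff_zero' hy
  set A := G.subst (X * ρ ^ 2)
  set Ψ := ρ + 2 * (X * d⁄dX R ρ) with hΨ
  have hA : A ^ 2 * (1 - C (2 * t) * (X * ρ ^ 2) + (X * ρ ^ 2) ^ 2) = 1 := by
    have h := congrArg (substAlgHom (S := R) hsubst) hG
    have hC (a : R) : (C a).subst (X * ρ ^ 2) = (C a : R⟦X⟧) := subst_C a
    rwa [map_mul, map_pow, map_add, map_sub, map_mul, map_pow, map_one, coe_substAlgHom,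
      subst_X hsubst, hC] at h
  have hsq : (A * Ψ) ^ 2 = (C (constantCoeff ρ) * G) ^ 2 := by
    rw [map_pow] at hρ
    linear_combination -(A * Ψ) ^ 2 * hG + A ^ 2 * G ^ 2 * hρ
      + G ^ 2 * C (constantCoeff ρ) ^ 2 * hA
  have hA0 : constantCoeff A = 1 := by
    rw [constantCoeff_subst_of_constantCoeff_eq_zero hy, hG0]
  rcases sq_eq_sq_iff_eq_or_eq_neg.1 hsq with heq | hneg
  · exact heq
  · have hΨ0 : constantCoeff Ψ = constantCoeff ρ := by simp [Ψ]
    have hneg0 := congrArg constantCoeff hneg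
    rw [map_neg, map_mul, map_mul, hA0, hΨ0, constantCoeff_C, hG0] at hneg0
    have hρ0 : constantCoeff ρ = 0 :=
      (mul_eq_zero.1 (show 2 * constantCoeff ρ = 0 by linear_combination hneg0)).resolve_left h2
    rw [hneg, hρ0, map_zero, zero_mul, neg_zero]

theorem coeff_pow_mul_add_derivative (ρ : R⟦X⟧) (k j : ℕ) :
    (2 * k + 1) * coeff j (ρ ^ (2 * k) * (ρ + 2 * (X * d⁄dX R ρ)))
      = (2 * (k + j) + 1) * coeff j (ρ ^ (2 * k + 1)) := by
  have hX (φ : R⟦X⟧) : coeff j (X * d⁄dX R φ) = j * coeff j φ := by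
    rcases j with _ | j
    · simp
    · rw [coeff_succ_X_mul, coeff_derivative, Nat.cast_add_one, mul_comm]
  have hderiv : C (2 * k + 1 : R) * (ρ ^ (2 * k) * (ρ + 2 * (X * d⁄dX R ρ)))
      = C (2 * k + 1 : R) * ρ ^ (2 * k + 1) + C 2 * (X * d⁄dX R (ρ ^ (2 * k + 1))) := by
    rw [derivative_pow]
    simp only [map_add, map_mul, map_ofNat, map_natCast, map_one, Nat.add_sub_cancel]
    push_cast
    ring
  rw [← coeff_C_mul, hderiv, map_add, coeff_C_mul, coeff_C_mul, hX]
  ring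

theorem coeff_X_mul_sq_pow_mul_eq_zero [IsDomain R] {h : ℕ} [CharP R (2 * h + 1)] (ρ : R⟦X⟧)
    {k : ℕ} (hk : k < h) :
    coeff h ((X * ρ ^ 2) ^ k * (ρ + 2 * (X * d⁄dX R ρ))) = 0 := by
  have hcoeff := coeff_pow_mul_add_derivative ρ k (h - k)
  have hchar : (2 * h + 1 : R) = 0 := by
    have := CharP.cast_eq_zero R (2 * h + 1)
    push_cast at this
    exact this
  have hk1 : (2 * k + 1 : R) ≠ 0 := by
    have : ((2 * k + 1 : ℕ) : R) ≠ 0 := by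
      rw [Ne, CharP.cast_eq_zero_iff R (2 * h + 1)]
      exact Nat.not_dvd_of_pos_of_lt (by omega) (by omega)
    exact_mod_cast this
  rw [← Nat.cast_add, Nat.add_sub_cancel' hk.le, hchar, zero_mul] at hcoeff
  obtain ⟨j, rfl⟩ := Nat.exists_eq_add_of_le' hk.le
  rw [mul_pow, ← pow_mul, mul_assoc, coeff_X_pow_mul]
  rw [Nat.add_sub_cancel] at hcoeff
  exact (mul_eq_zero.1 hcoeff).resolve_left hk1

theorem coeff_subst_mul_add_derivative [IsDomain R] {h : ℕ} [CharP R (2 * h + 1)] (G ρ : R⟦X⟧) :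
    coeff h (G.subst (X * ρ ^ 2) * (ρ + 2 * (X * d⁄dX R ρ)))
      = coeff h G * constantCoeff ρ ^ (2 * h + 1) := by
  have hy : constantCoeff (X * ρ ^ 2) = 0 := by simp
  have hρ0 : constantCoeff (ρ + 2 * (X * d⁄dX R ρ)) = constantCoeff ρ := by simp
  rw [subst_eq_sum_add hy G h, add_mul, sum_mul, map_add, map_sum, sum_eq_zero, zero_add]
  · rw [mul_pow, ← pow_mul, mul_assoc, mul_assoc, ← coeff_zero_eq_constantCoeff_apply]
    have := coeff_X_pow_mul (ρ ^ (2 * h) * ((mk fun i ↦ coeff (i + h) G).subst (X * ρ ^ 2)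
      * (ρ + 2 * (X * d⁄dX R ρ)))) h 0
    rw [zero_add] at this
    rw [this, coeff_zero_eq_constantCoeff_apply, map_mul, map_mul, map_pow, hρ0,
      constantCoeff_subst_of_constantCoeff_eq_zero hy, pow_succ,
      ← coeff_zero_eq_constantCoeff_apply, ← coeff_zero_eq_constantCoeff_apply, coeff_mk, zero_add]
    ring
  · intro k hk
    rw [mul_assoc, coeff_C_mul, coeff_X_mul_sq_pow_mul_eq_zero ρ (mem_range.1 hk), mul_zero]

theorem IsMultiplication.pow_char_mul_coeff_eq {K : Type*} [Field K] {h : ℕ} [CharP K (2 * h + 1)]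
    {t μ : K} {n d : Polynomial K} (hnd : IsMultiplication t μ n d) (hd : d.coeff 0 ≠ 0)
    (hμ : n.coeff 0 = μ * d.coeff 0) {G : K⟦X⟧} (hG : G ^ 2 * (1 - C (2 * t) * X + X ^ 2) = 1)
    (hG0 : constantCoeff G = 1) :
    μ ^ (2 * h + 1) * coeff h G = μ * coeff h G := by
  have h2 : (2 : K) ≠ 0 := by
    intro h2
    have hchar := CharP.cast_eq_zero K (2 * h + 1)
    push_cast at hchar
    exact one_ne_zero (α := K) (by linear_combination hchar - h * h2)
  have hd0 : constantCoeff (d : K⟦X⟧) ≠ 0 := by rwa [Polynomial.constantCoeff_coe]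
  set ρ : K⟦X⟧ := (d : K⟦X⟧)⁻¹ * n with hρdef
  have hρ : d * ρ = n := by rw [hρdef, ← mul_assoc, PowerSeries.mul_inv_cancel _ hd0, one_mul]
  have hρ0 : constantCoeff ρ = μ := by
    rw [hρdef, map_mul, constantCoeff_inv, Polynomial.constantCoeff_coe,
      Polynomial.constantCoeff_coe, hμ, mul_comm μ, inv_mul_cancel_left₀ hd]
  have hident := hnd.powerSeries_eq (fun h0 ↦ hd (by rw [h0, Polynomial.coeff_zero])) hρ
  rw [← hρ0] at hident
  have heq := congrArg (coeff h) (subst_mul_add_derivative_eq h2 hG hG0 hident)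
  rw [coeff_subst_mul_add_derivative, coeff_C_mul, hρ0] at heq
  rw [mul_comm, heq]

end PowerSeriesQuotient

section Delta

open Polynomial

variable {R : Type*} [CommRing R]

/-- The numerator of multiplication by `δ = √-7` on the curve with `t = 3 * δ`. -/
noncomputable def deltaNum (δ : R) : R[X] :=
  C δ - 21 * X - 5 * C δ * X ^ 2 + X ^ 3

/-- The denominator of multiplication by `δ = √-7` on the curve with `t = 3 * δ`. -/
noncomputable def deltaDen (δ : R) : R[X] :=
  1 - 5 * C δ * X - 21 * X ^ 2 + C δ * X ^ 3

theorem coeff_zero_deltaNum (δ : R) : (deltaNum δ).coeff 0 = δ := by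
  simp [deltaNum, coeff_zero_eq_eval_zero]

theorem coeff_zero_deltaDen (δ : R) : (deltaDen δ).coeff 0 = 1 := by
  simp [deltaDen, coeff_zero_eq_eval_zero]

theorem twistedWronskian_delta {δ : R} (hδ : δ ^ 2 = -7) :
    twistedWronskian (deltaNum δ) (deltaDen δ)
      = C δ - 98 * X + 143 * C δ * X ^ 2 - 924 * X ^ 3 + 143 * C δ * X ^ 4 - 98 * X ^ 5
        + C δ * X ^ 6 := by
  have hC : (C δ : R[X]) ^ 2 = -7 := by rw [← C_pow, hδ, map_neg, map_ofNat]
  simp only [twistedWronskian, deltaNum, deltaDen, derivative_add, derivative_sub, derivative_mul,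
    derivative_C, derivative_X, derivative_X_pow, derivative_ofNat, derivative_one, C_ofNat,
    Nat.cast_ofNat]
  linear_combination (5 * X + 70 * X ^ 3 + 5 * X ^ 5) * hC

theorem isMultiplication_delta {δ : R} (hδ : δ ^ 2 = -7) :
    IsMultiplication (3 * δ) δ (deltaNum δ) (deltaDen δ) := by
  have hC : (C δ : R[X]) ^ 2 = -7 := by rw [← C_pow, hδ, map_neg, map_ofNat]
  have hnum : deltaNum δ ^ 2 = -7 - 42 * C δ * X + 511 * X ^ 2 + 212 * C δ * X ^ 3 - 217 * X ^ 4
      - 10 * C δ * X ^ 5 + X ^ 6 := by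
    rw [deltaNum]
    linear_combination (1 - 10 * X ^ 2 + 25 * X ^ 4) * hC
  have hden : deltaDen δ ^ 2 = 1 - 10 * C δ * X - 217 * X ^ 2 + 212 * C δ * X ^ 3 + 511 * X ^ 4
      - 42 * C δ * X ^ 5 - 7 * X ^ 6 := by
    rw [deltaDen]
    linear_combination (25 * X ^ 2 - 10 * X ^ 4 + X ^ 6) * hC
  have hpow (q : R[X]) : q ^ 4 = (q ^ 2) ^ 2 := by ring
  rw [IsMultiplication, twistedWronskian_delta hδ, hpow (deltaNum δ), hpow (deltaDen δ), hnum, hden,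
    C_mul, C_mul, C_ofNat, C_ofNat]
  set D : R[X] := C δ
  linear_combination (-28 * D * X + (1372 + 68 * D ^ 2) * X ^ 2
    + (-12528 * D + 2520 * D ^ 3) * X ^ 3 + (27244 + 18868 * D ^ 2) * X ^ 4
    + (-201284 * D - 66144 * D ^ 3) * X ^ 5 + (150584 + 231944 * D ^ 2) * X ^ 6
    + (-831840 * D + 280848 * D ^ 3) * X ^ 7 + (150584 + 231944 * D ^ 2) * X ^ 8
    + (-201284 * D - 66144 * D ^ 3) * X ^ 9 + (27244 + 18868 * D ^ 2) * X ^ 10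
    + (-12528 * D + 2520 * D ^ 3) * X ^ 11 + (1372 + 68 * D ^ 2) * X ^ 12 - 28 * D * X ^ 13) * hC

theorem aeval_shiftedLegendre_eq_zero {K : Type*} [Field K] {h : ℕ} [CharP K (2 * h + 1)] {δ z : K}
    (hδ : δ ^ 2 = -7) (hδ0 : δ ≠ 0) (hδp : δ ^ (2 * h + 1) = -δ) (hz : 1 - 2 * z = 3 * δ) :
    aeval z (shiftedLegendre h) = 0 := by
  have hG := mk_aeval_shiftedLegendre_sq_mul z
  rw [hz] at hG
  have hmul := (isMultiplication_delta hδ).pow_char_mul_coeff_eq (h := h)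
    (by simp [coeff_zero_deltaDen]) (by rw [coeff_zero_deltaNum, coeff_zero_deltaDen, mul_one]) hG
    (by simp [shiftedLegendre_zero])
  rw [hδp, PowerSeries.coeff_mk] at hmul
  have hδδ : δ * aeval z (shiftedLegendre h) = 0 := by
    have hchar := CharP.cast_eq_zero K (2 * h + 1)
    push_cast at hchar
    linear_combination δ * aeval z (shiftedLegendre h) * hchar + h * hmul
  exact (mul_eq_zero.1 hδδ).resolve_left hδ0

end Delta

section Inert

open Polynomial QuadraticAlgebra

theorem legendreSym_neg_seven {p : ℕ} [Fact p.Prime] (h2 : p ≠ 2)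
    (h7 : p % 7 = 3 ∨ p % 7 = 5 ∨ p % 7 = 6) : legendreSym p (-7) = -1 := by
  have : Fact (Nat.Prime 7) := ⟨by norm_num⟩
  have hneg_one : legendreSym p (-1) = (-1) ^ (p / 2) := by
    rw [legendreSym.at_neg_one h2]
    exact ZMod.χ₄_eq_neg_one_pow ((Fact.out : p.Prime).eq_two_or_odd.resolve_left h2)
  have hrec := legendreSym.quadratic_reciprocity' (p := 7) (q := p) (by norm_num) h2
  have hmod : legendreSym 7 p = -1 := by
    have h3 : @legendreSym 7 ⟨by norm_num⟩ 3 = -1 := by decide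
    have h5 : @legendreSym 7 ⟨by norm_num⟩ 5 = -1 := by decide
    have h6 : @legendreSym 7 ⟨by norm_num⟩ 6 = -1 := by decide
    rw [legendreSym.mod, ← Int.natCast_mod]
    rcases h7 with h | h | h <;> rw [h]
    exacts [h3, h5, h6]
  rw [show (-7 : ℤ) = (-1) * (7 : ℕ) by norm_num, legendreSym.mul, hneg_one, hrec, hmod,
    ← mul_assoc, ← pow_add, show p / 2 + 7 / 2 * (p / 2) = 2 * (2 * (p / 2)) by omega, pow_mul]
  norm_num

theorem sq_dvd_of_aeval_omega_eq_zero {m : ℕ} {a b c : ℤ} {f : ℤ[X]}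
    (hf : aeval (ω : QuadraticAlgebra (ZMod m) a b) f = 0)
    (hc : aeval (ω : QuadraticAlgebra ℤ a b) f ^ 2 = c) : (m : ℤ) ^ 2 ∣ c := by
  let φ : QuadraticAlgebra ℤ a b →ₐ[ℤ] QuadraticAlgebra (ZMod m) (a : ZMod m) (b : ZMod m) :=
    lift ⟨ω, by ext <;> simp [omega]⟩
  set q := aeval (ω : QuadraticAlgebra ℤ a b) f with hq
  have hφω : φ ω = ω := by ext <;> simp [φ, lift, omega]
  have hφ (x : QuadraticAlgebra ℤ a b) : φ x = ⟨x.re, x.im⟩ := by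
    ext <;> simp [φ, lift, omega]
  have hφq : φ q = 0 := by rw [hq, ← aeval_algHom_apply, hφω, hf]
  rw [hφ, QuadraticAlgebra.ext_iff] at hφq
  obtain ⟨u, hu⟩ := (ZMod.intCast_zmod_eq_zero_iff_dvd q.re m).1 hφq.1
  obtain ⟨v, hv⟩ := (ZMod.intCast_zmod_eq_zero_iff_dvd q.im m).1 hφq.2
  have hre := congrArg QuadraticAlgebra.re hc
  rw [sq, re_mul, hu, hv, re_intCast, Int.cast_id] at hre
  exact ⟨u ^ 2 + a * v ^ 2, by rw [← hre]; ring⟩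

theorem pow_eq_neg_of_sq_eq_neg_seven {K : Type*} [Field K] {p h : ℕ} [CharP K p] (hp : p.Prime)
    (hph : p = 2 * h + 1) (h7 : p % 7 = 3 ∨ p % 7 = 5 ∨ p % 7 = 6) {δ : K} (hδ : δ ^ 2 = -7) :
    δ ^ (2 * h + 1) = -δ := by
  have : Fact p.Prime := ⟨hp⟩
  have heuler := legendreSym.eq_pow p (-7)
  rw [legendreSym_neg_seven (by omega) h7, show p / 2 = h by omega] at heuler
  have hcast := congrArg (ZMod.castHom (dvd_refl p) K) heuler
  simp only [Int.cast_neg, Int.cast_one, Int.cast_ofNat, map_neg, map_one, map_pow,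
    map_ofNat] at hcast
  rw [pow_succ, pow_mul, hδ, ← hcast, neg_one_mul]

theorem sq_ne_neg_sixteen_add {p : ℕ} [Fact p.Prime] (h2 : p ≠ 2) (h3 : p ≠ 3)
    (h7 : p % 7 = 3 ∨ p % 7 = 5 ∨ p % 7 = 6) (r : ZMod p) :
    r ^ 2 ≠ ((-16 : ℤ) : ZMod p) + ((1 : ℤ) : ZMod p) * r := by
  intro hr
  have hp3 : (3 : ZMod p) ≠ 0 :=
    mod_cast CharP.cast_ne_zero_of_ne_of_prime (ZMod p) Nat.prime_three h3
  have hsym := legendreSym.eq_neg_one_iff p (a := -7) |>.1 (legendreSym_neg_seven h2 h7)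
  refine hsym ⟨(1 - 2 * r) / 3, ?_⟩
  push_cast at hr ⊢
  field_simp
  linear_combination -4 * hr

theorem sq_dvd_of_inert {p h : ℕ} (hp : p.Prime) (hph : p = 2 * h + 1) (h3 : p ≠ 3)
    (h7 : p % 7 = 3 ∨ p % 7 = 5 ∨ p % 7 = 6) :
    (p : ℤ) ^ 2 ∣ ∑ k ∈ range (h + 1), clausenCoeff h k * (-16) ^ k := by
  have : Fact p.Prime := ⟨hp⟩
  have : Fact (∀ r : ZMod p, r ^ 2 ≠ ((-16 : ℤ) : ZMod p) + ((1 : ℤ) : ZMod p) * r) :=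
    ⟨sq_ne_neg_sixteen_add (by omega) h3 h7⟩
  let K := QuadraticAlgebra (ZMod p) ((-16 : ℤ) : ZMod p) ((1 : ℤ) : ZMod p)
  have : CharP K p := charP_of_injective_algebraMap (algebraMap (ZMod p) K).injective p
  have hp3 : (3 : K) ≠ 0 := mod_cast CharP.cast_ne_zero_of_ne_of_prime K Nat.prime_three h3
  have hp7 : (7 : K) ≠ 0 :=
    mod_cast CharP.cast_ne_zero_of_ne_of_prime K (p := p) (q := 7) (by norm_num) (by omega)
  have hω : (ω : K) * ω = -16 + ω := by ext <;> simp [omega]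
  have hδ : ((1 - 2 * ω) / 3 : K) ^ 2 = -7 := by
    rw [div_pow, div_eq_iff (pow_ne_zero 2 hp3)]
    linear_combination 4 * hω
  have hδ0 : ((1 - 2 * ω) / 3 : K) ≠ 0 := by
    intro h0
    rw [h0, zero_pow two_ne_zero, zero_eq_neg] at hδ
    exact hp7 hδ
  have hδp := pow_eq_neg_of_sq_eq_neg_seven hp hph h7 hδ
  have hzero : aeval (ω : K) (shiftedLegendre h) = 0 := by
    have : CharP K (2 * h + 1) := by rwa [← hph]
    exact aeval_shiftedLegendre_eq_zero hδ hδ0 hδp (mul_div_cancel₀ _ hp3).symm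
  exact sq_dvd_of_aeval_omega_eq_zero hzero
    (aeval_shiftedLegendre_sq (by ext <;> simp [sq, omega]) h)

end Inert

section FormalODE

open PowerSeries

theorem eq_of_forall_X_pow_dvd_sub {R : Type*} [CommRing R] {f g : R⟦X⟧}
    (h : ∀ n, (X : R⟦X⟧) ^ n ∣ f - g) : f = g := by
  ext n
  simpa [sub_eq_zero] using X_pow_dvd_iff.1 (h (n + 1)) n (Nat.lt_succ_self n)

theorem exists_fixedPoint_of_X_pow_dvd_sub {R : Type*} [CommRing R] {Φ : R⟦X⟧ → R⟦X⟧}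
    (hΦ : ∀ f g n, (X : R⟦X⟧) ^ n ∣ f - g → (X : R⟦X⟧) ^ (n + 1) ∣ Φ f - Φ g) :
    ∃ f, Φ f = f := by
  set u : ℕ → R⟦X⟧ := fun n ↦ Φ^[n] 0
  have hsucc (n : ℕ) : u (n + 1) = Φ (u n) := Function.iterate_succ_apply' Φ n 0
  have hstep (n : ℕ) : (X : R⟦X⟧) ^ n ∣ u (n + 1) - u n := by
    induction n with
    | zero => simp
    | succ n ih => simpa only [hsucc] using hΦ _ _ n ih
  have hcauchy {m n : ℕ} (hmn : m ≤ n) : (X : R⟦X⟧) ^ m ∣ u n - u m := by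
    induction n, hmn using Nat.le_induction with
    | base => simp
    | succ n hmn ih =>
      simpa only [sub_add_sub_cancel] using dvd_add ((pow_dvd_pow X hmn).trans (hstep n)) ih
  set f : R⟦X⟧ := mk fun n ↦ coeff n (u (n + 1)) with hf
  have hlim (n : ℕ) : (X : R⟦X⟧) ^ n ∣ f - u n := by
    refine X_pow_dvd_iff.2 fun m hm ↦ ?_
    have := X_pow_dvd_iff.1 (hcauchy (Nat.succ_le_of_lt hm)) m (Nat.lt_succ_self m)
    rw [map_sub, sub_eq_zero] at this
    rw [map_sub, hf, coeff_mk, this, sub_self]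
  refine ⟨f, eq_of_forall_X_pow_dvd_sub fun n ↦ ?_⟩
  have hX : (X : R⟦X⟧) ^ n ∣ X ^ (n + 1) := pow_dvd_pow X n.le_succ
  have := dvd_sub (hX.trans (hΦ _ _ n (hlim n))) (hX.trans (hlim (n + 1)))
  rwa [hsucc, sub_sub_sub_cancel_right] at this

theorem X_pow_succ_dvd_of_X_pow_dvd_derivative {R : Type*} [CommRing R] [NoZeroDivisors R]
    [CharZero R] {f : R⟦X⟧} {n : ℕ} (h0 : constantCoeff f = 0) (h : (X : R⟦X⟧) ^ n ∣ d⁄dX R f) :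
    (X : R⟦X⟧) ^ (n + 1) ∣ f := by
  rw [X_pow_dvd_iff] at h ⊢
  rintro (_ | m) hm
  · simpa using h0
  · have hcoeff := h m (by omega)
    rw [coeff_derivative] at hcoeff
    exact (mul_eq_zero.1 hcoeff).resolve_right (Nat.cast_add_one_ne_zero m)

theorem powerSeries_derivative_ofNat {R : Type*} [CommRing R] (n : ℕ) [n.AtLeastTwo] :
    d⁄dX R (ofNat(n) : R⟦X⟧) = 0 := by
  rw [← map_ofNat C n, derivative_C]

variable {k : Type*} [Field k]

/-- The formal antiderivative with vanishing constant term. (The constant term is a division by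
`0`.) -/
noncomputable def antiderivative (f : k⟦X⟧) : k⟦X⟧ := mk fun n ↦ coeff (n - 1) f / n

theorem derivative_antiderivative [CharZero k] (f : k⟦X⟧) :
    d⁄dX k (antiderivative f) = f := by
  ext n
  have : (n : k) + 1 ≠ 0 := Nat.cast_add_one_ne_zero n
  rw [coeff_derivative, antiderivative, coeff_mk]
  push_cast
  field_simp

theorem constantCoeff_antiderivative (f : k⟦X⟧) : constantCoeff (antiderivative f) = 0 := by
  rw [← coeff_zero_eq_constantCoeff_apply, antiderivative, coeff_mk]
  simp

theorem exists_solution_jacobi_ode [CharZero k] (t μ : k) : ∃ S V : k⟦X⟧,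
    constantCoeff S = 0 ∧ constantCoeff V = 1 ∧
      d⁄dX k S = C μ * V ∧ d⁄dX k V = C μ * (-2 * C t * S + 2 * S ^ 3) := by
  set V : k⟦X⟧ → k⟦X⟧ := fun S ↦ 1 + antiderivative (C μ * (-2 * C t * S + 2 * S ^ 3))
  have hV0 (S : k⟦X⟧) : constantCoeff (V S) = 1 := by simp [V, constantCoeff_antiderivative]
  have hV (S : k⟦X⟧) : d⁄dX k (V S) = C μ * (-2 * C t * S + 2 * S ^ 3) := by
    rw [map_add, derivative_one, derivative_antiderivative, zero_add]
  obtain ⟨S, hS⟩ := exists_fixedPoint_of_X_pow_dvd_sub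
    (Φ := fun S ↦ antiderivative (C μ * V S)) fun f g n h ↦ by
      refine X_pow_succ_dvd_of_X_pow_dvd_derivative (by simp [constantCoeff_antiderivative]) ?_
      rw [map_sub, derivative_antiderivative, derivative_antiderivative, ← mul_sub]
      refine (pow_dvd_pow X n.le_succ).trans (Dvd.dvd.mul_left ?_ _)
      refine X_pow_succ_dvd_of_X_pow_dvd_derivative (by simp [hV0]) ?_
      rw [map_sub, hV, hV]
      refine h.trans ⟨C μ * (-2 * C t + 2 * (f ^ 2 + f * g + g ^ 2)), ?_⟩
      ring
  refine ⟨S, V S, ?_, hV0 S, ?_, hV S⟩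
  · rw [← hS, constantCoeff_antiderivative]
  · nth_rewrite 1 [← hS]
    rw [derivative_antiderivative]

end FormalODE

section JacobiSn

open PowerSeries

variable {k : Type*} [Field k] [CharZero k]

/-- The expansion in `u` of `sn (μ u)`, where `sn` is the solution of
`sn' ^ 2 = 1 - 2 t sn ^ 2 + sn ^ 4` with `sn 0 = 0` and `sn' 0 = 1`: a Jacobi elliptic sine, in a
normalisation which is rational over the field generated by `t`. It parametrises the curve
`w ^ 2 = 1 - 2 t s ^ 2 + s ^ 4` by its invariant differential. -/
noncomputable def jacobiSn (t μ : k) : k⟦X⟧ := (exists_solution_jacobi_ode t μ).choose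

/-- The expansion in `u` of `sn' (μ u)`, with `sn` as in `jacobiSn`. The name recalls that the
derivative of the Jacobi elliptic sine is the product of the functions `cn` and `dn`. -/
noncomputable def jacobiCnDn (t μ : k) : k⟦X⟧ :=
  (exists_solution_jacobi_ode t μ).choose_spec.choose

variable (t μ : k)

@[simp]
theorem constantCoeff_jacobiSn : constantCoeff (jacobiSn t μ) = 0 :=
  (exists_solution_jacobi_ode t μ).choose_spec.choose_spec.1

@[simp]
theorem constantCoeff_jacobiCnDn : constantCoeff (jacobiCnDn t μ) = 1 :=
  (exists_solution_jacobi_ode t μ).choose_spec.choose_spec.2.1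

theorem derivative_jacobiSn : d⁄dX k (jacobiSn t μ) = C μ * jacobiCnDn t μ :=
  (exists_solution_jacobi_ode t μ).choose_spec.choose_spec.2.2.1

theorem derivative_jacobiCnDn : d⁄dX k (jacobiCnDn t μ)
    = C μ * (-2 * C t * jacobiSn t μ + 2 * jacobiSn t μ ^ 3) :=
  (exists_solution_jacobi_ode t μ).choose_spec.choose_spec.2.2.2

theorem jacobiCnDn_sq :
    jacobiCnDn t μ ^ 2 = 1 - 2 * C t * jacobiSn t μ ^ 2 + jacobiSn t μ ^ 4 := by
  apply derivative.ext
  · simp only [Derivation.leibniz, Derivation.leibniz_pow, map_add, map_sub, derivative_one,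
      derivative_C, derivative_jacobiSn, derivative_jacobiCnDn, powerSeries_derivative_ofNat,
      smul_eq_mul, nsmul_eq_mul]
    push_cast
    ring
  · simp

variable {t μ}

theorem derivative_eq_of_sq_eq {S V : k⟦X⟧} (hV0 : V ≠ 0) (hS : d⁄dX k S = C μ * V)
    (hV : V ^ 2 = 1 - 2 * C t * S ^ 2 + S ^ 4) :
    d⁄dX k V = C μ * (-2 * C t * S + 2 * S ^ 3) := by
  have h2 : (2 : k⟦X⟧) ≠ 0 := fun h ↦ two_ne_zero (α := k) <| by
    simpa only [map_ofNat, map_zero] using congrArg constantCoeff h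
  apply mul_left_cancel₀ (mul_ne_zero h2 hV0)
  have hderiv := congrArg (d⁄dX k) hV
  simp only [Derivation.leibniz, Derivation.leibniz_pow, map_add, map_sub, derivative_one,
    derivative_C, powerSeries_derivative_ofNat, smul_eq_mul, nsmul_eq_mul, hS] at hderiv
  push_cast at hderiv
  linear_combination hderiv

theorem eq_jacobiSn_of_ode {S V : k⟦X⟧} (hS0 : constantCoeff S = 0) (hV0 : constantCoeff V = 1)
    (hS : d⁄dX k S = C μ * V) (hV : V ^ 2 = 1 - 2 * C t * S ^ 2 + S ^ 4) :
    S = jacobiSn t μ ∧ V = jacobiCnDn t μ := by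
  have hV' := derivative_eq_of_sq_eq (fun h ↦ by simp [h] at hV0) hS hV
  have hdvd (n : ℕ) : X ^ n ∣ S - jacobiSn t μ ∧ X ^ n ∣ V - jacobiCnDn t μ := by
    induction n with
    | zero => simp
    | succ n ih =>
      obtain ⟨ihS, ihV⟩ := ih
      constructor
      · refine X_pow_succ_dvd_of_X_pow_dvd_derivative (by simp [hS0]) ?_
        rw [map_sub, hS, derivative_jacobiSn, ← mul_sub]
        exact ihV.mul_left _
      · refine X_pow_succ_dvd_of_X_pow_dvd_derivative (by simp [hV0]) ?_
        rw [map_sub, hV', derivative_jacobiCnDn]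
        refine ihS.trans
          ⟨C μ * (-2 * C t + 2 * (S ^ 2 + S * jacobiSn t μ + jacobiSn t μ ^ 2)), ?_⟩
        ring
  exact ⟨eq_of_forall_X_pow_dvd_sub fun n ↦ (hdvd n).1,
    eq_of_forall_X_pow_dvd_sub fun n ↦ (hdvd n).2⟩

theorem jacobiSn_mul_eq {A D N : k⟦X⟧} (hA0 : constantCoeff A = 0) (hD0 : constantCoeff D ≠ 0)
    (hN0 : constantCoeff N = constantCoeff D ^ 2)
    (hderiv : d⁄dX k A * D - A * d⁄dX k D = C μ * N)
    (hN : N ^ 2 = D ^ 4 - 2 * C t * A ^ 2 * D ^ 2 + A ^ 4) :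
    jacobiSn t μ * D = A ∧ jacobiCnDn t μ * D ^ 2 = N := by
  have hD : D * D⁻¹ = 1 := PowerSeries.mul_inv_cancel _ hD0
  have hD2 : D ^ 2 * D⁻¹ ^ 2 = 1 := by rw [← mul_pow, hD, one_pow]
  have hDinv : d⁄dX k D⁻¹ = -D⁻¹ ^ 2 * d⁄dX k D := derivative_inv' D
  obtain ⟨hsn, hcd⟩ := eq_jacobiSn_of_ode (t := t) (μ := μ) (S := A * D⁻¹) (V := N * D⁻¹ ^ 2)
    (by rw [map_mul, hA0, zero_mul])
    (by rw [map_mul, map_pow, constantCoeff_inv, hN0, ← mul_pow, mul_inv_cancel₀ hD0, one_pow])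
    (by
      rw [Derivation.leibniz, smul_eq_mul, smul_eq_mul, hDinv]
      linear_combination D⁻¹ ^ 2 * hderiv - D⁻¹ * d⁄dX k A * hD)
    (by linear_combination D⁻¹ ^ 4 * hN
      + (1 + D ^ 2 * D⁻¹ ^ 2 - 2 * C t * A ^ 2 * D⁻¹ ^ 2) * hD2)
  rw [← hsn, ← hcd]
  constructor
  · linear_combination A * hD
  · linear_combination N * hD2

variable (t)

theorem sq_addition_numerator_eq {R : Type*} [CommRing R] {t s u w v : R}
    (hw : w ^ 2 = 1 - 2 * t * s ^ 2 + s ^ 4) (hv : v ^ 2 = 1 - 2 * t * u ^ 2 + u ^ 4) :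
    ((1 + s ^ 2 * u ^ 2) * (w * v - 2 * t * s * u) + 2 * s * u * (s ^ 2 + u ^ 2)) ^ 2
      = (1 - s ^ 2 * u ^ 2) ^ 4 - 2 * t * (s * v + u * w) ^ 2 * (1 - s ^ 2 * u ^ 2) ^ 2
        + (s * v + u * w) ^ 4 := by
  linear_combination (v ^ 2 - u ^ 4 - u ^ 4 * w ^ 2 - 4 * s * u ^ 3 * w * v
    - 4 * s ^ 2 * u ^ 2 * v ^ 2 - s ^ 4 * u ^ 4 + s ^ 4 * u ^ 4 * v ^ 2 + 2 * t * u ^ 2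
    - 2 * t * s ^ 2 * u ^ 4 + 2 * t * s ^ 4 * u ^ 6) * hw
    + (1 - 4 * s ^ 2 * u ^ 2 - 4 * s ^ 3 * u * w * v - s ^ 4 * v ^ 2 - 4 * s ^ 6 * u ^ 2
    + s ^ 8 * u ^ 4 + 6 * t * s ^ 4 * u ^ 2) * hv

theorem jacobiSn_add (a b : k) :
    jacobiSn t (a + b) * (1 - jacobiSn t a ^ 2 * jacobiSn t b ^ 2)
      = jacobiSn t a * jacobiCnDn t b + jacobiSn t b * jacobiCnDn t a := by
  have hw := jacobiCnDn_sq t a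
  have hv := jacobiCnDn_sq t b
  refine (jacobiSn_mul_eq (by simp) (by simp) ?_ ?_ (sq_addition_numerator_eq hw hv)).1
  · simp
  simp only [Derivation.leibniz, Derivation.leibniz_pow, map_add, map_sub, derivative_one,
    derivative_jacobiSn, derivative_jacobiCnDn, smul_eq_mul, nsmul_eq_mul]
  push_cast
  generalize jacobiSn t a = s at *
  generalize jacobiSn t b = u at *
  generalize jacobiCnDn t a = w at *
  generalize jacobiCnDn t b = v at *
  linear_combination (2 * C a * s * u ^ 3) * hw + (2 * C b * s ^ 3 * u) * hv

theorem jacobiSn_neg_and_jacobiCnDn_neg (a : k) :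
    jacobiSn t (-a) = -jacobiSn t a ∧ jacobiCnDn t (-a) = jacobiCnDn t a := by
  have hcd := jacobiCnDn_sq t a
  obtain ⟨hsn, hcd⟩ := eq_jacobiSn_of_ode (t := t) (μ := -a) (S := -jacobiSn t a)
    (V := jacobiCnDn t a) (by simp) (by simp)
    (by rw [map_neg, derivative_jacobiSn, map_neg, neg_mul]) (by linear_combination hcd)
  exact ⟨hsn.symm, hcd.symm⟩

theorem jacobiSn_neg (a : k) : jacobiSn t (-a) = -jacobiSn t a :=
  (jacobiSn_neg_and_jacobiCnDn_neg t a).1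

theorem jacobiSn_zero : jacobiSn t 0 = 0 :=
  (eq_jacobiSn_of_ode (V := 1) (by simp) (by simp) (by simp) (by simp)).1.symm

theorem jacobiSn_sub (a b : k) :
    jacobiSn t (a - b) * (1 - jacobiSn t a ^ 2 * jacobiSn t b ^ 2)
      = jacobiSn t a * jacobiCnDn t b - jacobiSn t b * jacobiCnDn t a := by
  have h := jacobiSn_add t a (-b)
  rwa [jacobiSn_neg, (jacobiSn_neg_and_jacobiCnDn_neg t b).2, neg_sq, neg_mul,
    ← sub_eq_add_neg, ← sub_eq_add_neg] at h

/-- The numerator of `sn (a + b) ^ 2 + sn (a - b) ^ 2` over the denominator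
`(Q₁ * Q₂ - P₁ * P₂) ^ 2`, where `sn a ^ 2 = P₁ / Q₁` and `sn b ^ 2 = P₂ / Q₂`. -/
def snSqSumNum {R : Type*} [CommRing R] (t P₁ Q₁ P₂ Q₂ : R) : R :=
  2 * (P₁ * Q₁ * (Q₂ ^ 2 - 2 * t * P₂ * Q₂ + P₂ ^ 2)
    + P₂ * Q₂ * (Q₁ ^ 2 - 2 * t * P₁ * Q₁ + P₁ ^ 2))

theorem map_snSqSumNum {R S : Type*} [CommRing R] [CommRing S] (φ : R →+* S)
    (t P₁ Q₁ P₂ Q₂ : R) :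
    φ (snSqSumNum t P₁ Q₁ P₂ Q₂) = snSqSumNum (φ t) (φ P₁) (φ Q₁) (φ P₂) (φ Q₂) := by
  simp only [snSqSumNum, map_add, map_sub, map_mul, map_pow, map_ofNat]

theorem jacobiSn_sq_add_mul_sq_sub (a b : k) :
    jacobiSn t (a + b) ^ 2 * jacobiSn t (a - b) ^ 2 * (1 - jacobiSn t a ^ 2 * jacobiSn t b ^ 2) ^ 2
      = (jacobiSn t a ^ 2 - jacobiSn t b ^ 2) ^ 2 := by
  have hD : (1 - jacobiSn t a ^ 2 * jacobiSn t b ^ 2 : k⟦X⟧) ≠ 0 := fun h ↦ by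
    simpa using congrArg constantCoeff h
  have hprod : jacobiSn t (a + b) * jacobiSn t (a - b) * (1 - jacobiSn t a ^ 2 * jacobiSn t b ^ 2)
      = jacobiSn t a ^ 2 - jacobiSn t b ^ 2 := by
    apply mul_right_cancel₀ hD
    linear_combination
      jacobiSn t (a - b) * (1 - jacobiSn t a ^ 2 * jacobiSn t b ^ 2) * jacobiSn_add t a b
        + (jacobiSn t a * jacobiCnDn t b + jacobiSn t b * jacobiCnDn t a) * jacobiSn_sub t a b
        + jacobiSn t a ^ 2 * jacobiCnDn_sq t b - jacobiSn t b ^ 2 * jacobiCnDn_sq t a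
  rw [← hprod]
  ring

theorem jacobiSn_sq_add_add_sq_sub (a b : k) :
    (jacobiSn t (a + b) ^ 2 + jacobiSn t (a - b) ^ 2)
        * (1 - jacobiSn t a ^ 2 * jacobiSn t b ^ 2) ^ 2
      = snSqSumNum (C t) (jacobiSn t a ^ 2) 1 (jacobiSn t b ^ 2) 1 := by
  rw [snSqSumNum]
  linear_combination
    (jacobiSn t (a + b) * (1 - jacobiSn t a ^ 2 * jacobiSn t b ^ 2)
        + (jacobiSn t a * jacobiCnDn t b + jacobiSn t b * jacobiCnDn t a)) * jacobiSn_add t a b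
      + (jacobiSn t (a - b) * (1 - jacobiSn t a ^ 2 * jacobiSn t b ^ 2)
        + (jacobiSn t a * jacobiCnDn t b - jacobiSn t b * jacobiCnDn t a)) * jacobiSn_sub t a b
      + 2 * jacobiSn t a ^ 2 * jacobiCnDn_sq t b + 2 * jacobiSn t b ^ 2 * jacobiCnDn_sq t a

end JacobiSn

section EvalSnSq

open Polynomial

variable {k : Type*} [Field k] [CharZero k] (t : k)

/-- Evaluation of polynomials at the power series `jacobiSn t 1 ^ 2`. -/
noncomputable def evalSnSq : k[X] →+* PowerSeries k :=
  eval₂RingHom PowerSeries.C (jacobiSn t 1 ^ 2)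

@[simp]
theorem evalSnSq_C (a : k) : evalSnSq t (C a) = PowerSeries.C a := by
  simp [evalSnSq]

@[simp]
theorem evalSnSq_X : evalSnSq t X = jacobiSn t 1 ^ 2 := by
  simp [evalSnSq]

theorem constantCoeff_evalSnSq (P : k[X]) :
    PowerSeries.constantCoeff (evalSnSq t P) = P.coeff 0 := by
  have hid : (PowerSeries.constantCoeff (R := k)).comp PowerSeries.C = RingHom.id k := by
    ext
    simp
  rw [evalSnSq, coe_eval₂RingHom, hom_eval₂, hid]
  simp [coeff_zero_eq_eval_zero]

theorem jacobiSn_one_ne_zero : jacobiSn t 1 ≠ 0 := by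
  intro h
  have hderiv := derivative_jacobiSn t (1 : k)
  rw [h, map_zero, map_one, one_mul] at hderiv
  simpa using congrArg PowerSeries.constantCoeff hderiv

theorem evalSnSq_injective : Function.Injective (evalSnSq t) := by
  rw [injective_iff_map_eq_zero]
  intro P hP
  by_contra hP0
  obtain ⟨Q, hPQ, hQ⟩ := exists_eq_pow_rootMultiplicity_mul_and_not_dvd P hP0 0
  rw [C_0, sub_zero, X_dvd_iff, ← constantCoeff_evalSnSq t] at hQ
  rw [hPQ, C_0, sub_zero, map_mul, map_pow, evalSnSq_X] at hP
  refine hQ ?_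
  rw [(mul_eq_zero.1 hP).resolve_left (pow_ne_zero _ (pow_ne_zero _ (jacobiSn_one_ne_zero t))),
    map_zero]

theorem derivative_evalSnSq (P : k[X]) :
    PowerSeries.derivative k (evalSnSq t P)
      = evalSnSq t (derivative P) * (2 * jacobiSn t 1 * jacobiCnDn t 1) := by
  induction P using Polynomial.induction_on' with
  | add P Q hP hQ => rw [map_add, map_add, hP, hQ, map_add, map_add, add_mul]
  | monomial n a =>
    rw [← C_mul_X_pow_eq_monomial]
    simp only [map_mul, map_pow, evalSnSq_C, evalSnSq_X, Derivation.leibniz,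
      Derivation.leibniz_pow, PowerSeries.derivative_C, derivative_C_mul, derivative_X_pow,
      derivative_jacobiSn, smul_eq_mul, nsmul_eq_mul, map_natCast, map_one]
    push_cast
    ring

theorem evalSnSq_twistedWronskian (n d : k[X]) :
    jacobiCnDn t 1 * evalSnSq t (twistedWronskian n d)
      = PowerSeries.derivative k (jacobiSn t 1 * evalSnSq t n) * evalSnSq t d
        - jacobiSn t 1 * evalSnSq t n * PowerSeries.derivative k (evalSnSq t d) := by
  simp only [twistedWronskian, Derivation.leibniz, smul_eq_mul, derivative_evalSnSq,
    derivative_jacobiSn, map_one, map_add, map_sub, map_mul, map_ofNat, evalSnSq_X]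
  ring

variable {t}

theorem IsMultiplication.jacobiSn_mul_evalSnSq {μ : k} {n d : k[X]} (h : IsMultiplication t μ n d)
    (hμ : μ ≠ 0) (hd : d.coeff 0 ≠ 0) (hn : n.coeff 0 = μ * d.coeff 0) :
    jacobiSn t μ * evalSnSq t d = jacobiSn t 1 * evalSnSq t n ∧
      PowerSeries.C μ * jacobiCnDn t μ * evalSnSq t d ^ 2
        = jacobiCnDn t 1 * evalSnSq t (twistedWronskian n d) := by
  have hμμ : (PowerSeries.C μ * PowerSeries.C μ⁻¹ : PowerSeries k) = 1 := by
    rw [← map_mul, mul_inv_cancel₀ hμ, map_one]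
  have hW := congrArg (evalSnSq t) h
  simp only [map_mul, map_add, map_sub, map_pow, map_one, map_ofNat, evalSnSq_C,
    evalSnSq_X] at hW
  obtain ⟨hsn, hcd⟩ := jacobiSn_mul_eq (t := t) (μ := μ) (A := jacobiSn t 1 * evalSnSq t n)
    (D := evalSnSq t d)
    (N := PowerSeries.C μ⁻¹ * (jacobiCnDn t 1 * evalSnSq t (twistedWronskian n d)))
    (by simp) (by rwa [constantCoeff_evalSnSq])
    (by
      have hcoeff : (twistedWronskian n d).coeff 0 = n.coeff 0 * d.coeff 0 := by
        simp [twistedWronskian, mul_coeff_zero]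
      rw [map_mul, map_mul, PowerSeries.constantCoeff_C, constantCoeff_jacobiCnDn,
        constantCoeff_evalSnSq, constantCoeff_evalSnSq, hcoeff, hn]
      field_simp)
    (by rw [← mul_assoc, hμμ, one_mul, evalSnSq_twistedWronskian])
    (by
      linear_combination (PowerSeries.C μ⁻¹ * evalSnSq t (twistedWronskian n d)) ^ 2
          * jacobiCnDn_sq t 1 + PowerSeries.C μ⁻¹ ^ 2 * hW
        + (evalSnSq t d ^ 4 - 2 * PowerSeries.C t * jacobiSn t 1 ^ 2 * evalSnSq t n ^ 2
          * evalSnSq t d ^ 2 + jacobiSn t 1 ^ 4 * evalSnSq t n ^ 4)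
          * (PowerSeries.C μ * PowerSeries.C μ⁻¹ + 1) * hμμ)
  refine ⟨hsn, ?_⟩
  rw [mul_assoc, hcd, ← mul_assoc, hμμ, one_mul]

theorem isMultiplication_of_jacobiSn_mul_evalSnSq {μ : k} {n d : k[X]}
    (h : jacobiSn t μ * evalSnSq t d = jacobiSn t 1 * evalSnSq t n) : IsMultiplication t μ n d := by
  have hcd : PowerSeries.C μ * jacobiCnDn t μ * evalSnSq t d ^ 2
      = jacobiCnDn t 1 * evalSnSq t (twistedWronskian n d) := by
    rw [evalSnSq_twistedWronskian, ← h, Derivation.leibniz, smul_eq_mul, smul_eq_mul,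
      derivative_jacobiSn]
    ring
  apply evalSnSq_injective t
  have hsq := jacobiCnDn_sq t (1 : k)
  have hsqμ := jacobiCnDn_sq t μ
  simp only [map_mul, map_add, map_sub, map_pow, map_ofNat, map_one, evalSnSq_C, evalSnSq_X]
  generalize evalSnSq t (twistedWronskian n d) = W at *
  generalize evalSnSq t d = D at *
  generalize evalSnSq t n = N at *
  generalize PowerSeries.C μ = m at *
  generalize PowerSeries.C t = T at *
  generalize jacobiSn t 1 = s at *
  generalize jacobiSn t μ = S at *
  linear_combination -W ^ 2 * hsq - (m * jacobiCnDn t μ * D ^ 2 + jacobiCnDn t 1 * W) * hcd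
    + m ^ 2 * D ^ 4 * hsqμ + m ^ 2 * (S ^ 2 * D ^ 2 + s ^ 2 * N ^ 2 - 2 * T * D ^ 2)
      * (S * D + s * N) * h

end EvalSnSq

section SnSqFraction

open Polynomial

theorem snSqSumNum_ne_zero {K : Type*} [Field K] {p₁ q₁ p₂ q₂ t : K} (h2 : (2 : K) ≠ 0)
    (ht : t ^ 2 ≠ 1) (h₁ : p₁ ≠ 0 ∨ q₁ ≠ 0) (h₂ : p₂ ≠ 0 ∨ q₂ ≠ 0)
    (hpole : q₁ * q₂ - p₁ * p₂ = 0) (hzero : p₁ * q₂ - p₂ * q₁ = 0) :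
    snSqSumNum t p₁ q₁ p₂ q₂ ≠ 0 := by
  have hq₂ : q₂ ≠ 0 := by
    rintro rfl
    have hp₂ : p₂ ≠ 0 := h₂.resolve_right (not_not.2 rfl)
    have hp₁ : p₁ = 0 := mul_right_cancel₀ hp₂ (by linear_combination -hpole)
    have hq₁ : q₁ = 0 := mul_left_cancel₀ hp₂ (by linear_combination -hzero)
    exact h₁.elim (absurd hp₁) (absurd hq₁)
  have hsq : p₁ ^ 2 = q₁ ^ 2 := mul_left_cancel₀ hq₂ (by linear_combination p₁ * hzero - q₁ * hpole)
  have hq₁ : q₁ ≠ 0 := by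
    rintro rfl
    have hp₁ : p₁ = 0 := by simpa using hsq
    simp [hp₁] at h₁
  have hfactor {ε : K} (hε : ε ^ 2 = 1) (hp₁ : p₁ = ε * q₁) :
      snSqSumNum t p₁ q₁ p₂ q₂ = 8 * (ε - t) * (q₁ * q₂) ^ 2 := by
    have hp₂ : p₂ = ε * q₂ := mul_left_cancel₀ hq₁ (by rw [hp₁] at hzero; linear_combination -hzero)
    rw [snSqSumNum, hp₁, hp₂]
    linear_combination (4 * ε - 8 * t) * (q₁ * q₂) ^ 2 * hε
  obtain ⟨ε, hε, hp₁⟩ : ∃ ε : K, ε ^ 2 = 1 ∧ p₁ = ε * q₁ := by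
    rcases sq_eq_sq_iff_eq_or_eq_neg.1 hsq with h | h
    exacts [⟨1, by ring, by rw [h, one_mul]⟩, ⟨-1, by ring, by rw [h, neg_one_mul]⟩]
  rw [hfactor hε hp₁]
  have h8 : (8 : K) ≠ 0 := by
    rw [show (8 : K) = 2 ^ 3 by norm_num]
    exact pow_ne_zero 3 h2
  have hεt : ε - t ≠ 0 := fun h ↦ ht (by rw [← sub_eq_zero.1 h, hε])
  exact mul_ne_zero (mul_ne_zero h8 hεt) (pow_ne_zero 2 (mul_ne_zero hq₁ hq₂))

variable {k : Type*} [Field k]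

theorem isCoprime_of_snSqSumNum [CharZero k] {P₁ Q₁ P₂ Q₂ P Q P' Q' : k[X]} {t : k}
    (ht : t ^ 2 ≠ 1) (h₁ : IsCoprime P₁ Q₁) (h₂ : IsCoprime P₂ Q₂)
    (hQ : Q' * Q = (Q₁ * Q₂ - P₁ * P₂) ^ 2) (hP : P' * P = (P₁ * Q₂ - P₂ * Q₁) ^ 2)
    (hsum : Q * P' + P * Q' = snSqSumNum (C t) P₁ Q₁ P₂ Q₂) : IsCoprime P' Q' := by
  have : CharZero (AlgebraicClosure k) := algebraRat.charZero _
  rw [isCoprime_iff_aeval_ne_zero_of_isAlgClosed k (AlgebraicClosure k)] at *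
  intro a
  by_contra! hroot
  obtain ⟨hP0, hQ0⟩ := hroot
  have hpole := congrArg (aeval a) hQ
  have hzero := congrArg (aeval a) hP
  have hsum := congrArg (aeval a) hsum
  rw [← AlgHom.coe_toRingHom, map_snSqSumNum, AlgHom.coe_toRingHom] at hsum
  simp only [map_mul, map_add, map_sub, map_pow, hP0, hQ0, zero_mul, mul_zero, add_zero]
    at hpole hzero hsum
  refine snSqSumNum_ne_zero two_ne_zero ?_ (h₁ a) (h₂ a)
    ((pow_eq_zero_iff two_ne_zero).1 hpole.symm) ((pow_eq_zero_iff two_ne_zero).1 hzero.symm)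
    hsum.symm
  rw [aeval_C, ← map_pow, ← map_one (algebraMap k (AlgebraicClosure k))]
  exact (algebraMap k (AlgebraicClosure k)).injective.ne ht

theorem exists_factor_of_isCoprime {R : Type*} [CommRing R] [IsDomain R] {a b c P Q : R}
    (hPQ : IsCoprime P Q) (hQ : Q ≠ 0) (hroot : a * P ^ 2 + c * Q ^ 2 = b * P * Q) :
    ∃ P' Q', Q' * Q = a ∧ P' * P = c ∧ Q * P' + P * Q' = b := by
  obtain ⟨Q', rfl⟩ : Q ∣ a := (hPQ.symm.pow_right (n := 2)).dvd_of_dvd_mul_right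
    ⟨b * P - c * Q, by linear_combination hroot⟩
  have hc : P * (b - P * Q') = c * Q := mul_left_cancel₀ hQ (by linear_combination -hroot)
  obtain ⟨P', hP'⟩ : Q ∣ b - P * Q' := hPQ.symm.dvd_of_dvd_mul_left ⟨c, by rw [hc, mul_comm]⟩
  refine ⟨P', Q', mul_comm _ _, mul_left_cancel₀ hQ ?_, by rw [← hP', sub_add_cancel]⟩
  rw [hP'] at hc
  linear_combination hc

variable [CharZero k]

/-- The function `sn (μ u) ^ 2` is the reduced fraction `P / Q` in `sn u ^ 2`. -/
structure IsSnSqFraction (t μ : k) (P Q : k[X]) : Prop where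
  isCoprime : IsCoprime P Q
  evalSnSq_mul : evalSnSq t Q * jacobiSn t μ ^ 2 = evalSnSq t P

namespace IsSnSqFraction

variable {t a b μ : k} {P Q P₁ Q₁ P₂ Q₂ n d : k[X]}

theorem ne_zero (h : IsSnSqFraction t μ P Q) : Q ≠ 0 := by
  rintro rfl
  have hP := h.evalSnSq_mul
  rw [map_zero, zero_mul, eq_comm, map_eq_zero_iff _ (evalSnSq_injective t)] at hP
  exact not_isCoprime_zero_zero (hP ▸ h.isCoprime)

theorem neg (h : IsSnSqFraction t μ P Q) : IsSnSqFraction t (-μ) P Q where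
  isCoprime := h.isCoprime
  evalSnSq_mul := by rw [jacobiSn_neg, neg_sq, h.evalSnSq_mul]

theorem zero : IsSnSqFraction t 0 0 1 where
  isCoprime := isCoprime_one_right
  evalSnSq_mul := by simp [jacobiSn_zero]

theorem one : IsSnSqFraction t 1 X 1 where
  isCoprime := isCoprime_one_right
  evalSnSq_mul := by simp

-- `sn (a - b) ^ 2` and `sn (a + b) ^ 2` are the roots of a quadratic polynomial whose coefficients
-- are polynomials in `sn u ^ 2`; the reduced fraction `P / Q` of one root splits off a factor.
theorem exists_add (ht : t ^ 2 ≠ 1) (h₁ : IsSnSqFraction t a P₁ Q₁)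
    (h₂ : IsSnSqFraction t b P₂ Q₂) (h : IsSnSqFraction t (a - b) P Q) :
    ∃ P' Q', IsSnSqFraction t (a + b) P' Q' ∧ Q' * Q = (Q₁ * Q₂ - P₁ * P₂) ^ 2 ∧
      P' * P = (P₁ * Q₂ - P₂ * Q₁) ^ 2 ∧ Q * P' + P * Q' = snSqSumNum (C t) P₁ Q₁ P₂ Q₂ := by
  have hA : evalSnSq t (Q₁ * Q₂ - P₁ * P₂)
      = evalSnSq t Q₁ * evalSnSq t Q₂ * (1 - jacobiSn t a ^ 2 * jacobiSn t b ^ 2) := by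
    rw [map_sub, map_mul, map_mul, ← h₁.evalSnSq_mul, ← h₂.evalSnSq_mul]
    ring
  have hE : evalSnSq t (P₁ * Q₂ - P₂ * Q₁)
      = evalSnSq t Q₁ * evalSnSq t Q₂ * (jacobiSn t a ^ 2 - jacobiSn t b ^ 2) := by
    rw [map_sub, map_mul, map_mul, ← h₁.evalSnSq_mul, ← h₂.evalSnSq_mul]
    ring
  have hprod : evalSnSq t (P₁ * Q₂ - P₂ * Q₁) ^ 2 = evalSnSq t (Q₁ * Q₂ - P₁ * P₂) ^ 2
      * (jacobiSn t (a + b) ^ 2 * jacobiSn t (a - b) ^ 2) := by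
    rw [hA, hE]
    linear_combination -(evalSnSq t Q₁ * evalSnSq t Q₂) ^ 2 * jacobiSn_sq_add_mul_sq_sub t a b
  have hsum : evalSnSq t (snSqSumNum (C t) P₁ Q₁ P₂ Q₂) = evalSnSq t (Q₁ * Q₂ - P₁ * P₂) ^ 2
      * (jacobiSn t (a + b) ^ 2 + jacobiSn t (a - b) ^ 2) := by
    have hadd := jacobiSn_sq_add_add_sq_sub t a b
    rw [snSqSumNum] at hadd
    rw [map_snSqSumNum, hA, snSqSumNum, ← h₁.evalSnSq_mul, ← h₂.evalSnSq_mul, evalSnSq_C]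
    linear_combination -(evalSnSq t Q₁ * evalSnSq t Q₂) ^ 2 * hadd
  obtain ⟨P', Q', hQ', hP', hPQ'⟩ := exists_factor_of_isCoprime h.isCoprime h.ne_zero
    (a := (Q₁ * Q₂ - P₁ * P₂) ^ 2) (b := snSqSumNum (C t) P₁ Q₁ P₂ Q₂)
    (c := (P₁ * Q₂ - P₂ * Q₁) ^ 2) (evalSnSq_injective t <| by
      simp only [map_add, map_mul, map_pow, hprod, hsum, ← h.evalSnSq_mul]
      ring)
  refine ⟨P', Q', ⟨isCoprime_of_snSqSumNum ht h₁.isCoprime h₂.isCoprime hQ' hP' hPQ', ?_⟩, hQ', hP',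
    hPQ'⟩
  have hQ0 : evalSnSq t Q ≠ 0 := (map_ne_zero_iff _ (evalSnSq_injective t)).2 h.ne_zero
  apply mul_left_cancel₀ hQ0
  rw [← hPQ', ← map_pow, ← hQ', map_add, map_mul, map_mul, map_mul, ← h.evalSnSq_mul] at hsum
  linear_combination -hsum

theorem isMultiplication (h : IsSnSqFraction t μ (X * n ^ 2) (d ^ 2)) :
    IsMultiplication t μ n d := by
  have hsq : (jacobiSn t μ * evalSnSq t d) ^ 2 = (jacobiSn t 1 * evalSnSq t n) ^ 2 := by
    have := h.evalSnSq_mul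
    rw [map_mul, map_pow, map_pow, evalSnSq_X] at this
    linear_combination this
  rcases sq_eq_sq_iff_eq_or_eq_neg.1 hsq with heq | heq
  · exact isMultiplication_of_jacobiSn_mul_evalSnSq heq
  · rw [← isMultiplication_neg_left]
    exact isMultiplication_of_jacobiSn_mul_evalSnSq (by rw [heq, map_neg, mul_neg])

end IsSnSqFraction

end SnSqFraction

section LaurentReciprocal

open Polynomial

variable {R : Type*} [CommRing R]

/-- The Laurent polynomial `X ^ m * P (1 / X)`. Allowing any integer `m` makes this additive and
multiplicative with no condition on the degree of `P`. -/
noncomputable def laurentReciprocal (m : ℤ) (P : R[X]) : LaurentPolynomial R :=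
  LaurentPolynomial.T m * LaurentPolynomial.invert (toLaurent P)

theorem laurentReciprocal_add (m : ℤ) (P Q : R[X]) :
    laurentReciprocal m (P + Q) = laurentReciprocal m P + laurentReciprocal m Q := by
  simp only [laurentReciprocal, map_add, mul_add]

theorem laurentReciprocal_sub (m : ℤ) (P Q : R[X]) :
    laurentReciprocal m (P - Q) = laurentReciprocal m P - laurentReciprocal m Q := by
  simp only [laurentReciprocal, map_sub, mul_sub]

theorem laurentReciprocal_mul (m n : ℤ) (P Q : R[X]) :
    laurentReciprocal (m + n) (P * Q) = laurentReciprocal m P * laurentReciprocal n Q := by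
  simp only [laurentReciprocal, map_mul, LaurentPolynomial.T_add]
  ring

theorem laurentReciprocal_sq (m : ℤ) (P : R[X]) :
    laurentReciprocal (2 * m) (P ^ 2) = laurentReciprocal m P ^ 2 := by
  rw [two_mul, pow_two, laurentReciprocal_mul, pow_two]

theorem laurentReciprocal_C_mul_X_pow {m : ℤ} {i j : ℕ} (h : (i + j : ℤ) = m) (a : R) :
    laurentReciprocal m (C a * X ^ i) = toLaurent (C a * X ^ j) := by
  rw [laurentReciprocal, toLaurent_C_mul_X_pow, toLaurent_C_mul_X_pow, map_mul,
    LaurentPolynomial.invert_C, LaurentPolynomial.invert_T, mul_left_comm,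
    ← LaurentPolynomial.T_add, ← h, add_neg_cancel_comm]

theorem laurentReciprocal_one_one : laurentReciprocal 1 (1 : R[X]) = toLaurent X := by
  simpa using laurentReciprocal_C_mul_X_pow (i := 0) (j := 1) rfl (1 : R)

theorem laurentReciprocal_cubic (a b c d : R) :
    laurentReciprocal 3 (C a + C b * X + C c * X ^ 2 + C d * X ^ 3)
      = toLaurent (C d + C c * X + C b * X ^ 2 + C a * X ^ 3) := by
  have h₀ : laurentReciprocal 3 (C a) = toLaurent (C a * X ^ 3) := by
    simpa using laurentReciprocal_C_mul_X_pow (i := 0) (j := 3) rfl a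
  have h₁ : laurentReciprocal 3 (C b * X) = toLaurent (C b * X ^ 2) := by
    simpa using laurentReciprocal_C_mul_X_pow (i := 1) (j := 2) rfl b
  have h₂ : laurentReciprocal 3 (C c * X ^ 2) = toLaurent (C c * X) := by
    simpa using laurentReciprocal_C_mul_X_pow (i := 2) (j := 1) rfl c
  have h₃ : laurentReciprocal 3 (C d * X ^ 3) = toLaurent (C d) := by
    simpa using laurentReciprocal_C_mul_X_pow (i := 3) (j := 0) rfl d
  simp only [laurentReciprocal_add, h₀, h₁, h₂, h₃, ← map_add]
  congr 1
  ring

theorem laurentReciprocal_one_sub_C_mul_X_add_sq (a : R) :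
    laurentReciprocal 2 (1 - C a * X + X ^ 2) = toLaurent (1 - C a * X + X ^ 2) := by
  have h₀ : laurentReciprocal 2 (1 : R[X]) = toLaurent (X ^ 2) := by
    simpa using laurentReciprocal_C_mul_X_pow (i := 0) (j := 2) rfl (1 : R)
  have h₁ : laurentReciprocal 2 (C a * X) = toLaurent (C a * X) := by
    simpa using laurentReciprocal_C_mul_X_pow (i := 1) (j := 1) rfl a
  have h₂ : laurentReciprocal 2 (X ^ 2 : R[X]) = toLaurent 1 := by
    simpa using laurentReciprocal_C_mul_X_pow (i := 2) (j := 0) rfl (1 : R)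
  rw [laurentReciprocal_add, laurentReciprocal_sub, h₀, h₁, h₂, ← map_sub, ← map_add]
  congr 1
  ring

theorem laurentReciprocal_eq_swap {m : ℤ} {P Q : R[X]}
    (h : laurentReciprocal m Q = toLaurent P) : laurentReciprocal m P = toLaurent Q := by
  rw [laurentReciprocal, ← h, laurentReciprocal, map_mul, LaurentPolynomial.invert_T, ← mul_assoc,
    ← LaurentPolynomial.T_add, add_neg_cancel, LaurentPolynomial.T_zero, one_mul]
  exact LaurentPolynomial.involutive_invert _

theorem coeff_laurentReciprocal (m n : ℤ) (P : R[X]) :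
    (laurentReciprocal m P).coeff n = (toLaurent P).coeff (m - n) := by
  rw [laurentReciprocal, LaurentPolynomial.T, AddMonoidAlgebra.coeff_single_mul_apply, one_mul,
    LaurentPolynomial.invert_apply, neg_add, neg_neg, sub_eq_add_neg]

theorem coeff_toLaurent_natCast (P : R[X]) (n : ℕ) : (toLaurent P).coeff (n : ℤ) = P.coeff n := by
  rw [LaurentPolynomial.coeff_toLaurent, ← Nat.castEmbedding_apply,
    Finsupp.mapDomain_apply Nat.castEmbedding.injective]
  rfl

theorem coeff_toLaurent_of_neg (P : R[X]) {n : ℤ} (hn : n < 0) : (toLaurent P).coeff n = 0 := by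
  rw [LaurentPolynomial.coeff_toLaurent, Finsupp.mapDomain_of_notMem_range]
  rintro ⟨m, rfl⟩
  exact absurd hn (Int.natCast_nonneg m).not_gt

theorem natDegree_le_of_laurentReciprocal_eq {m : ℕ} {P Q : R[X]}
    (h : laurentReciprocal m Q = toLaurent P) : Q.natDegree ≤ m := by
  refine natDegree_le_iff_coeff_eq_zero.2 fun j hj ↦ ?_
  rw [← coeff_toLaurent_natCast, ← sub_sub_cancel (m : ℤ) j, ← coeff_laurentReciprocal, h]
  exact coeff_toLaurent_of_neg P (by lia)

theorem eq_reflect_of_laurentReciprocal_eq {m : ℕ} {P Q : R[X]}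
    (h : laurentReciprocal m Q = toLaurent P) : P = reflect m Q := by
  ext j
  rw [coeff_reflect]
  rcases le_or_gt j m with hj | hj
  · rw [revAt_le hj, ← coeff_toLaurent_natCast, ← h, coeff_laurentReciprocal, ← Nat.cast_sub hj,
      coeff_toLaurent_natCast]
  · rw [revAt_eq_self_of_lt hj, coeff_eq_zero_of_natDegree_lt
      ((natDegree_le_of_laurentReciprocal_eq (laurentReciprocal_eq_swap h)).trans_lt hj),
      coeff_eq_zero_of_natDegree_lt ((natDegree_le_of_laurentReciprocal_eq h).trans_lt hj)]

variable {m₁ m₂ m m' : ℤ} {P₁ Q₁ P₂ Q₂ P Q P' Q' : R[X]} {t : R}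

theorem laurentReciprocal_snSqSumNum (hQ₁ : laurentReciprocal m₁ Q₁ = toLaurent P₁)
    (hQ₂ : laurentReciprocal m₂ Q₂ = toLaurent P₂) :
    laurentReciprocal (2 * (m₁ + m₂)) (snSqSumNum (C t) P₁ Q₁ P₂ Q₂)
      = toLaurent (snSqSumNum (C t) P₁ Q₁ P₂ Q₂) := by
  have hP₁ := laurentReciprocal_eq_swap hQ₁
  have hP₂ := laurentReciprocal_eq_swap hQ₂
  have hT : (LaurentPolynomial.T (2 * (m₁ + m₂)) : LaurentPolynomial R)
      = LaurentPolynomial.T m₁ ^ 2 * LaurentPolynomial.T m₂ ^ 2 := by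
    simp only [two_mul, LaurentPolynomial.T_add]
    ring
  rw [map_snSqSumNum, ← hP₁, ← hP₂, ← hQ₁, ← hQ₂]
  simp only [laurentReciprocal, snSqSumNum, hT, map_add, map_sub, map_mul, map_pow, map_ofNat,
    toLaurent_C, LaurentPolynomial.invert_C]
  ring

variable [IsDomain R]

theorem laurentReciprocal_eq_of_odd_of_odd (hm : m' + m = 2 * (m₁ + m₂)) (hQ0 : Q ≠ 0)
    (h₁ : laurentReciprocal m₁ Q₁ = toLaurent P₁) (h₂ : laurentReciprocal m₂ Q₂ = toLaurent P₂)
    (hrQ : laurentReciprocal m Q = toLaurent Q) (hrP : laurentReciprocal m P = toLaurent P)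
    (hQ : Q' * Q = (Q₁ * Q₂ - P₁ * P₂) ^ 2)
    (hsum : Q * P' + P * Q' = snSqSumNum (C t) P₁ Q₁ P₂ Q₂) :
    laurentReciprocal m' Q' = toLaurent Q' ∧ laurentReciprocal m' P' = toLaurent P' := by
  have hL0 : (toLaurent Q : LaurentPolynomial R) ≠ 0 := toLaurent_ne_zero.2 hQ0
  have hrQ' : laurentReciprocal m' Q' = toLaurent Q' := by
    apply mul_right_cancel₀ hL0
    rw [← hrQ, ← laurentReciprocal_mul, hQ, hm, laurentReciprocal_sq, laurentReciprocal_sub,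
      laurentReciprocal_mul, laurentReciprocal_mul, h₁, h₂, laurentReciprocal_eq_swap h₁,
      laurentReciprocal_eq_swap h₂, hrQ, ← map_mul toLaurent Q' Q, hQ]
    simp only [map_mul, map_sub, map_pow]
    ring
  refine ⟨hrQ', mul_left_cancel₀ hL0 ?_⟩
  have hrsum := laurentReciprocal_snSqSumNum (t := t) h₁ h₂
  rw [← hm, ← hsum, laurentReciprocal_add, add_comm m', laurentReciprocal_mul,
    laurentReciprocal_mul, hrQ, hrP, hrQ', map_add, map_mul, map_mul] at hrsum
  exact add_right_cancel hrsum

theorem laurentReciprocal_eq_of_even_of_odd (hm : m' + m = 2 * (m₁ + m₂)) (hQ0 : Q ≠ 0)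
    (hQ₁ : laurentReciprocal m₁ Q₁ = toLaurent Q₁) (hP₁ : laurentReciprocal m₁ P₁ = toLaurent P₁)
    (h₂ : laurentReciprocal m₂ Q₂ = toLaurent P₂) (h : laurentReciprocal m Q = toLaurent P)
    (hQ : Q' * Q = (Q₁ * Q₂ - P₁ * P₂) ^ 2) (hP : P' * P = (P₁ * Q₂ - P₂ * Q₁) ^ 2) :
    laurentReciprocal m' Q' = toLaurent P' := by
  have hP0 : P ≠ 0 := by
    rintro rfl
    have hzero := laurentReciprocal_eq_swap h
    rw [laurentReciprocal, map_zero, map_zero, mul_zero, eq_comm, toLaurent_eq_zero] at hzero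
    exact hQ0 hzero
  apply mul_right_cancel₀ (toLaurent_ne_zero.2 hP0)
  rw [← h, ← laurentReciprocal_mul, hQ, hm, laurentReciprocal_sq, laurentReciprocal_sub,
    laurentReciprocal_mul, laurentReciprocal_mul, hQ₁, h₂, hP₁, laurentReciprocal_eq_swap h₂, h,
    ← map_mul toLaurent P' P, hP]
  simp only [map_mul, map_sub, map_pow]
  ring

end LaurentReciprocal

section DeltaFractions

open Polynomial

section Reciprocity

variable {R : Type*} [CommRing R]

/-- The cubic factor of the numerator of `sn ((1 + δ) u) ^ 2` as a fraction in `sn u ^ 2`, where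
`δ = √-7` and `t = 3 * δ`. -/
noncomputable def oneAddDeltaNum (δ : R) : R[X] :=
  C (1 + δ) + C (-5 + 11 * δ) * X + C (-5 + 11 * δ) * X ^ 2 + C (1 + δ) * X ^ 3

/-- The cubic factor of the denominator of `sn ((1 + δ) u) ^ 2` as a fraction in `sn u ^ 2`, where
`δ = √-7` and `t = 3 * δ`. -/
noncomputable def oneAddDeltaDen (δ : R) : R[X] :=
  C 1 + C (-5 - 2 * δ) * X + C (5 + 2 * δ) * X ^ 2 + C (-1) * X ^ 3

theorem laurentReciprocal_deltaDen (δ : R) :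
    laurentReciprocal 3 (deltaDen δ) = toLaurent (deltaNum δ) := by
  convert laurentReciprocal_cubic 1 (-5 * δ) (-21) δ using 2 <;>
    simp [deltaDen, deltaNum, C_mul, C_neg, map_ofNat] <;> ring

theorem laurentReciprocal_oneAddDeltaNum (δ : R) :
    laurentReciprocal 3 (oneAddDeltaNum δ) = toLaurent (oneAddDeltaNum δ) :=
  laurentReciprocal_cubic _ _ _ _

theorem laurentReciprocal_oneAddDeltaDen (δ : R) :
    laurentReciprocal 3 (oneAddDeltaDen δ) = -toLaurent (oneAddDeltaDen δ) := by
  rw [oneAddDeltaDen, laurentReciprocal_cubic, ← map_neg]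
  congr 1
  simp only [C_neg, C_sub, C_add, C_1]
  ring

end Reciprocity

variable {k : Type*} [Field k]

theorem isCoprime_of_mul_add_mul_eq_C {A B U V : k[X]} {c : k} (hc : c ≠ 0)
    (h : U * A + V * B = C c) : IsCoprime A B := by
  refine ⟨C c⁻¹ * U, C c⁻¹ * V, ?_⟩
  rw [mul_assoc, mul_assoc, ← mul_add, h, ← C_mul, inv_mul_cancel₀ hc, C_1]

theorem isCoprime_X_of_coeff_zero_ne_zero {P : k[X]} (hP : P.coeff 0 ≠ 0) : IsCoprime X P :=
  (irreducible_X.coprime_iff_not_dvd).2 (X_dvd_iff.not.2 hP)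

variable [CharZero k] {t δ : k}

theorem isCoprime_deltaNum_deltaDen (hδ : δ ^ 2 = -7) : IsCoprime (deltaNum δ) (deltaDen δ) := by
  have hC : (C δ : k[X]) ^ 2 = -7 := by rw [← C_pow, hδ, map_neg, map_ofNat]
  refine isCoprime_of_mul_add_mul_eq_C (c := 2048) (U := -193 * C δ - 742 * X + 35 * C δ * X ^ 2)
    (V := 697 + 174 * C δ * X - 35 * X ^ 2) (by norm_num) ?_
  rw [deltaNum, deltaDen, map_ofNat]
  linear_combination (-193 + 130 * X ^ 2 - X ^ 4) * hC

theorem isCoprime_oneAddDeltaNum_oneAddDeltaDen (hδ : δ ^ 2 = -7) :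
    IsCoprime (oneAddDeltaNum δ) (oneAddDeltaDen δ) := by
  have hC : (C δ : k[X]) ^ 2 = -7 := by rw [← C_pow, hδ, map_neg, map_ofNat]
  refine isCoprime_of_mul_add_mul_eq_C (c := 2048)
    (U := 159 - 96 * C δ + (-151 + 99 * C δ) * X + (-12 - 15 * C δ) * X ^ 2)
    (V := 1217 - 63 * C δ + (1214 - 58 * C δ) * X + (93 - 27 * C δ) * X ^ 2) (by norm_num) ?_
  rw [oneAddDeltaNum, oneAddDeltaDen]
  simp only [C_neg, C_mul, C_1, C_add, C_sub, map_ofNat]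
  linear_combination (-96 - 831 * X + 8 * X ^ 2 + 766 * X ^ 3 - 120 * X ^ 4 - 15 * X ^ 5) * hC

theorem isCoprime_oneAddDeltaNum_one_sub_C_mul_X_add_sq (hδ : δ ^ 2 = -7) :
    IsCoprime (oneAddDeltaNum δ) (1 - C (2 * (3 * δ)) * X + X ^ 2) := by
  have hC : (C δ : k[X]) ^ 2 = -7 := by rw [← C_pow, hδ, map_neg, map_ofNat]
  refine isCoprime_of_mul_add_mul_eq_C (c := 4096) (U := 717 - 271 * C δ + (45 + 17 * C δ) * X)
    (V := 1482 - 446 * C δ + (1524 - 412 * C δ) * X + (74 - 62 * C δ) * X ^ 2) (by norm_num) ?_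
  rw [oneAddDeltaNum]
  simp only [C_neg, C_mul, C_1, C_add, map_ofNat]
  linear_combination (-271 - 288 * X - 322 * X ^ 2 + 288 * X ^ 3 + 17 * X ^ 4) * hC

-- The addition theorem writes `sn ((1 + μ) u)` as a fraction; `G` is the common factor of its
-- numerator and denominator.
theorem IsMultiplication.evalSnSq_mul_jacobiSn_one_add_sq {μ : k} {n d u v G : k[X]}
    (h : IsMultiplication t μ n d) (hμ : μ ≠ 0) (hd : d.coeff 0 ≠ 0)
    (hn : n.coeff 0 = μ * d.coeff 0) (hG : G ≠ 0)
    (hnum : twistedWronskian n d + C μ * n * d = C μ * v * G)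
    (hden : d ^ 2 - X ^ 2 * n ^ 2 = (1 - C (2 * t) * X + X ^ 2) * u * G) :
    evalSnSq t ((1 - C (2 * t) * X + X ^ 2) * u ^ 2) * jacobiSn t (1 + μ) ^ 2
      = evalSnSq t (X * v ^ 2) := by
  set F : k[X] := 1 - C (2 * t) * X + X ^ 2 with hF
  have hcdsq : jacobiCnDn t 1 ^ 2 = evalSnSq t F := by
    rw [jacobiCnDn_sq, hF]
    simp only [map_add, map_sub, map_mul, map_pow, map_one, evalSnSq_C, evalSnSq_X, map_ofNat]
    ring
  have hF0 : evalSnSq t F ≠ 0 := by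
    rw [map_ne_zero_iff _ (evalSnSq_injective t)]
    intro h0
    simpa [hF, coeff_zero_eq_eval_zero] using congrArg (coeff · 0) h0
  have hG0 : evalSnSq t G ≠ 0 := (map_ne_zero_iff _ (evalSnSq_injective t)).2 hG
  have hμ0 : (PowerSeries.C μ : PowerSeries k) ≠ 0 :=
    (map_ne_zero_iff _ PowerSeries.C_injective).2 hμ
  obtain ⟨hsn, hcd⟩ := h.jacobiSn_mul_evalSnSq hμ hd hn
  have hadd := jacobiSn_add t 1 μ
  have hnum := congrArg (evalSnSq t) hnum
  have hden := congrArg (evalSnSq t) hden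
  simp only [map_add, map_sub, map_mul, map_pow, evalSnSq_C, evalSnSq_X] at hnum hden ⊢
  have hfraction : jacobiSn t (1 + μ) * (evalSnSq t F * evalSnSq t u)
      = jacobiSn t 1 * jacobiCnDn t 1 * evalSnSq t v := by
    apply mul_left_cancel₀ (mul_ne_zero hμ0 hG0)
    linear_combination PowerSeries.C μ * evalSnSq t d ^ 2 * hadd
      + PowerSeries.C μ * jacobiSn t (1 + μ) * jacobiSn t 1 ^ 2
        * (jacobiSn t μ * evalSnSq t d + jacobiSn t 1 * evalSnSq t n) * hsn
      - PowerSeries.C μ * jacobiSn t (1 + μ) * hden + jacobiSn t 1 * hcd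
      + jacobiSn t 1 * jacobiCnDn t 1 * hnum
      + PowerSeries.C μ * jacobiCnDn t 1 * evalSnSq t d * hsn
  apply mul_left_cancel₀ hF0
  linear_combination (jacobiSn t (1 + μ) * (evalSnSq t F * evalSnSq t u)
    + jacobiSn t 1 * jacobiCnDn t 1 * evalSnSq t v) * hfraction
    + jacobiSn t 1 ^ 2 * evalSnSq t v ^ 2 * hcdsq

theorem isSnSqFraction_delta (hδ : δ ^ 2 = -7) :
    IsSnSqFraction (3 * δ) δ (X * deltaNum δ ^ 2) (deltaDen δ ^ 2) where
  isCoprime := (IsCoprime.mul_left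
    (isCoprime_X_of_coeff_zero_ne_zero (by simp [coeff_zero_deltaDen]))
    (isCoprime_deltaNum_deltaDen hδ).pow_left).pow_right
  evalSnSq_mul := by
    have hδ0 : δ ≠ 0 := by
      rintro rfl
      norm_num at hδ
    have hsn := ((isMultiplication_delta hδ).jacobiSn_mul_evalSnSq hδ0
      (by simp [coeff_zero_deltaDen]) (by simp [coeff_zero_deltaNum, coeff_zero_deltaDen])).1
    rw [map_pow, map_mul, map_pow, evalSnSq_X, ← mul_pow, ← mul_pow, ← hsn, mul_comm]

theorem isSnSqFraction_one_add_delta (hδ : δ ^ 2 = -7) :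
    IsSnSqFraction (3 * δ) (1 + δ) (X * oneAddDeltaNum δ ^ 2)
      ((1 - C (2 * (3 * δ)) * X + X ^ 2) * oneAddDeltaDen δ ^ 2) where
  isCoprime := by
    have hXF : IsCoprime (X : k[X]) (1 - C (2 * (3 * δ)) * X + X ^ 2) :=
      isCoprime_X_of_coeff_zero_ne_zero (by simp [coeff_zero_eq_eval_zero])
    have hXD : IsCoprime (X : k[X]) (oneAddDeltaDen δ) :=
      isCoprime_X_of_coeff_zero_ne_zero (by simp [oneAddDeltaDen, coeff_zero_eq_eval_zero])
    exact (hXF.mul_right hXD.pow_right).mul_left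
      ((isCoprime_oneAddDeltaNum_one_sub_C_mul_X_add_sq hδ).mul_right
        (isCoprime_oneAddDeltaNum_oneAddDeltaDen hδ).pow_right).pow_left
  evalSnSq_mul := by
    have hC : (C δ : k[X]) ^ 2 = -7 := by rw [← C_pow, hδ, map_neg, map_ofNat]
    have hδ0 : δ ≠ 0 := by
      rintro rfl
      norm_num at hδ
    refine (isMultiplication_delta hδ).evalSnSq_mul_jacobiSn_one_add_sq hδ0
      (by simp [coeff_zero_deltaDen]) (by simp [coeff_zero_deltaNum, coeff_zero_deltaDen])
      (G := 1 + (5 - 2 * C δ) * X + (5 - 2 * C δ) * X ^ 2 + X ^ 3) ?_ ?_ ?_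
    · intro h0
      simpa [coeff_zero_eq_eval_zero] using congrArg (coeff · 0) h0
    · rw [twistedWronskian_delta hδ, deltaNum, deltaDen, oneAddDeltaNum]
      simp only [C_neg, C_mul, C_1, C_add, map_ofNat]
      linear_combination ((-14 - 3 * C δ) * X + 24 * C δ * X ^ 2 + (-132 + 70 * C δ) * X ^ 3
        + 24 * C δ * X ^ 4 + (-14 - 3 * C δ) * X ^ 5) * hC
    · rw [deltaNum, deltaDen, oneAddDeltaDen]
      simp only [C_neg, C_mul, C_1, C_add, C_sub, map_ofNat]
      linear_combination (-4 * X ^ 2 + 24 * C δ * X ^ 3 - 24 * C δ * X ^ 5 + 4 * X ^ 6) * hC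

end DeltaFractions

section ReciprocalFraction

open Polynomial

variable {k : Type*} [Field k]

theorem exists_eq_X_mul_sq_and_eq_sq {a b N D P Q : k[X]} (hN : N ≠ 0) (hD : D ≠ 0)
    (hQ : Q * D ^ 2 = a ^ 2) (hP : P * (X * N ^ 2) = b ^ 2) :
    ∃ n d, P = X * n ^ 2 ∧ Q = d ^ 2 := by
  obtain ⟨d, rfl⟩ : D ∣ a :=
    (IsIntegrallyClosed.pow_dvd_pow_iff two_ne_zero).1 ⟨Q, by rw [← hQ, mul_comm]⟩
  obtain ⟨e, rfl⟩ : N ∣ b :=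
    (IsIntegrallyClosed.pow_dvd_pow_iff two_ne_zero).1 ⟨P * X, by rw [← hP]; ring⟩
  have hPX : P * X = e ^ 2 :=
    mul_right_cancel₀ (pow_ne_zero 2 hN) (by linear_combination hP)
  obtain ⟨n, rfl⟩ : X ∣ e := prime_X.dvd_of_dvd_pow ⟨P, by rw [← hPX, mul_comm]⟩
  exact ⟨n, d, mul_right_cancel₀ X_ne_zero (by linear_combination hPX),
    mul_right_cancel₀ (pow_ne_zero 2 hD) (by linear_combination hQ)⟩

variable [CharZero k]

/-- The function `sn ((x + y * δ) u) ^ 2` is the reduced fraction `P / Q` in `sn u ^ 2`, for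
`t = 3 * δ`. Up to the degree shift by the norm of `x + y * δ`, inverting `sn u` inverts `P / Q`
when the norm is odd and fixes it when the norm is even. -/
structure IsReciprocalFraction (δ : k) (x y : ℤ) (P Q : k[X]) : Prop
    extends IsSnSqFraction (3 * δ) (x + y * δ) P Q where
  reciprocal_of_odd : Odd (x + y) → laurentReciprocal (x ^ 2 + 7 * y ^ 2) Q = toLaurent P
  reciprocal_of_even : Even (x + y) → laurentReciprocal (x ^ 2 + 7 * y ^ 2) Q = toLaurent Q ∧
    laurentReciprocal (x ^ 2 + 7 * y ^ 2) P = toLaurent P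

namespace IsReciprocalFraction

variable {δ : k} {x y x₁ y₁ x₂ y₂ : ℤ} {P Q P₁ Q₁ P₂ Q₂ : k[X]}

theorem neg (h : IsReciprocalFraction δ x y P Q) : IsReciprocalFraction δ (-x) (-y) P Q where
  toIsSnSqFraction := by
    convert h.toIsSnSqFraction.neg using 1
    push_cast
    ring
  reciprocal_of_odd ho := by
    rw [neg_sq, neg_sq]
    exact h.reciprocal_of_odd (by rwa [← neg_add, odd_neg] at ho)
  reciprocal_of_even he := by
    rw [neg_sq, neg_sq]
    exact h.reciprocal_of_even (by rwa [← neg_add, even_neg] at he)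

theorem zero : IsReciprocalFraction δ 0 0 0 1 where
  toIsSnSqFraction := by simpa using IsSnSqFraction.zero
  reciprocal_of_odd ho := by simp at ho
  reciprocal_of_even _ := by simp [laurentReciprocal]

theorem one : IsReciprocalFraction δ 1 0 X 1 where
  toIsSnSqFraction := by simpa using IsSnSqFraction.one
  reciprocal_of_odd _ := by simpa using laurentReciprocal_one_one
  reciprocal_of_even he := by simp at he

theorem delta (hδ : δ ^ 2 = -7) :
    IsReciprocalFraction δ 0 1 (X * deltaNum δ ^ 2) (deltaDen δ ^ 2) where
  toIsSnSqFraction := by simpa using isSnSqFraction_delta hδ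
  reciprocal_of_odd _ := by
    rw [show (0 ^ 2 + 7 * 1 ^ 2 : ℤ) = 1 + 2 * 3 by norm_num, ← one_mul (deltaDen δ ^ 2),
      laurentReciprocal_mul, laurentReciprocal_sq, laurentReciprocal_one_one,
      laurentReciprocal_deltaDen, map_mul, map_pow]
  reciprocal_of_even he := by simp at he

theorem one_add_delta (hδ : δ ^ 2 = -7) :
    IsReciprocalFraction δ 1 1 (X * oneAddDeltaNum δ ^ 2)
      ((1 - C (2 * (3 * δ)) * X + X ^ 2) * oneAddDeltaDen δ ^ 2) where
  toIsSnSqFraction := by simpa using isSnSqFraction_one_add_delta hδ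
  reciprocal_of_odd ho := absurd ho (by decide)
  reciprocal_of_even _ := by
    have hX : laurentReciprocal 2 (X : k[X]) = toLaurent X := by
      simpa using laurentReciprocal_C_mul_X_pow (i := 1) (j := 1) rfl (1 : k)
    rw [show (1 ^ 2 + 7 * 1 ^ 2 : ℤ) = 2 + 2 * 3 by norm_num, laurentReciprocal_mul,
      laurentReciprocal_mul, laurentReciprocal_sq, laurentReciprocal_sq, hX,
      laurentReciprocal_one_sub_C_mul_X_add_sq, laurentReciprocal_oneAddDeltaNum,
      laurentReciprocal_oneAddDeltaDen, neg_sq]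
    exact ⟨by rw [map_mul toLaurent, map_pow], by rw [map_mul toLaurent, map_pow]⟩

theorem exists_add (hδ : δ ^ 2 = -7) (h₁ : IsReciprocalFraction δ x₁ y₁ P₁ Q₁)
    (h₂ : IsReciprocalFraction δ x₂ y₂ P₂ Q₂) (ho : Odd (x₂ + y₂))
    (h : IsReciprocalFraction δ (x₁ - x₂) (y₁ - y₂) P Q) :
    ∃ P' Q', IsReciprocalFraction δ (x₁ + x₂) (y₁ + y₂) P' Q' ∧
      Q' * Q = (Q₁ * Q₂ - P₁ * P₂) ^ 2 ∧ P' * P = (P₁ * Q₂ - P₂ * Q₁) ^ 2 := by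
  have ht : (3 * δ) ^ 2 ≠ 1 := by
    rw [mul_pow, hδ]
    norm_num
  have hsub : ((x₁ - x₂ : ℤ) + (y₁ - y₂ : ℤ) * δ : k) = (x₁ + y₁ * δ) - (x₂ + y₂ * δ) := by
    push_cast
    ring
  have hadd : ((x₁ + x₂ : ℤ) + (y₁ + y₂ : ℤ) * δ : k) = (x₁ + y₁ * δ) + (x₂ + y₂ * δ) := by
    push_cast
    ring
  obtain ⟨P', Q', h', hQ, hP, hsum⟩ := h₁.toIsSnSqFraction.exists_add ht h₂.toIsSnSqFraction
    (hsub ▸ h.toIsSnSqFraction)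
  have hnorm : ((x₁ + x₂) ^ 2 + 7 * (y₁ + y₂) ^ 2) + ((x₁ - x₂) ^ 2 + 7 * (y₁ - y₂) ^ 2)
      = 2 * ((x₁ ^ 2 + 7 * y₁ ^ 2) + (x₂ ^ 2 + 7 * y₂ ^ 2)) := by ring
  refine ⟨P', Q', ⟨hadd ▸ h', fun ho' ↦ ?_, fun he' ↦ ?_⟩, hQ, hP⟩
  · have h₁' := h₁.reciprocal_of_even (by grind)
    exact laurentReciprocal_eq_of_even_of_odd hnorm h.ne_zero h₁'.1 h₁'.2
      (h₂.reciprocal_of_odd ho) (h.reciprocal_of_odd (by grind)) hQ hP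
  · have h' := h.reciprocal_of_even (by grind)
    exact laurentReciprocal_eq_of_odd_of_odd hnorm h.ne_zero (h₁.reciprocal_of_odd (by grind))
      (h₂.reciprocal_of_odd ho) h'.1 h'.2 hQ hsum

theorem exists_of_line (hδ : δ ^ 2 = -7) {u v : ℤ} (ho : Odd (u + v))
    (h : ∃ P Q, IsReciprocalFraction δ u v P Q) (h₀ : ∃ P Q, IsReciprocalFraction δ x y P Q)
    (h₁ : ∃ P Q, IsReciprocalFraction δ (x + u) (y + v) P Q) (n : ℤ) :
    ∃ P Q, IsReciprocalFraction δ (x + n * u) (y + n * v) P Q := by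
  obtain ⟨P, Q, h⟩ := h
  suffices H : (∃ P Q, IsReciprocalFraction δ (x + n * u) (y + n * v) P Q) ∧
    ∃ P Q, IsReciprocalFraction δ (x + (n + 1) * u) (y + (n + 1) * v) P Q from H.1
  induction n using Int.induction_on with
  | zero => simpa using ⟨h₀, h₁⟩
  | succ n ih =>
    obtain ⟨⟨P₀, Q₀, h₀⟩, P₁, Q₁, h₁⟩ := ih
    obtain ⟨P₂, Q₂, h₂, -⟩ := h₁.exists_add hδ (P := P₀) (Q := Q₀) h ho
      (by convert h₀ using 1 <;> ring)
    exact ⟨⟨P₁, Q₁, h₁⟩, P₂, Q₂, by convert h₂ using 1 <;> ring⟩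
  | pred n ih =>
    obtain ⟨⟨P₁, Q₁, h₁⟩, P₀, Q₀, h₀⟩ := ih
    obtain ⟨P₂, Q₂, h₂, -⟩ := h₁.exists_add hδ (P := P₀) (Q := Q₀) h.neg
      (by rwa [← neg_add, odd_neg]) (by convert h₀ using 1 <;> ring)
    exact ⟨⟨P₂, Q₂, by convert h₂ using 1 <;> ring⟩, P₁, Q₁, by convert h₁ using 1 <;> ring⟩

end IsReciprocalFraction

theorem exists_isReciprocalFraction {δ : k} (hδ : δ ^ 2 = -7) (x y : ℤ) :
    ∃ P Q, IsReciprocalFraction δ x y P Q := by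
  have hrow₀ : ∃ P Q, IsReciprocalFraction δ x 0 P Q := by
    simpa using IsReciprocalFraction.exists_of_line hδ (x := 0) (y := 0) (u := 1) (v := 0)
      (by decide) ⟨_, _, .one⟩ ⟨_, _, .zero⟩ ⟨_, _, .one⟩ x
  have hrow₁ : ∃ P Q, IsReciprocalFraction δ x 1 P Q := by
    simpa using IsReciprocalFraction.exists_of_line hδ (x := 0) (y := 1) (u := 1) (v := 0)
      (by decide) ⟨_, _, .one⟩ ⟨_, _, .delta hδ⟩ ⟨_, _, .one_add_delta hδ⟩ x
  simpa using IsReciprocalFraction.exists_of_line hδ (x := x) (y := 0) (u := 0) (v := 1)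
    (by decide) ⟨_, _, .delta hδ⟩ hrow₀ (by simpa using hrow₁) y

theorem IsReciprocalFraction.exists_sq_of_sub {δ : k} (hδ : δ ^ 2 = -7) {x₁ y₁ x₂ y₂ : ℤ}
    {N D : k[X]} (hN : N ≠ 0) (ho : Odd (x₁ - x₂ + (y₁ - y₂)))
    (h : IsReciprocalFraction δ (x₁ - x₂) (y₁ - y₂) (X * N ^ 2) (D ^ 2)) :
    ∃ n d, IsReciprocalFraction δ (x₁ + x₂) (y₁ + y₂) (X * n ^ 2) (d ^ 2) := by
  wlog ho₂ : Odd (x₂ + y₂) generalizing x₁ y₁ x₂ y₂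
  · rw [add_comm x₁, add_comm y₁]
    exact this (by grind) (by simpa using h.neg) (by grind)
  obtain ⟨P₁, Q₁, h₁⟩ := exists_isReciprocalFraction hδ x₁ y₁
  obtain ⟨P₂, Q₂, h₂⟩ := exists_isReciprocalFraction hδ x₂ y₂
  obtain ⟨P', Q', h', hQ, hP⟩ := h₁.exists_add hδ h₂ ho₂ h
  obtain ⟨n, d, rfl, rfl⟩ :=
    exists_eq_X_mul_sq_and_eq_sq hN (pow_ne_zero_iff two_ne_zero |>.1 h.ne_zero) hQ hP
  exact ⟨n, d, h'⟩

theorem exists_isReciprocalFraction_sq_of_odd {δ : k} (hδ : δ ^ 2 = -7) {x y : ℤ}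
    (ho : Odd (x + y)) : ∃ n d, IsReciprocalFraction δ x y (X * n ^ 2) (d ^ 2) := by
  rcases Int.even_or_odd' y with ⟨b, rfl | rfl⟩
  · obtain ⟨a, rfl⟩ : Odd x := by grind
    have hsq := IsReciprocalFraction.exists_sq_of_sub hδ (x₁ := a + 1) (y₁ := b) (x₂ := a)
      (y₂ := b) (N := 1) (D := 1) one_ne_zero (by simp) (by simpa using IsReciprocalFraction.one)
    convert hsq using 5 <;> ring
  · obtain ⟨a, rfl⟩ : Even x := by grind
    have hN : deltaNum δ ≠ 0 := by
      intro hzero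
      simpa [hzero, show δ ≠ 0 by rintro rfl; norm_num at hδ] using (coeff_zero_deltaNum δ).symm
    have hsq := IsReciprocalFraction.exists_sq_of_sub hδ (x₁ := a) (y₁ := b + 1) (x₂ := a)
      (y₂ := b) hN (by simp) (by simpa using IsReciprocalFraction.delta hδ)
    convert hsq using 5
    ring

theorem exists_isMultiplication_reflect {δ : k} (hδ : δ ^ 2 = -7) {x y : ℤ} {h : ℕ}
    (hnorm : x ^ 2 + 7 * y ^ 2 = 2 * h + 1) :
    ∃ d : k[X], d ≠ 0 ∧ d.natDegree ≤ h ∧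
      IsMultiplication (3 * δ) (x + y * δ) (reflect h d) d := by
  have ho : Odd (x + y) := by
    have hodd : Odd (x ^ 2 + 7 * y ^ 2) := ⟨h, hnorm⟩
    have h7 : ¬ Even (7 : ℤ) := by decide
    rw [← Int.not_even_iff_odd] at hodd ⊢
    simpa [Int.even_add, Int.even_mul, Int.even_pow, h7] using hodd
  obtain ⟨n, d, hf⟩ := exists_isReciprocalFraction_sq_of_odd hδ ho
  have hmul : IsMultiplication (3 * δ) (x + y * δ) n d := hf.toIsSnSqFraction.isMultiplication
  have hd : d ≠ 0 := pow_ne_zero_iff two_ne_zero |>.1 hf.ne_zero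
  have hsq : laurentReciprocal h d ^ 2 = toLaurent n ^ 2 := by
    have hrec := hf.reciprocal_of_odd ho
    rw [hnorm, add_comm, ← one_mul (d ^ 2), laurentReciprocal_mul, laurentReciprocal_sq,
      laurentReciprocal_one_one, map_mul, map_pow] at hrec
    exact mul_left_cancel₀ (toLaurent_ne_zero.2 X_ne_zero) hrec
  rcases sq_eq_sq_iff_eq_or_eq_neg.1 hsq with hrec | hrec
  · rw [eq_reflect_of_laurentReciprocal_eq hrec] at hmul
    exact ⟨d, hd, natDegree_le_of_laurentReciprocal_eq hrec, hmul⟩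
  · rw [← map_neg] at hrec
    rw [← isMultiplication_neg_left, eq_reflect_of_laurentReciprocal_eq hrec] at hmul
    exact ⟨d, hd, natDegree_le_of_laurentReciprocal_eq hrec, hmul⟩

end ReciprocalFraction

section SplitCongruence

open PowerSeries

variable {R : Type*} [CommRing R]

theorem mul_dvd_coeff_mul {a b : R} {m : ℕ} {φ ψ : R⟦X⟧} (hφ : ∀ i < m, a ∣ coeff i φ)
    (hψ : ∀ i < m, b ∣ coeff i ψ) : ∀ i < m, a * b ∣ coeff i (φ * ψ) := by
  intro i hi
  rw [coeff_mul]
  refine dvd_sum fun ij hij ↦ ?_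
  have hsum := mem_antidiagonal.1 hij
  exact mul_dvd_mul (hφ _ (by omega)) (hψ _ (by omega))

theorem dvd_coeff_X_mul {a : R} {m : ℕ} {φ : R⟦X⟧} (hφ : ∀ i < m, a ∣ coeff i φ) :
    a ∣ coeff m (X * φ) := by
  rcases m with _ | m
  · simp
  · rw [coeff_succ_X_mul]
    exact hφ m m.lt_succ_self

theorem coeff_add_derivative (ρ : R⟦X⟧) (j : ℕ) :
    coeff j (ρ + 2 * (X * d⁄dX R ρ)) = (2 * j + 1) * coeff j ρ := by
  simpa using coeff_pow_mul_add_derivative ρ 0 j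

theorem exists_eq_C_add_C_mul_X_mul {q : R} {d : Polynomial R}
    (hd : ∀ j ≠ 0, q ∣ d.coeff j) : ∃ e : R⟦X⟧, (d : R⟦X⟧) = C (d.coeff 0) + C q * (X * e) := by
  obtain ⟨e, he⟩ := (Polynomial.C_dvd_iff_dvd_coeff q d.divX).2 fun j ↦ by
    rw [Polynomial.coeff_divX]
    exact hd _ j.succ_ne_zero
  refine ⟨e, ?_⟩
  conv_lhs => rw [← Polynomial.divX_mul_X_add d, he]
  push_cast
  ring

theorem dvd_coeff_of_mul_eq_reflect {q : R} {h : ℕ} {d : Polynomial R} (hd0 : IsUnit (d.coeff 0))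
    (hd : ∀ j ≠ 0, q ∣ d.coeff j) {ρ : R⟦X⟧} (hρ : d * ρ = (d.reflect h : R⟦X⟧)) :
    ∀ j < h, q ∣ coeff j ρ := by
  intro j hj
  obtain ⟨e, he⟩ := exists_eq_C_add_C_mul_X_mul hd
  have hcoeff := congrArg (coeff j) hρ
  rw [he, add_mul, mul_assoc, map_add, coeff_C_mul, coeff_C_mul, Polynomial.coeff_coe,
    Polynomial.coeff_reflect, Polynomial.revAt_le hj.le] at hcoeff
  refine hd0.dvd_mul_left.1 ?_
  rw [eq_sub_of_add_eq hcoeff]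
  exact dvd_sub (hd _ (by omega)) (dvd_mul_right _ _)

theorem sq_dvd_coeff_sub_one_of_mul_eq_reflect {q : R} {h : ℕ} {d : Polynomial R}
    (hd0 : IsUnit (d.coeff 0)) (hd : ∀ j ≠ 0, q ∣ d.coeff j) {ρ : R⟦X⟧}
    (hρ : d * ρ = (d.reflect h : R⟦X⟧)) : q ^ 2 ∣ coeff h ρ - 1 := by
  obtain ⟨e, he⟩ := exists_eq_C_add_C_mul_X_mul hd
  have hcoeff := congrArg (coeff h) hρ
  rw [he, add_mul, mul_assoc, mul_assoc, map_add, coeff_C_mul, coeff_C_mul, Polynomial.coeff_coe,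
    Polynomial.coeff_reflect, Polynomial.revAt_le le_rfl, Nat.sub_self] at hcoeff
  obtain ⟨b, hb⟩ : q ∣ coeff h (X * (e * ρ)) := by
    have hlow := mul_dvd_coeff_mul (fun i _ ↦ one_dvd (coeff i e))
      (dvd_coeff_of_mul_eq_reflect hd0 hd hρ)
    rw [one_mul] at hlow
    exact dvd_coeff_X_mul hlow
  rw [hb] at hcoeff
  exact hd0.dvd_mul_left.1 ⟨-b, by linear_combination hcoeff⟩

-- Modulo `q ^ 3` only the constant term of `G (X * ρ ^ 2)` contributes to the coefficient of
-- `X ^ h`, because `ρ` is divisible by `q` up to that order.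
theorem exists_coeff_subst_mul_add_derivative {q : R} {h : ℕ} (hq : q = 2 * h + 1)
    {G ρ : R⟦X⟧} (hG0 : constantCoeff G = 1) (hρ : ∀ j < h, q ∣ coeff j ρ) :
    ∃ c, coeff h (G.subst (X * ρ ^ 2) * (ρ + 2 * (X * d⁄dX R ρ)))
      = q * (coeff h ρ + q ^ 2 * c) := by
  set Ψ := ρ + 2 * (X * d⁄dX R ρ)
  set A := (mk fun i ↦ coeff (i + 1) G).subst (X * ρ ^ 2)
  have hsubst : G.subst (X * ρ ^ 2) = 1 + X * ρ ^ 2 * A := by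
    rw [subst_eq_sum_add (by simp) G 1, sum_range_one, pow_zero, pow_one, mul_one,
      coeff_zero_eq_constantCoeff_apply, hG0, map_one]
  have hΨ : ∀ j < h, q ∣ coeff j Ψ := fun j hj ↦ by
    rw [coeff_add_derivative]
    exact (hρ j hj).mul_left _
  obtain ⟨c, hc⟩ : q * q * (1 * q) ∣ coeff h (X * (ρ * ρ * (A * Ψ))) :=
    dvd_coeff_X_mul (mul_dvd_coeff_mul (mul_dvd_coeff_mul hρ hρ)
      (mul_dvd_coeff_mul (fun _ _ ↦ one_dvd _) hΨ))
  refine ⟨c, ?_⟩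
  rw [hsubst, show (1 + X * ρ ^ 2 * A) * Ψ = Ψ + X * (ρ * ρ * (A * Ψ)) by ring, map_add, hc,
    coeff_add_derivative, hq]
  ring

theorem IsMultiplication.sq_dvd_mul_coeff_sq_sub_one [IsDomain R] {t q v : R} {h : ℕ}
    (h2 : (2 : R) ≠ 0) (hq : q = 2 * h + 1) (hq0 : q ≠ 0) {d : Polynomial R}
    (hd0 : IsUnit (d.coeff 0)) (hd : ∀ j ≠ 0, q ∣ d.coeff j)
    (hmul : IsMultiplication t (q * v) (d.reflect h) d) {G : R⟦X⟧}
    (hG : G ^ 2 * (1 - C (2 * t) * X + X ^ 2) = 1) (hG0 : constantCoeff G = 1) :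
    q ^ 2 ∣ (v * coeff h G) ^ 2 - 1 := by
  have hd_ne : d ≠ 0 := fun h0 ↦ hd0.ne_zero (by rw [h0, Polynomial.coeff_zero])
  have hd_unit : IsUnit (d : R⟦X⟧) := by
    rwa [PowerSeries.isUnit_iff_constantCoeff, Polynomial.constantCoeff_coe]
  obtain ⟨e, he⟩ := hd_unit.exists_right_inv
  obtain ⟨ρ, hρ⟩ : ∃ ρ, (d : R⟦X⟧) * ρ = (d.reflect h : R⟦X⟧) :=
    ⟨e * (d.reflect h : R⟦X⟧), by rw [← mul_assoc, he, one_mul]⟩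
  have hρ0 := hmul.constantCoeff_sq hd_ne hρ
  have hident := hmul.powerSeries_eq hd_ne hρ
  rw [← hρ0] at hident
  obtain ⟨c, hc⟩ := exists_coeff_subst_mul_add_derivative hq hG0
    (dvd_coeff_of_mul_eq_reflect hd0 hd hρ)
  rw [subst_mul_add_derivative_eq h2 hG hG0 hident, coeff_C_mul] at hc
  obtain ⟨b, hb⟩ := sq_dvd_coeff_sub_one_of_mul_eq_reflect hd0 hd hρ
  have hsq : (v * coeff h G) ^ 2 = (coeff h ρ + q ^ 2 * c) ^ 2 := by
    apply mul_left_cancel₀ (pow_ne_zero 2 hq0)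
    linear_combination -coeff h G ^ 2 * hρ0
      + (constantCoeff ρ * coeff h G + q * (coeff h ρ + q ^ 2 * c)) * hc
  rw [hsq]
  exact ⟨(b + c) * (coeff h ρ + q ^ 2 * c + 1), by
    linear_combination (coeff h ρ + q ^ 2 * c + 1) * hb⟩

end SplitCongruence

section ReductionModP

open Polynomial

theorem coeff_twistedWronskian_natDegree_add {R : Type*} [CommRing R] (n d : R[X]) :
    (twistedWronskian n d).coeff (n.natDegree + d.natDegree)
      = n.leadingCoeff * d.leadingCoeff * (1 + 2 * n.natDegree - 2 * d.natDegree : ℤ) := by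
  have hdeg (f : R[X]) : (X * derivative f).natDegree ≤ f.natDegree := by
    rw [natDegree_le_iff_coeff_eq_zero]
    intro N hN
    rw [coeff_X_mul_derivative, coeff_eq_zero_of_natDegree_lt hN, mul_zero]
  rw [show twistedWronskian n d
      = n * d + C 2 * (X * derivative n * d) - C 2 * (n * (X * derivative d)) by
    rw [twistedWronskian, C_ofNat]
    ring]
  rw [coeff_sub, coeff_add, coeff_C_mul, coeff_C_mul,
    coeff_mul_add_eq_of_natDegree_le le_rfl le_rfl,
    coeff_mul_add_eq_of_natDegree_le (hdeg n) le_rfl,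
    coeff_mul_add_eq_of_natDegree_le le_rfl (hdeg d), coeff_X_mul_derivative,
    coeff_X_mul_derivative, leadingCoeff, leadingCoeff]
  push_cast
  ring

theorem natDegree_eq_zero_of_twistedWronskian_eq_zero {F : Type*} [CommRing F] [IsDomain F] {h : ℕ}
    [CharP F (2 * h + 1)] {n d : F[X]} (hn0 : n ≠ 0) (hd0 : d ≠ 0) (hn : n.natDegree ≤ h)
    (hd : d.natDegree ≤ h) (hnd : twistedWronskian n d = 0) : d.natDegree = 0 := by
  have hcoeff := coeff_twistedWronskian_natDegree_add n d
  rw [hnd, coeff_zero, eq_comm, mul_eq_zero] at hcoeff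
  have hcast := hcoeff.resolve_left
    (mul_ne_zero (leadingCoeff_ne_zero.2 hn0) (leadingCoeff_ne_zero.2 hd0))
  rw [CharP.intCast_eq_zero_iff F (2 * h + 1)] at hcast
  by_contra hpos
  have hzero := Int.eq_zero_of_abs_lt_dvd hcast (abs_lt.2 ⟨by omega, by omega⟩)
  omega

theorem IsMultiplication.twistedWronskian_eq_zero {F : Type*} [CommRing F] [IsDomain F] {t : F}
    {n d : F[X]} (h : IsMultiplication t 0 n d) : twistedWronskian n d = 0 := by
  have hquad : (1 - C (2 * t) * X + X ^ 2 : F[X]) ≠ 0 := fun h0 ↦ by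
    simpa using congrArg (coeff · 0) h0
  rw [IsMultiplication, map_zero, zero_pow two_ne_zero, zero_mul, mul_eq_zero] at h
  exact pow_eq_zero_iff two_ne_zero |>.1 (h.resolve_right hquad)

theorem exists_isPrimitive_isMultiplication_reflect {R K : Type*} [CommRing R] [IsDomain R]
    [UniqueFactorizationMonoid R] [Field K] [Algebra R K] [IsFractionRing R K] {t μ : R} {h : ℕ}
    {d : K[X]} (hd0 : d ≠ 0) (hd : d.natDegree ≤ h)
    (hmul : IsMultiplication (algebraMap R K t) (algebraMap R K μ) (d.reflect h) d) :
    ∃ D : R[X], D.IsPrimitive ∧ D.natDegree ≤ h ∧ IsMultiplication t μ (D.reflect h) D := by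
  obtain ⟨_⟩ : Nonempty (NormalizedGCDMonoid R) := inferInstance
  obtain ⟨b, hb, hE⟩ := IsLocalization.integerNormalization_spec (nonZeroDivisors R) d
  set E := IsLocalization.integerNormalization (nonZeroDivisors R) d
  have hinj := IsFractionRing.injective R K
  have hb0 : algebraMap R K b ≠ 0 := (map_ne_zero_iff _ hinj).2 (nonZeroDivisors.ne_zero hb)
  rw [algebra_compatible_smul K, smul_eq_C_mul] at hE
  have hE0 : E ≠ 0 := fun h0 ↦ by
    rw [h0, Polynomial.map_zero, eq_comm, mul_eq_zero, C_eq_zero] at hE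
    exact hE.elim hb0 hd0
  have hE_mul : IsMultiplication t μ (E.reflect h) E := by
    rwa [← isMultiplication_map hinj, ← reflect_map, hE, reflect_C_mul, isMultiplication_C_mul hb0]
  refine ⟨E.primPart, E.isPrimitive_primPart, ?_, ?_⟩
  · rw [natDegree_primPart, ← natDegree_map_eq_of_injective hinj, hE]
    exact (natDegree_C_mul_le _ _).trans hd
  · rwa [E.eq_C_content_mul_primPart, reflect_C_mul,
      isMultiplication_C_mul (content_eq_zero_iff.not.2 hE0)] at hE_mul

end ReductionModP

section Split

open Polynomial

theorem exists_mem_sq_add_mul_add_eq_zero {R : Type*} [CommRing R] {I : Ideal R} [HenselianRing R I]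
    {b c : R} (hb : IsUnit b) (hc : c ∈ I) : ∃ a ∈ I, a ^ 2 + b * a + c = 0 := by
  nontriviality R
  have hmonic : (X ^ 2 + C b * X + C c).Monic := by monicity!
  obtain ⟨a, ha, haI⟩ := HenselianRing.is_henselian (I := I) _ hmonic 0 (by simpa using hc)
    (by simpa using hb.map (Ideal.Quotient.mk I))
  exact ⟨a, by simpa using haI, by simpa using ha⟩

theorem not_dvd_of_eq_sq_add {p : ℕ} (hp : p.Prime) (h7 : p ≠ 7) {x y : ℤ}
    (hxy : (p : ℤ) = x ^ 2 + 7 * y ^ 2) : ¬(p : ℤ) ∣ x ∧ ¬(p : ℤ) ∣ y := by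
  have hpi := Nat.prime_iff_prime_int.1 hp
  have hp7 : ¬(p : ℤ) ∣ 7 := fun hdvd ↦
    h7 ((Nat.prime_dvd_prime_iff_eq hp (by norm_num)).1 (by exact_mod_cast hdvd))
  have hsum : (p : ℤ) ∣ x ^ 2 + 7 * y ^ 2 := hxy ▸ dvd_rfl
  have hboth : ¬((p : ℤ) ∣ x ∧ (p : ℤ) ∣ y) := by
    rintro ⟨hx, hy⟩
    have hsq : (p : ℤ) ^ 2 ∣ p ^ 1 := by
      conv_rhs => rw [pow_one, hxy]
      exact dvd_add (pow_dvd_pow_of_dvd hx 2) ((pow_dvd_pow_of_dvd hy 2).mul_left 7)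
    have hle : 2 ≤ 1 := (pow_dvd_pow_iff hpi.ne_zero hpi.not_isUnit).1 hsq
    omega
  refine ⟨fun hx ↦ hboth ⟨hx, ?_⟩, fun hy ↦ hboth ⟨?_, hy⟩⟩
  · have h7y := (dvd_add_right (dvd_pow hx two_ne_zero)).1 hsum
    exact hpi.dvd_of_dvd_pow ((hpi.dvd_or_dvd h7y).resolve_left hp7)
  · exact hpi.dvd_of_dvd_pow
      ((dvd_add_left ((dvd_pow hy two_ne_zero).mul_left 7)).1 hsum)

variable {p : ℕ} [Fact p.Prime]

theorem padicInt_isUnit_iff_not_dvd {z : ℤ_[p]} : IsUnit z ↔ ¬(p : ℤ_[p]) ∣ z := by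
  rw [← PadicInt.norm_lt_one_iff_dvd, ← PadicInt.not_isUnit_iff, not_not]

theorem padicInt_isUnit_intCast_iff {z : ℤ} : IsUnit (z : ℤ_[p]) ↔ ¬(p : ℤ) ∣ z := by
  rw [← not_iff_not, PadicInt.not_isUnit_iff, PadicInt.norm_int_lt_one_iff_dvd, not_not]

theorem padicInt_isUnit_two (h2 : p ≠ 2) : IsUnit (2 : ℤ_[p]) := by
  have hp : p.Prime := Fact.out
  have hdvd : ¬(p : ℤ) ∣ (2 : ℤ) := fun hdvd ↦
    h2 ((Nat.prime_dvd_prime_iff_eq hp Nat.prime_two).1 (by exact_mod_cast hdvd))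
  exact_mod_cast padicInt_isUnit_intCast_iff.2 hdvd

theorem toZMod_eq_zero_iff_dvd (z : ℤ_[p]) : PadicInt.toZMod z = 0 ↔ (p : ℤ_[p]) ∣ z := by
  rw [← RingHom.mem_ker, PadicInt.ker_toZMod, PadicInt.maximalIdeal_eq_span_p,
    Ideal.mem_span_singleton]

theorem exists_padicInt_splitting (h2 : p ≠ 2) (h7 : p ≠ 7) {x y : ℤ}
    (hxy : (p : ℤ) = x ^ 2 + 7 * y ^ 2) :
    ∃ δ v : ℤ_[p], δ ^ 2 = -7 ∧ x + y * δ = p * v ∧ v * (x - y * δ) = 1 := by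
  obtain ⟨hx, hy⟩ := not_dvd_of_eq_sq_add Fact.out h7 hxy
  have h2x : IsUnit (-(2 * x) : ℤ_[p]) :=
    ((padicInt_isUnit_two h2).mul (padicInt_isUnit_intCast_iff.2 hx)).neg
  have hxyp : (p : ℤ_[p]) = x ^ 2 + 7 * y ^ 2 := by
    exact_mod_cast congrArg (Int.cast : ℤ → ℤ_[p]) hxy
  obtain ⟨π, hπ, hroot⟩ := exists_mem_sq_add_mul_add_eq_zero
    (I := IsLocalRing.maximalIdeal ℤ_[p]) (c := p) h2x
    (by rw [PadicInt.maximalIdeal_eq_span_p]; exact Ideal.mem_span_singleton_self _)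
  rw [PadicInt.maximalIdeal_eq_span_p, Ideal.mem_span_singleton] at hπ
  obtain ⟨v, hv⟩ := hπ
  obtain ⟨y', hy'⟩ := (padicInt_isUnit_intCast_iff.2 hy).exists_right_inv
  have hyδ : (y : ℤ_[p]) * ((π - x) * y') = π - x := by linear_combination (π - x) * hy'
  refine ⟨(π - x) * y', v, ?_, ?_, ?_⟩
  · linear_combination y' ^ 2 * hroot - y' ^ 2 * hxyp - 7 * (y * y' + 1) * hy'
  · rw [hyδ, ← hv]
    ring
  · rw [hyδ]
    apply mul_left_cancel₀ (PadicInt.prime_p (p := p)).ne_zero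
    rw [← mul_assoc, ← hv]
    linear_combination -hroot

theorem IsMultiplication.dvd_coeff_of_ne_zero {h : ℕ} (hph : p = 2 * h + 1) {t v : ℤ_[p]}
    {d : ℤ_[p][X]} (hprim : d.IsPrimitive) (hd : d.natDegree ≤ h)
    (hmul : IsMultiplication t (p * v) (d.reflect h) d) {j : ℕ} (hj : j ≠ 0) :
    (p : ℤ_[p]) ∣ d.coeff j := by
  have hd0 : d.map (PadicInt.toZMod (p := p)) ≠ 0 := fun h0 ↦ by
    refine PadicInt.prime_p.not_isUnit (hprim p ((C_dvd_iff_dvd_coeff _ _).2 fun i ↦ ?_))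
    rw [← toZMod_eq_zero_iff_dvd, ← coeff_map, h0, coeff_zero]
  have hdeg : (d.map (PadicInt.toZMod (p := p))).natDegree ≤ h := natDegree_map_le.trans hd
  have : CharP (ZMod p) (2 * h + 1) := hph ▸ ZMod.charP p
  have hred := hmul.map PadicInt.toZMod
  rw [map_mul, map_natCast, ZMod.natCast_self, zero_mul, ← reflect_map] at hred
  have hconst := natDegree_eq_zero_of_twistedWronskian_eq_zero (h := h)
    (reflect_eq_zero_iff.not.2 hd0) hd0 (natDegree_reflect_le.trans (max_le le_rfl hdeg)) hdeg
    hred.twistedWronskian_eq_zero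
  rw [← toZMod_eq_zero_iff_dvd, ← coeff_map]
  exact coeff_eq_zero_of_natDegree_lt (by omega)

theorem sq_dvd_aeval_shiftedLegendre_sq_sub {h : ℕ} (hph : p = 2 * h + 1) {x y : ℤ}
    (hxy : (p : ℤ) = x ^ 2 + 7 * y ^ 2) {δ v z : ℤ_[p]} (hδ : δ ^ 2 = -7)
    (hv : x + y * δ = p * v) (hvu : v * (x - y * δ) = 1) (hz : 1 - 2 * z = 3 * δ) :
    (p : ℤ_[p]) ^ 2 ∣ aeval z (shiftedLegendre h) ^ 2 - (x - y * δ) ^ 2 := by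
  have hprime : Prime (p : ℤ_[p]) := PadicInt.prime_p
  obtain ⟨D, hD0, hDdeg, hDmul⟩ := exists_isMultiplication_reflect (k := ℚ_[p])
    (δ := algebraMap ℤ_[p] ℚ_[p] δ) (x := x) (y := y) (h := h)
    (by rw [← map_pow, hδ, map_neg, map_ofNat]) (by rw [← hxy, hph]; push_cast; ring)
  obtain ⟨d, hprim, hdeg, hmul⟩ := exists_isPrimitive_isMultiplication_reflect (R := ℤ_[p])
    (t := 3 * δ) (μ := x + y * δ) hD0 hDdeg
    (by simpa only [map_mul, map_add, map_ofNat, map_intCast] using hDmul)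
  rw [hv] at hmul
  have hdvd (j : ℕ) (hj : j ≠ 0) := hmul.dvd_coeff_of_ne_zero hph hprim hdeg hj
  have hunit : IsUnit (d.coeff 0) := by
    rw [padicInt_isUnit_iff_not_dvd]
    intro h0
    refine hprime.not_isUnit (hprim p ((C_dvd_iff_dvd_coeff _ _).2 fun j ↦ ?_))
    rcases eq_or_ne j 0 with rfl | hj
    exacts [h0, hdvd j hj]
  have hG := mk_aeval_shiftedLegendre_sq_mul z
  rw [hz] at hG
  obtain ⟨c, hc⟩ := hmul.sq_dvd_mul_coeff_sq_sub_one two_ne_zero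
    (by exact_mod_cast congrArg (Nat.cast : ℕ → ℤ_[p]) hph) hprime.ne_zero hunit hdvd hG
    (by simp [shiftedLegendre_zero])
  rw [PowerSeries.coeff_mk] at hc
  refine ⟨c * (x - y * δ) ^ 2, ?_⟩
  linear_combination (x - y * δ) ^ 2 * hc
    - aeval z (shiftedLegendre h) ^ 2 * (v * (x - y * δ) + 1) * hvu

theorem sq_dvd_of_split {h : ℕ} (hph : p = 2 * h + 1) (h7 : p ≠ 7) {x y : ℤ}
    (hxy : (p : ℤ) = x ^ 2 + 7 * y ^ 2) :
    (p : ℤ) ^ 2 ∣ ∑ k ∈ range (h + 1), clausenCoeff h k * (-16) ^ k - (4 * x ^ 2 - 2 * p) := by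
  obtain ⟨δ, v, hδ, hv, hvu⟩ := exists_padicInt_splitting (by omega) h7 hxy
  obtain ⟨half, hhalf⟩ := (padicInt_isUnit_two (p := p) (by omega)).exists_right_inv
  have hz : 1 - 2 * ((1 - 3 * δ) * half) = 3 * δ := by linear_combination (3 * δ - 1) * hhalf
  have hsq := sq_dvd_aeval_shiftedLegendre_sq_sub hph hxy hδ hv hvu hz
  rw [aeval_shiftedLegendre_sq (w := -16)] at hsq
  · rw [← PadicInt.pow_p_dvd_int_iff]
    have hsum : ((∑ k ∈ range (h + 1), clausenCoeff h k * (-16) ^ k - (4 * x ^ 2 - 2 * p) : ℤ)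
        : ℤ_[p]) = ((∑ k ∈ range (h + 1), clausenCoeff h k * (-16) ^ k : ℤ) - (x - y * δ) ^ 2)
          - p ^ 2 * v ^ 2 := by
      rw [Int.cast_sub]
      have hxyp : (p : ℤ_[p]) = x ^ 2 + 7 * y ^ 2 := by
        exact_mod_cast congrArg (Int.cast : ℤ → ℤ_[p]) hxy
      rw [← mul_pow, ← hv]
      push_cast
      linear_combination 2 * hxyp + 2 * y ^ 2 * hδ
    rw [hsum]
    exact dvd_sub hsq (dvd_mul_right _ _)
  · push_cast
    linear_combination (9 * half ^ 2) * hδ - (3 * δ * half + 31 * half + 16) * hhalf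

end Split

theorem stmt3 (p : ℕ) (hp : p.Prime) (h2 : p ≠ 2) (h3 : p ≠ 3) (h7 : p ≠ 7)
    (S : ℤ) (hS : S = ∑ k ∈ range ((p - 1) / 2 + 1), (Nat.choose (2 * k) k : ℤ) ^ 3) :
    ((p % 7 = 3 ∨ p % 7 = 5 ∨ p % 7 = 6) → (p : ℤ) ^ 2 ∣ S) ∧
    ((p % 7 = 1 ∨ p % 7 = 2 ∨ p % 7 = 4) →
      ∀ x y : ℤ, (p : ℤ) = x ^ 2 + 7 * y ^ 2 →
        (p : ℤ) ^ 2 ∣ (S - (4 * x ^ 2 - 2 * p))) := by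
  obtain ⟨h, hph⟩ : Odd p := hp.odd_of_ne_two h2
  rw [show (p - 1) / 2 = h by omega] at hS
  have hclausen := sq_dvd_sum_clausenCoeff_sub hp hph
  rw [← hS] at hclausen
  refine ⟨fun hinert ↦ ?_, fun _ x y hxy ↦ ?_⟩
  · exact (dvd_sub_right (sq_dvd_of_inert hp hph h3 hinert)).1 hclausen
  · have : Fact p.Prime := ⟨hp⟩
    simpa using dvd_sub (sq_dvd_of_split hph h7 hxy) hclausen
end
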